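/- arXiv:2105.14883 — 3 statements merged into one kernel-verified Lean document; each statement's English description precedes it below -/
import Mathlib

section
/- For all positive integers i and j, the number C(i,j,0) of connected unicyclic bipartite graphs with labelled partition classes of sizes i and j (and hence i + j edges) satisfies C(i,j,0) = (1/2) · i^{j−1} · j^{i−1} · Σ_{r=2}^{min{i,j}} ( (i)_r (j)_r / (i^r j^r) ) · (i + j − r), where (x)_r = x(x−1)⋯(x−r+1) denotes the falling factorial. -/
open Filter Real

noncomputable section

/-- `bipGraphCount i j m` is the number of connected bipartite graphs with labelled partition
classes of sizes `i` and `j` (no edges within either class) and exactly `m` edges. -/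
def bipGraphCount (i j m : ℕ) : ℕ :=
  {G : SimpleGraph (Fin i ⊕ Fin j) |
    G.Connected ∧
    (∀ a b : Fin i, ¬ G.Adj (Sum.inl a) (Sum.inl b)) ∧
    (∀ a b : Fin j, ¬ G.Adj (Sum.inr a) (Sum.inr b)) ∧
    G.edgeSet.ncard = m}.ncard

end

namespace Uni

section tree
variable {V : Type*}

lemma tree_parent_unique {T : SimpleGraph V} (hT : T.IsTree) (u w p q : V)
    (hp : T.Adj w p) (hpd : T.dist u p < T.dist u w)
    (hq : T.Adj w q) (hqd : T.dist u q < T.dist u w) : p = q := by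
  classical
  have key : ∀ q, T.Adj w q → T.dist u q < T.dist u w →
      ∃ Q : T.Walk w u, Q.IsPath ∧ Q.snd = q := by
    intro q hq hqd
    obtain ⟨Q, hQ, hlen⟩ := hT.connected.exists_path_of_dist q u
    have hw : w ∉ Q.support := by
      intro hw
      have h1 : T.dist w u ≤ (Q.dropUntil w hw).length := SimpleGraph.dist_le _
      have h2 := Q.length_dropUntil_le_length hw
      rw [T.dist_comm (u := w)] at h1
      rw [T.dist_comm (u := q)] at hlen
      omega
    refine ⟨SimpleGraph.Walk.cons hq Q, ?_, by simp⟩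
    rw [SimpleGraph.Walk.cons_isPath_iff]
    exact ⟨hQ, hw⟩
  obtain ⟨P, hP, rfl⟩ := key p hp hpd
  obtain ⟨Q, hQ, rfl⟩ := key q hq hqd
  rw [(hT.existsUnique_path w u).unique hP hQ]

lemma tree_parent_exists {T : SimpleGraph V} (hT : T.IsTree) (u w : V) (hw : w ≠ u) :
    ∃ p, T.Adj w p ∧ T.dist u p < T.dist u w := by
  obtain ⟨Q, hQ, hlen⟩ := hT.connected.exists_path_of_dist w u
  cases Q with
  | nil => exact absurd rfl hw
  | @cons _ p _ h Q =>
    refine ⟨p, h, ?_⟩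
    have := SimpleGraph.dist_le Q
    rw [T.dist_comm (u := p)] at this
    rw [T.dist_comm (u := w)] at hlen
    simp at hlen
    omega

/-- `h` orients every edge of `G`, one edge out of every vertex. -/
def Orient (G : SimpleGraph V) (h : V → V) : Prop :=
  (∀ v, G.Adj v (h v)) ∧ ∀ v w, G.Adj v w → h v = w ∨ h w = v

lemma orient_exists {G T : SimpleGraph V} {u v : V} (huv : G.Adj u v) (hT : T.IsTree)
    (hGT : ∀ x y, G.Adj x y ↔ T.Adj x y ∨ s(x, y) = s(u, v)) :
    ∃ h, Orient G h ∧ h u = v ∧ ∀ w, w ≠ u → T.Adj w (h w) := by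
  classical
  choose! par hpar hpd using tree_parent_exists hT u
  refine ⟨fun w => if w = u then v else par w, ⟨?_, ?_⟩, by simp, ?_⟩
  · intro w
    by_cases hw : w = u
    · subst hw; simpa using huv
    · simp only [hw, if_false]; exact (hGT _ _).2 (Or.inl (hpar w hw))
  · intro x y hxy
    rcases (hGT _ _).1 hxy with h | h
    · have main : ∀ x y, T.Adj x y → T.dist u x = T.dist u y + 1 →
          (if x = u then v else par x) = y := by
        intro x y h hd
        have hx : x ≠ u := by rintro rfl; simp at hd
        simp only [hx, if_false]
        exact tree_parent_unique hT u x _ _ (hpar x hx) (hpd x hx) h (by omega)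
      rcases hT.dist_eq_dist_add_one_of_adj u h with h' | h'
      · exact Or.inl (main x y h h')
      · exact Or.inr (main y x h.symm h')
    · rw [Sym2.eq_iff] at h
      rcases h with ⟨rfl, rfl⟩ | ⟨rfl, rfl⟩ <;> simp
  · intro w hw
    simp only [hw, if_false]
    exact hpar w hw

lemma orient_unique {G T : SimpleGraph V} {u v : V} (hT : T.IsTree) (hTuv : ¬ T.Adj u v)
    (hGT : ∀ x y, G.Adj x y ↔ T.Adj x y ∨ s(x, y) = s(u, v)) (h h' : V → V)
    (ho : Orient G h) (ho' : Orient G h') (hu : h u = v) (hu' : h' u = v) : h = h' := by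
  have key : ∀ h, Orient G h → h u = v → ∀ n w, T.dist u w = n → w ≠ u →
      T.Adj w (h w) ∧ T.dist u (h w) < T.dist u w := by
    intro h ho hu n
    induction n with
    | zero =>
      intro w hw hwu
      exact absurd ((hT.connected.dist_eq_zero_iff).1 hw).symm hwu
    | succ n ih =>
      intro w hw hwu
      obtain ⟨p, hp, hpd⟩ := tree_parent_exists hT u w hwu
      have hwp : h w = p := by
        rcases ho.2 w p ((hGT _ _).2 (Or.inl hp)) with h1 | h1
        · exact h1
        · exfalso
          by_cases hpu : p = u
          · subst hpu
            rw [hu] at h1; subst h1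
            exact hTuv hp.symm
          · have hd := hT.dist_eq_dist_add_one_of_adj u hp
            have := (ih p (by omega) hpu).2
            rw [h1] at this
            omega
      rw [hwp]; exact ⟨hp, hpd⟩
  funext w
  by_cases hw : w = u
  · rw [hw, hu, hu']
  · obtain ⟨a1, a2⟩ := key h ho hu _ w rfl hw
    obtain ⟨b1, b2⟩ := key h' ho' hu' _ w rfl hw
    exact tree_parent_unique hT u w _ _ a1 a2 b1 b2

lemma orient_two [Fintype V] {G : SimpleGraph V} (hG : G.Connected)
    (hc : G.edgeSet.ncard = Fintype.card V) : {h | Orient G h}.ncard = 2 := by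
  classical
  have hnt : ¬ G.IsTree := by
    rw [SimpleGraph.isTree_iff_connected_and_card]
    rintro ⟨-, h⟩
    rw [Nat.card_coe_set_eq, hc, Nat.card_eq_fintype_card] at h
    omega
  have hna : ¬ G.IsAcyclic := fun h => hnt ⟨hG, h⟩
  rw [SimpleGraph.isAcyclic_iff_forall_adj_isBridge] at hna
  push Not at hna
  obtain ⟨u, v, huv, hb⟩ := hna
  set T := G.deleteEdges {s(u, v)} with hTdef
  have hTc : T.Connected := hG.connected_delete_edge_of_not_isBridge hb
  have hTt : T.IsTree := by
    rw [SimpleGraph.isTree_iff_connected_and_card]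
    refine ⟨hTc, ?_⟩
    rw [Nat.card_coe_set_eq, Nat.card_eq_fintype_card, ← hc, hTdef,
      SimpleGraph.edgeSet_deleteEdges]
    exact Set.ncard_sdiff_singleton_add_one (by simpa using huv)
  have hTuv : ¬ T.Adj u v := by simp [hTdef]
  have hGT : ∀ x y, G.Adj x y ↔ T.Adj x y ∨ s(x, y) = s(u, v) := by
    intro x y
    rw [hTdef, SimpleGraph.deleteEdges_adj, Set.mem_singleton_iff]
    constructor
    · intro h; tauto
    · rintro (h | h)
      · exact h.1
      · rw [← SimpleGraph.mem_edgeSet, h]; exact huv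
  have hGT' : ∀ x y, G.Adj x y ↔ T.Adj x y ∨ s(x, y) = s(v, u) := by
    intro x y; rw [hGT, Sym2.eq_swap (a := v)]
  obtain ⟨h1, ho1, hu1, ha1⟩ := orient_exists huv hTt hGT
  obtain ⟨h2, ho2, hu2, ha2⟩ := orient_exists huv.symm hTt hGT'
  rw [Set.ncard_eq_two]
  refine ⟨h1, h2, ?_, ?_⟩
  · rintro rfl
    apply hTuv
    have := ha2 u huv.ne
    rwa [hu1] at this
  · ext h
    simp only [Set.mem_ofPred_eq, Set.mem_insert_iff, Set.mem_singleton_iff]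
    constructor
    · intro ho
      rcases ho.2 u v huv with hh | hh
      · exact Or.inl (orient_unique hTt hTuv hGT h h1 ho ho1 hh hu1)
      · exact Or.inr (orient_unique hTt (fun h => hTuv h.symm) hGT' h h2 ho ho2 hh hu2)
    · rintro (rfl | rfl)
      · exact ho1
      · exact ho2

/-- Connectedness of a functional graph. -/
def Conn (h : V → V) : Prop := ∀ v w, ∃ m n, h^[m] v = h^[n] w

/-- The graph underlying the functional digraph of `h`. -/
def fgraph (h : V → V) : SimpleGraph V := SimpleGraph.fromRel (fun v w => h v = w)

lemma fgraph_adj (h : V → V) (v w : V) :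
    (fgraph h).Adj v w ↔ v ≠ w ∧ (h v = w ∨ h w = v) := Iff.rfl

lemma orient_fgraph (h : V → V) (hf : ∀ v, h v ≠ v) : Orient (fgraph h) h :=
  ⟨fun v => ⟨(hf v).symm, Or.inl rfl⟩, fun _ _ hvw => hvw.2⟩

lemma orient_eq_fgraph {G : SimpleGraph V} {h : V → V} (ho : Orient G h) : G = fgraph h := by
  ext v w
  rw [fgraph_adj]
  constructor
  · intro hvw; exact ⟨hvw.ne, ho.2 v w hvw⟩
  · rintro ⟨-, rfl | rfl⟩
    · exact ho.1 v
    · exact (ho.1 w).symm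

lemma fgraph_connected_iff [Nonempty V] (h : V → V) : (fgraph h).Connected ↔ Conn h := by
  constructor
  · intro hc v w
    obtain ⟨p⟩ := hc.preconnected v w
    induction p with
    | nil => exact ⟨0, 0, rfl⟩
    | @cons a b c hab p ih =>
      obtain ⟨m, n, hmn⟩ := ih
      rcases hab.2 with h1 | h1
      · exact ⟨m + 1, n, by rw [Function.iterate_succ_apply, h1, hmn]⟩
      · refine ⟨m, n + 1, ?_⟩
        rw [Function.iterate_succ_apply', ← hmn, ← h1, ← Function.iterate_succ_apply,
          Function.iterate_succ_apply']
  · intro hc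
    have hr : ∀ v n, (fgraph h).Reachable v (h^[n] v) := by
      intro v n
      induction n with
      | zero => exact SimpleGraph.Reachable.refl _
      | succ n ih =>
        refine ih.trans ?_
        rw [Function.iterate_succ_apply']
        by_cases hh : h^[n] v = h (h^[n] v)
        · rw [← hh]
        · exact SimpleGraph.Adj.reachable ⟨hh, Or.inl rfl⟩
    refine ⟨fun v w => ?_⟩
    obtain ⟨m, n, hmn⟩ := hc v w
    have := hr v m
    rw [hmn] at this
    exact this.trans (hr w n).symm

lemma fgraph_edgeSet (h : V → V) (hf : ∀ v, h v ≠ v) :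
    (fgraph h).edgeSet = Set.range (fun v => s(v, h v)) := by
  ext e
  induction e with
  | h a b =>
    rw [SimpleGraph.mem_edgeSet, fgraph_adj]
    simp only [Set.mem_range, Sym2.eq_iff]
    constructor
    · rintro ⟨-, h1 | h1⟩
      · exact ⟨a, Or.inl ⟨rfl, h1⟩⟩
      · exact ⟨b, Or.inr ⟨rfl, h1⟩⟩
    · rintro ⟨v, ⟨rfl, rfl⟩ | ⟨rfl, rfl⟩⟩
      · exact ⟨(hf _).symm, Or.inl rfl⟩
      · exact ⟨hf _, Or.inr rfl⟩

lemma fgraph_card [Fintype V] (h : V → V) (hf : ∀ v, h v ≠ v) :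
    (fgraph h).edgeSet.ncard = Fintype.card V ↔ ∀ v, h (h v) ≠ v := by
  classical
  rw [fgraph_edgeSet h hf, ← Nat.card_eq_fintype_card, ← Set.ncard_univ, ← Set.image_univ,
    Set.ncard_image_iff]
  constructor
  · intro hi v hv
    have := hi (Set.mem_univ v) (Set.mem_univ (h v)) (by simp [hv, Sym2.eq_swap])
    exact hf v this.symm
  · intro hh v _ w _ hvw
    simp only [Sym2.eq_iff] at hvw
    rcases hvw with ⟨h1, -⟩ | ⟨h1, h2⟩
    · exact h1
    · exact absurd (by rw [h2, ← h1]) (hh v)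

end tree

section count1
variable {i j : ℕ}

/-- `h` exchanges the two sides. -/
def Swaps (h : Fin i ⊕ Fin j → Fin i ⊕ Fin j) : Prop := ∀ v, (h v).isLeft = !v.isLeft

/-- Connected bipartite functional graphs without 2-cycles. -/
def HSet (i j : ℕ) : Set (Fin i ⊕ Fin j → Fin i ⊕ Fin j) :=
  {h | Swaps h ∧ Conn h ∧ ∀ v, h (h v) ≠ v}

lemma Swaps.ne {h : Fin i ⊕ Fin j → Fin i ⊕ Fin j} (hs : Swaps h) (v) : h v ≠ v := by
  intro hv
  have := hs v
  rw [hv] at this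
  cases hb : v.isLeft <;> simp [hb] at this

lemma two_mul_count (hi : 0 < i) : 2 * bipGraphCount i j (i + j) = (HSet i j).ncard := by
  classical
  have : Nonempty (Fin i ⊕ Fin j) := ⟨Sum.inl ⟨0, hi⟩⟩
  unfold bipGraphCount
  set 𝒢 : Set (SimpleGraph (Fin i ⊕ Fin j)) := {G | G.Connected ∧
    (∀ a b : Fin i, ¬ G.Adj (Sum.inl a) (Sum.inl b)) ∧
    (∀ a b : Fin j, ¬ G.Adj (Sum.inr a) (Sum.inr b)) ∧
    G.edgeSet.ncard = i + j} with h𝒢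
  have hfin : 𝒢.Finite := Set.toFinite _
  have hcard : Fintype.card (Fin i ⊕ Fin j) = i + j := by simp
  have hmem : ∀ h, h ∈ HSet i j → fgraph h ∈ 𝒢 := by
    rintro h ⟨hs, hc, h2⟩
    refine ⟨(fgraph_connected_iff h).2 hc, ?_, ?_, ?_⟩
    · rintro a b ⟨-, h1 | h1⟩
      · have := hs (Sum.inl a); rw [h1] at this; simp at this
      · have := hs (Sum.inl b); rw [h1] at this; simp at this
    · rintro a b ⟨-, h1 | h1⟩
      · have := hs (Sum.inr a); rw [h1] at this; simp at this
      · have := hs (Sum.inr b); rw [h1] at this; simp at this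
    · rw [← hcard]; exact (fgraph_card h hs.ne).2 h2
  have hfib : ∀ G ∈ 𝒢, {h | h ∈ HSet i j ∧ fgraph h = G} = {h | Orient G h} := by
    rintro G ⟨hc, hl, hr, he⟩
    ext h
    simp only [Set.mem_ofPred_eq]
    constructor
    · rintro ⟨⟨hs, -, -⟩, rfl⟩
      exact orient_fgraph h hs.ne
    · intro ho
      have hG := orient_eq_fgraph ho
      have hs : Swaps h := by
        intro v
        have := ho.1 v
        rcases v with a | b
        · rcases hh : h (Sum.inl a) with a' | b'
          · rw [hh] at this; exact absurd this (hl _ _)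
          · rfl
        · rcases hh : h (Sum.inr b) with a' | b'
          · rfl
          · rw [hh] at this; exact absurd this (hr _ _)
      subst hG
      refine ⟨⟨hs, (fgraph_connected_iff h).1 hc, ?_⟩, rfl⟩
      rw [← fgraph_card h hs.ne, he, hcard]
  have := Finset.card_eq_sum_card_fiberwise (f := fgraph) (s := (HSet i j).toFinset)
    (t := 𝒢.toFinset) (by intro h hh; simpa using hmem h (by simpa using hh))
  rw [Set.ncard_eq_toFinset_card', Set.ncard_eq_toFinset_card', this, Finset.sum_const_nat (m := 2),
    mul_comm]
  intro G hG
  have hG' : G ∈ 𝒢 := by simpa using hG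
  rw [← orient_two hG'.1 (by rw [hcard]; exact hG'.2.2.2), ← hfib G hG',
    ← Set.ncard_coe_finset]
  congr 1
  ext h; simp

end count1
end Uni
namespace Uni
open Finset

lemma sum_k_choose (b s a : ℕ) : ∑ k ∈ range (b + 1), b.choose k * (s ^ k * (k * a ^ (b - k)))
    = b * s * (a + s) ^ (b - 1) := by
  cases b with
  | zero => simp
  | succ b =>
    rw [sum_range_succ', add_comm a s, Nat.add_sub_cancel, add_pow, mul_sum]
    simp only [zero_mul, mul_zero, add_zero]
    apply sum_congr rfl
    intro k _
    have := Nat.add_one_mul_choose_eq b k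
    rw [Nat.add_sub_add_right, pow_succ]
    calc _ = ((b+1).choose (k+1) * (k+1)) * (s ^ k * s * a ^ (b-k)) := by ring
      _ = _ := by rw [← this]; push_cast; ring

/-- Forest-counting number, roots on one side. -/
def gam (a b s : ℕ) : ℕ := if b = 0 then (if a = 0 then 1 else 0) else s * b ^ a * (a + s) ^ (b - 1)

lemma gam_rec (a b s : ℕ) (hab : 0 < a + b) :
    ∑ k ∈ range (b + 1), b.choose k * (s ^ k * gam (b - k) a k) = gam a b s := by
  rcases Nat.eq_zero_or_pos b with rfl | hb
  · have : a ≠ 0 := by omega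
    simp [gam, this]
  rcases Nat.eq_zero_or_pos a with rfl | ha
  · rw [sum_eq_single b]
    · have : b ≠ 0 := by omega
      simp only [gam, this, if_false, Nat.sub_self, if_true, Nat.choose_self]
      obtain ⟨c, rfl⟩ : ∃ c, b = c + 1 := ⟨b - 1, by omega⟩
      simp [pow_succ]; ring
    · intro k hk hkb
      have : b - k ≠ 0 := by simp at hk; omega
      simp [gam, this]
    · simp
  · have ha' : a ≠ 0 := by omega
    have hb' : b ≠ 0 := by omega
    have h : ∀ k ∈ range (b + 1), b.choose k * (s ^ k * gam (b - k) a k) =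
        (b.choose k * (s ^ k * (k * a ^ (b - k)))) * b ^ (a - 1) := by
      intro k hk
      have hk' : b - k + k = b := by simp at hk; omega
      simp only [gam, ha', if_false, hk']; ring
    rw [sum_congr rfl h, ← sum_mul, sum_k_choose]
    simp only [gam, hb', if_false]
    obtain ⟨c, rfl⟩ : ∃ c, a = c + 1 := ⟨a - 1, by omega⟩
    simp [pow_succ]; ring

lemma phi_eval (a b s t : ℕ) :
    (a + s) * (b + t) * ∑ k ∈ range (a + 1), a.choose k * (t ^ k * gam (a - k) b (s + k)) =
      (a + s) ^ b * (b + t) ^ a * (s * b + t * a + s * t) := by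
  rcases Nat.eq_zero_or_pos b with rfl | hb
  · rw [sum_eq_single a]
    · simp [gam]; ring
    · intro k hk hkb
      have : a - k ≠ 0 := by simp at hk; omega
      simp [gam, this]
    · simp
  · have hb' : b ≠ 0 := by omega
    have h : ∀ k ∈ range (a + 1), a.choose k * (t ^ k * gam (a - k) b (s + k)) =
        (a + s) ^ (b - 1) * (s * (t ^ k * b ^ (a - k) * a.choose k)
          + a.choose k * (t ^ k * (k * b ^ (a - k)))) := by
      intro k hk
      have hk' : a - k + (s + k) = a + s := by simp at hk; omega
      simp only [gam, hb', if_false, hk']; ring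
    rw [sum_congr rfl h, ← mul_sum, sum_add_distrib, ← mul_sum, sum_k_choose]
    have h2 := add_pow t b a
    simp only [Nat.cast_id] at h2
    rw [← h2]
    obtain ⟨c, rfl⟩ : ∃ c, b = c + 1 := ⟨b - 1, by omega⟩
    rcases Nat.eq_zero_or_pos a with rfl | ha
    · simp [pow_succ]; ring
    · obtain ⟨d, rfl⟩ : ∃ d, a = d + 1 := ⟨a - 1, by omega⟩
      simp [pow_succ]; ring

section cnt
set_option linter.unusedSectionVars false
open Classical in
/-- Number of functions `h` with `h v ∈ N v` all of whose orbits reach `R`. -/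
noncomputable def cnt {V : Type*} [Fintype V] [DecidableEq V] (N : V → Finset V) (R : Finset V) : ℕ :=
  #{h ∈ Fintype.piFinset N | ∀ v, ∃ n, h^[n] v ∈ R}

variable {V : Type*} [Fintype V] [DecidableEq V]

/-- Restriction of the allowed values: `U` is the part of `M` that maps to `R`. -/
def restr (N : V → Finset V) (R M U : Finset V) (v : V) : Finset V :=
  if v ∈ U then N v ∩ R else if v ∈ M then N v \ R else N v

lemma absorb (N : V → Finset V) (R M : Finset V) :
    cnt N R = ∑ U ∈ M.powerset, cnt (restr N R M U) (R ∪ U) := by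
  classical
  unfold cnt
  rw [card_eq_sum_card_fiberwise (f := fun h => {v ∈ M | h v ∈ R}) (t := M.powerset)]
  · apply sum_congr rfl
    intro U hU
    rw [mem_powerset] at hU
    congr 1
    ext h
    simp only [mem_filter, Fintype.mem_piFinset]
    constructor
    · rintro ⟨⟨hN, hr⟩, rfl⟩
      refine ⟨fun v => ?_, fun v => ?_⟩
      · unfold restr
        by_cases h1 : v ∈ M <;> by_cases h2 : h v ∈ R <;> simp [h1, h2, hN v]
      · obtain ⟨n, hn⟩ := hr v
        exact ⟨n, mem_union_left _ hn⟩
    · rintro ⟨hN, hr⟩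
      have hU' : ∀ v ∈ U, h v ∈ R := by
        intro v hv
        have := hN v
        simp only [restr, hv, if_true, mem_inter] at this
        exact this.2
      refine ⟨⟨fun v => ?_, fun v => ?_⟩, ?_⟩
      · have := hN v
        unfold restr at this
        split_ifs at this <;> simp_all
      · obtain ⟨n, hn⟩ := hr v
        rcases mem_union.1 hn with hn | hn
        · exact ⟨n, hn⟩
        · exact ⟨n + 1, by rw [Function.iterate_succ_apply']; exact hU' _ hn⟩
      · ext v
        simp only [mem_filter]
        constructor
        · rintro ⟨hv, hR⟩
          by_contra hvU
          have := hN v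
          simp [restr, hvU, hv, hR] at this
        · intro hv; exact ⟨hU hv, hU' v hv⟩
  · intro h _
    exact mem_powerset.2 (filter_subset _ _)

lemma cnt_zero (N : V → Finset V) (R : Finset V) (v : V) (hv : v ∉ R)
    (hN : ∀ v, v ∉ R → Disjoint (N v) R) : cnt N R = 0 := by
  classical
  unfold cnt
  rw [card_eq_zero, filter_eq_empty_iff]
  intro h hh hr
  rw [Fintype.mem_piFinset] at hh
  obtain ⟨n, hn⟩ := hr v
  have : ∀ n, h^[n] v ∉ R := by
    intro n
    induction n with
    | zero => exact hv
    | succ n ih =>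
      rw [Function.iterate_succ_apply']
      exact disjoint_left.1 (hN _ ih) (hh _)
  exact this n hn

lemma prod_restr (N : V → Finset V) (R M U : Finset V) (hU : U ⊆ M) (hM : Disjoint M R) (s : ℕ)
    (hs : ∀ v ∈ U, #(N v ∩ R) = s) :
    ∏ r ∈ R ∪ U, #(restr N R M U r) = (∏ r ∈ R, #(N r)) * s ^ #U := by
  rw [prod_union (disjoint_of_subset_left hU hM).symm]
  congr 1
  · apply prod_congr rfl
    intro r hr
    have h1 : r ∉ M := fun h => disjoint_left.1 hM h hr
    have h2 : r ∉ U := fun h => h1 (hU h)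
    simp [restr, h1, h2]
  · rw [← prod_const]
    apply prod_congr rfl
    intro r hr
    simp [restr, hr, hs r hr]

lemma cnt_gam : ∀ (n : ℕ) (A B R S : Finset V) (N : V → Finset V), #A + #B = n →
    Disjoint A B → Disjoint A R → Disjoint B R → (∀ v, v ∈ A ∨ v ∈ B ∨ v ∈ R) → S ⊆ R →
    (∀ v ∈ A, N v = B) → (∀ v ∈ B, N v = A ∪ S) →
    cnt N R = (∏ r ∈ R, #(N r)) * gam #A #B #S := by
  intro n
  induction n using Nat.strong_induction_on with
  | _ n ih =>
  intro A B R S N hn hAB hAR hBR hcov hSR hNA hNB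
  rcases Nat.eq_zero_or_pos n with rfl | hpos
  · have hA : A = ∅ := by rw [← card_eq_zero]; omega
    have hB : B = ∅ := by rw [← card_eq_zero]; omega
    subst hA hB
    have hR : R = univ := by ext v; simpa using hcov v
    subst hR
    classical
    simp only [cnt, gam, card_empty, if_true, mul_one]
    rw [filter_true_of_mem]
    · simp [Fintype.card_piFinset]
    · intro _ _ v; exact ⟨0, mem_univ _⟩
  · rw [absorb N R B]
    have hterm : ∀ U ∈ B.powerset, cnt (restr N R B U) (R ∪ U) =
        (∏ r ∈ R, #(N r)) * (#S ^ #U * gam (#B - #U) #A #U) := by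
      intro U hU
      rw [mem_powerset] at hU
      have hUR : Disjoint U R := disjoint_of_subset_left hU hBR
      rcases U.eq_empty_or_nonempty with rfl | hne
      · have hz : gam #B #A 0 = 0 := by
          unfold gam
          by_cases hA : #A = 0
          · have : #B ≠ 0 := by omega
            simp only [hA, this, if_true, if_false]
          · simp [hA]
        simp only [card_empty, Nat.sub_zero, hz, mul_zero, union_empty]
        obtain ⟨v, hv⟩ : (A ∪ B).Nonempty := by
          rw [← card_pos, card_union_of_disjoint hAB]; omega
        refine cnt_zero _ _ v ?_ ?_
        · intro hvR
          rcases mem_union.1 hv with h | h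
          · exact disjoint_left.1 hAR h hvR
          · exact disjoint_left.1 hBR h hvR
        · intro w hw
          rcases hcov w with h | h | h
          · have : w ∉ B := disjoint_left.1 hAB h
            simp only [restr, this, notMem_empty, if_false]
            rw [hNA w h]; exact hBR
          · simp only [restr, h, notMem_empty, if_false, if_true]
            exact sdiff_disjoint
          · exact absurd h hw
      · have hlt : #(B \ U) + #A < n := by
          rw [card_sdiff_of_subset hU]
          have := card_le_card hU
          have := hne.card_pos
          omega
        rw [ih _ hlt (B \ U) A (R ∪ U) U (restr N R B U) rfl, prod_restr N R B U hU hBR #S,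
          card_sdiff_of_subset hU]
        · ring
        · intro v hv
          rw [hNB v (hU hv), union_inter_distrib_right, disjoint_iff_inter_eq_empty.1 hAR,
            empty_union, inter_eq_left.2 hSR]
        · exact disjoint_of_subset_left sdiff_subset hAB.symm
        · rw [disjoint_union_right]
          exact ⟨disjoint_of_subset_left sdiff_subset hBR, sdiff_disjoint⟩
        · rw [disjoint_union_right]
          exact ⟨hAR, disjoint_of_subset_right hU hAB⟩
        · intro v
          simp only [Finset.mem_sdiff, mem_union]
          have := hcov v
          tauto
        · exact subset_union_right
        · intro v hv
          rw [Finset.mem_sdiff] at hv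
          simp only [restr, hv.1, hv.2, if_false, if_true]
          rw [hNB v hv.1, union_sdiff_distrib, sdiff_eq_empty_iff_subset.2 hSR, union_empty,
            sdiff_eq_self_of_disjoint hAR]
        · intro v hv
          have h1 : v ∉ B := disjoint_left.1 hAB hv
          have h2 : v ∉ U := fun h => h1 (hU h)
          simp only [restr, h1, h2, if_false]
          rw [hNA v hv, sdiff_union_of_subset hU]
    rw [sum_congr rfl hterm, ← mul_sum]
    congr 1
    rw [sum_powerset_apply_card (fun k => #S ^ k * gam (#B - k) #A k)]
    simp only [smul_eq_mul]
    exact gam_rec _ _ _ (by omega)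

lemma cnt_phi (A B R S T : Finset V) (N : V → Finset V)
    (hAB : Disjoint A B) (hAR : Disjoint A R) (hBR : Disjoint B R)
    (hcov : ∀ v, v ∈ A ∨ v ∈ B ∨ v ∈ R) (hSR : S ⊆ R) (hTR : T ⊆ R)
    (hNA : ∀ v ∈ A, N v = B ∪ T) (hNB : ∀ v ∈ B, N v = A ∪ S)
    (hR : ∀ r ∈ R, #(N r) = 1) :
    (#A + #S) * (#B + #T) * cnt N R =
      (#A + #S) ^ #B * (#B + #T) ^ #A * (#S * #B + #T * #A + #S * #T) := by
  rw [absorb N R A]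
  have hterm : ∀ U ∈ A.powerset, cnt (restr N R A U) (R ∪ U) =
      #T ^ #U * gam (#A - #U) #B (#S + #U) := by
    intro U hU
    rw [mem_powerset] at hU
    have hUR : Disjoint U R := disjoint_of_subset_left hU hAR
    have hSU : Disjoint S U := disjoint_of_subset_left hSR hUR.symm
    rw [cnt_gam _ (A \ U) B (R ∪ U) (S ∪ U) (restr N R A U) rfl, prod_restr N R A U hU hAR #T,
      card_sdiff_of_subset hU, card_union_of_disjoint hSU, prod_eq_one hR]
    · ring
    · intro v hv
      rw [hNA v (hU hv), union_inter_distrib_right, disjoint_iff_inter_eq_empty.1 hBR,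
        empty_union, inter_eq_left.2 hTR]
    · exact disjoint_of_subset_left sdiff_subset hAB
    · rw [disjoint_union_right]
      exact ⟨disjoint_of_subset_left sdiff_subset hAR, sdiff_disjoint⟩
    · rw [disjoint_union_right]
      exact ⟨hBR, disjoint_of_subset_right hU hAB.symm⟩
    · intro v
      simp only [Finset.mem_sdiff, mem_union]
      have := hcov v
      tauto
    · exact union_subset_union_left hSR
    · intro v hv
      rw [Finset.mem_sdiff] at hv
      simp only [restr, hv.1, hv.2, if_false, if_true]
      rw [hNA v hv.1, union_sdiff_distrib, sdiff_eq_empty_iff_subset.2 hTR, union_empty,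
        sdiff_eq_self_of_disjoint hBR]
    · intro v hv
      have h1 : v ∉ A := disjoint_right.1 hAB hv
      have h2 : v ∉ U := fun h => h1 (hU h)
      simp only [restr, h1, h2, if_false]
      rw [hNB v hv]
      ext w
      have := @hU w
      simp only [mem_union, Finset.mem_sdiff]
      tauto
  rw [sum_congr rfl hterm, sum_powerset_apply_card (fun k => #T ^ k * gam (#A - k) #B (#S + k))]
  simp only [smul_eq_mul]
  exact phi_eval _ _ _ _

end cnt
end Uni
namespace Uni
open Finset

section cyc
variable {i j q : ℕ}

/-- The vertices of the cycle described by `x`, `y`. -/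
def cycSet (x : Fin (q + 1) ↪ Fin i) (y : Fin (q + 1) ↪ Fin j) : Finset (Fin i ⊕ Fin j) :=
  univ.image (fun k => Sum.inl (x k)) ∪ univ.image (fun k => Sum.inr (y k))

lemma mem_cycSet {x : Fin (q + 1) ↪ Fin i} {y : Fin (q + 1) ↪ Fin j} {v : Fin i ⊕ Fin j} :
    v ∈ cycSet x y ↔ (∃ k, v = Sum.inl (x k)) ∨ (∃ k, v = Sum.inr (y k)) := by
  simp [cycSet, eq_comm]

/-- `h` follows the cycle `x 0, y 0, x 1, y 1, …`. -/
def Follows (h : Fin i ⊕ Fin j → Fin i ⊕ Fin j) (x : Fin (q + 1) ↪ Fin i)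
    (y : Fin (q + 1) ↪ Fin j) : Prop :=
  (∀ k, h (Sum.inl (x k)) = Sum.inr (y k)) ∧ (∀ k, h (Sum.inr (y k)) = Sum.inl (x (k + 1)))

/-- `h` follows the cycle and all orbits reach it. -/
def Cy (h : Fin i ⊕ Fin j → Fin i ⊕ Fin j) (x : Fin (q + 1) ↪ Fin i)
    (y : Fin (q + 1) ↪ Fin j) : Prop :=
  Follows h x y ∧ ∀ v, ∃ n, h^[n] v ∈ cycSet x y

open Classical in
/-- Left periodic points. -/
noncomputable def per (h : Fin i ⊕ Fin j → Fin i ⊕ Fin j) : Finset (Fin i) :=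
  {a | Sum.inl a ∈ Function.periodicPts h}

lemma mem_per {h : Fin i ⊕ Fin j → Fin i ⊕ Fin j} {a : Fin i} :
    a ∈ per h ↔ Sum.inl a ∈ Function.periodicPts h := by simp [per]

variable {h : Fin i ⊕ Fin j → Fin i ⊕ Fin j} {x : Fin (q + 1) ↪ Fin i} {y : Fin (q + 1) ↪ Fin j}

lemma Follows.iter (hf : Follows h x y) (m : Fin (q + 1)) (k : ℕ) :
    h^[2 * k] (Sum.inl (x m)) = Sum.inl (x (m + Fin.ofNat (q + 1) k)) := by
  induction k with
  | zero => simp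
  | succ k ih =>
    rw [show 2 * (k + 1) = 2 * k + 1 + 1 by ring, Function.iterate_succ_apply',
      Function.iterate_succ_apply', ih, hf.1, hf.2]
    congr 2
    apply Fin.ext
    simp [Fin.val_add, add_assoc]

lemma Follows.closed (hf : Follows h x y) {v} (hv : v ∈ cycSet x y) (n : ℕ) :
    h^[n] v ∈ cycSet x y := by
  induction n with
  | zero => exact hv
  | succ n ih =>
    rw [Function.iterate_succ_apply']
    rcases mem_cycSet.1 ih with ⟨k, hk⟩ | ⟨k, hk⟩
    · rw [hk, hf.1]; exact mem_cycSet.2 (Or.inr ⟨_, rfl⟩)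
    · rw [hk, hf.2]; exact mem_cycSet.2 (Or.inl ⟨_, rfl⟩)

lemma Cy.reach (hc : Cy h x y) (v) : ∃ n, h^[n] v = Sum.inl (x 0) := by
  have h1 : ∀ m, ∃ n, h^[n] (Sum.inl (x m)) = Sum.inl (x 0) := by
    intro m
    refine ⟨2 * (-m).val, ?_⟩
    rw [hc.1.iter, Fin.ofNat_val_eq_self]
    simp
  obtain ⟨n, hn⟩ := hc.2 v
  rcases mem_cycSet.1 hn with ⟨k, hk⟩ | ⟨k, hk⟩
  · obtain ⟨m, hm⟩ := h1 k
    exact ⟨m + n, by rw [Function.iterate_add_apply, hk, hm]⟩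
  · obtain ⟨m, hm⟩ := h1 (k + 1)
    refine ⟨m + 1 + n, ?_⟩
    rw [Function.iterate_add_apply, hk, Function.iterate_succ_apply, hc.1.2, hm]

lemma Cy.conn (hc : Cy h x y) : Conn h := by
  intro v w
  obtain ⟨m, hm⟩ := hc.reach v
  obtain ⟨n, hn⟩ := hc.reach w
  exact ⟨m, n, by rw [hm, hn]⟩

lemma Cy.periodic (hc : Cy h x y) {v} (hv : v ∈ Function.periodicPts h) : v ∈ cycSet x y := by
  obtain ⟨p, hp, hpv⟩ := hv
  obtain ⟨n, hn⟩ := hc.2 v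
  have h1 : h^[p * n] v = v := by
    have : Function.IsPeriodicPt h (p * n) v := hpv.mul_const n
    exact this
  have h2 : n ≤ p * n := Nat.le_mul_of_pos_left n hp
  rw [← h1, show p * n = (p * n - n) + n by omega, Function.iterate_add_apply]
  exact hc.1.closed hn _

lemma Cy.per_eq (hc : Cy h x y) : per h = univ.image x := by
  ext a
  rw [mem_per]
  simp only [mem_image, mem_univ, true_and]
  constructor
  · intro ha
    rcases mem_cycSet.1 (hc.periodic ha) with ⟨k, hk⟩ | ⟨k, hk⟩
    · exact ⟨k, (Sum.inl.inj hk).symm⟩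
    · simp at hk
  · rintro ⟨k, rfl⟩
    refine Function.mk_mem_periodicPts (n := 2 * (q + 1)) (by omega) ?_
    change h^[2 * (q + 1)] _ = _
    rw [hc.1.iter]
    simp

lemma Cy.card_per (hc : Cy h x y) : #(per h) = q + 1 := by
  rw [hc.per_eq, card_image_of_injective _ x.injective]; simp

lemma Cy.no_two (hc : Cy h x y) (hq : 1 ≤ q) (v) : h (h v) ≠ v := by
  intro hv
  have hp : v ∈ Function.periodicPts h := Function.mk_mem_periodicPts (n := 2) (by norm_num) hv
  have hone : (1 : Fin (q + 1)) ≠ 0 := by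
    obtain ⟨c, rfl⟩ : ∃ c, q = c + 1 := ⟨q - 1, by omega⟩
    exact one_ne_zero
  rcases mem_cycSet.1 (hc.periodic hp) with ⟨k, hk⟩ | ⟨k, hk⟩
  · rw [hk, hc.1.1, hc.1.2] at hv
    have := x.injective (Sum.inl.inj hv)
    exact hone (by simpa using this)
  · rw [hk, hc.1.2, hc.1.1] at hv
    have := y.injective (Sum.inr.inj hv)
    exact hone (by simpa using this)

lemma exists_cy (hs : Swaps h) (hc : Conn h) {a : Fin i} (ha : a ∈ per h) :
    ∃ (q : ℕ) (x : Fin (q + 1) ↪ Fin i) (y : Fin (q + 1) ↪ Fin j), Cy h x y ∧ x 0 = a := by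
  rw [mem_per] at ha
  have hinj := (Function.bijOn_periodicPts h).injOn
  have hmaps := (Function.bijOn_periodicPts h).mapsTo
  have hperi : ∀ n, h^[n] (Sum.inl a) ∈ Function.periodicPts h := by
    intro n
    induction n with
    | zero => exact ha
    | succ n ih => rw [Function.iterate_succ_apply']; exact hmaps ih
  set φ := h^[2] with hφ
  have hφk : ∀ k v, φ^[k] v = h^[2 * k] v := by
    intro k v; rw [hφ, ← Function.iterate_mul]
  have ha2 : (Sum.inl a : Fin i ⊕ Fin j) ∈ Function.periodicPts φ := by
    obtain ⟨p, hp, hpv⟩ := ha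
    refine ⟨p, hp, ?_⟩
    change φ^[p] _ = _
    rw [hφk, mul_comm]
    exact hpv.mul_const 2
  obtain ⟨q, hq⟩ : ∃ q, Function.minimalPeriod φ (Sum.inl a : Fin i ⊕ Fin j) = q + 1 :=
    ⟨Function.minimalPeriod φ (Sum.inl a) - 1, by
      have := Function.minimalPeriod_pos_of_mem_periodicPts ha2; omega⟩
  have hleft : ∀ k : ℕ, ∃ b, φ^[k] (Sum.inl a) = Sum.inl b := by
    intro k
    induction k with
    | zero => exact ⟨a, rfl⟩
    | succ k ih =>
      obtain ⟨b, hb⟩ := ih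
      rw [Function.iterate_succ_apply', hb]
      have h1 := hs (Sum.inl b)
      have h2 := hs (h (Sum.inl b))
      rw [h1] at h2
      exact Sum.isLeft_iff.1 (by simpa [hφ] using h2)
  choose X hX using hleft
  have hright : ∀ k : ℕ, ∃ b, h (Sum.inl (X k)) = Sum.inr b := by
    intro k
    have h1 := hs (Sum.inl (X k))
    exact Sum.isRight_iff.1 (by simpa using h1)
  choose Y hY using hright
  have hXinj : Function.Injective (fun k : Fin (q + 1) => X k) := by
    intro k l hkl
    have : φ^[(k : ℕ)] (Sum.inl a) = φ^[(l : ℕ)] (Sum.inl a) := by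
      rw [hX, hX]; exact congrArg _ hkl
    exact Fin.ext ((Function.iterate_eq_iterate_iff_of_lt_minimalPeriod
      (by rw [hq]; exact k.2) (by rw [hq]; exact l.2)).1 this)
  have hXper : ∀ k, Sum.inl (X k) ∈ Function.periodicPts h := by
    intro k; rw [← hX, hφk]; exact hperi _
  have hYinj : Function.Injective (fun k : Fin (q + 1) => Y k) := by
    intro k l hkl
    apply hXinj
    have : h (Sum.inl (X k)) = h (Sum.inl (X l)) := by rw [hY, hY]; exact congrArg _ hkl
    exact Sum.inl.inj (hinj (hXper _) (hXper _) this)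
  have hmod : ∀ n, φ^[n % (q + 1)] (Sum.inl a) = φ^[n] (Sum.inl a) := by
    intro n; rw [← hq]; exact Function.iterate_mod_minimalPeriod_eq
  have hfol : Follows h ⟨_, hXinj⟩ ⟨_, hYinj⟩ := by
    refine ⟨fun k => hY k, fun k => ?_⟩
    change h (Sum.inr (Y k)) = Sum.inl (X ((k + 1 : Fin (q + 1)) : ℕ))
    rw [← hY, ← hX, ← hX, Fin.val_add, Fin.val_one', Nat.add_mod_mod, hmod,
      Function.iterate_succ_apply']
    rfl
  have hX0 : X 0 = a := (Sum.inl.inj (hX 0)).symm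
  refine ⟨q, ⟨_, hXinj⟩, ⟨_, hYinj⟩, ⟨hfol, fun v => ?_⟩, ?_⟩
  · obtain ⟨m, n, hmn⟩ := hc v (Sum.inl a)
    refine ⟨m, ?_⟩
    rw [hmn]
    apply hfol.closed
    exact mem_cycSet.2 (Or.inl ⟨0, by simp [hX0]⟩)
  · simp [hX0]

lemma per_nonempty (hi : 0 < i) (hs : Swaps h) : (per h).Nonempty := by
  have hperi : ∃ v, v ∈ Function.periodicPts h := by
    have hni : ¬ Function.Injective (fun n : ℕ => h^[n] (Sum.inl ⟨0, hi⟩)) :=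
      not_injective_infinite_finite _
    rw [Function.Injective] at hni
    push Not at hni
    obtain ⟨m, n, hmn, hne⟩ := hni
    have key : ∀ m n : ℕ, m < n → h^[m] (Sum.inl ⟨0, hi⟩) = h^[n] (Sum.inl ⟨0, hi⟩) →
        ∃ v, v ∈ Function.periodicPts h := by
      intro m n hlt hmn
      refine ⟨h^[m] (Sum.inl ⟨0, hi⟩), Function.mk_mem_periodicPts (n := n - m) (by omega) ?_⟩
      change h^[n - m] _ = _
      rw [← Function.iterate_add_apply, Nat.sub_add_cancel hlt.le, hmn]
    rcases lt_or_gt_of_ne hne with h1 | h1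
    · exact key m n h1 hmn
    · exact key n m h1 hmn.symm
  obtain ⟨v, hv⟩ := hperi
  rcases v with a | b
  · exact ⟨a, mem_per.2 hv⟩
  · have h1 := hs (Sum.inr b)
    obtain ⟨a, ha⟩ := Sum.isLeft_iff.1 (by simpa using h1)
    refine ⟨a, mem_per.2 ?_⟩
    rw [← ha]
    exact (Function.bijOn_periodicPts h).mapsTo hv

open Classical in
lemma card_fiber (hs : Swaps h) (hc : Conn h) (hper : #(per h) = q + 1) :
    #{p : (Fin (q + 1) ↪ Fin i) × (Fin (q + 1) ↪ Fin j) | Cy h p.1 p.2} = q + 1 := by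
  refine Eq.trans ?_ hper
  apply card_bij (t := per h) (fun p _ => p.1 0)
  · rintro ⟨x, y⟩ hp
    have hp : Cy h x y := by simpa using hp
    simp [hp.per_eq]
  · rintro ⟨x, y⟩ hp ⟨x', y'⟩ hp' h0
    have hp : Cy h x y := by simpa using hp
    have hp' : Cy h x' y' := by simpa using hp'
    have h0 : x 0 = x' 0 := h0
    have hx : x = x' := by
      ext1 k
      have h1 := hp.1.iter 0 k.val
      have h2 := hp'.1.iter 0 k.val
      rw [h0, h2, Fin.ofNat_val_eq_self, zero_add] at h1
      have := Sum.inl.inj h1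
      simpa using this.symm
    subst hx
    have hy : y = y' := by
      ext1 k
      have h1 := hp.1.1 k
      rw [hp'.1.1 k] at h1
      exact (Sum.inr.inj h1).symm
    rw [hy]
  · intro a ha
    obtain ⟨q', x, y, hcy, h0⟩ := exists_cy hs hc ha
    have := hcy.card_per
    obtain rfl : q' = q := by omega
    exact ⟨(x, y), by simpa using hcy, h0⟩

/-- Allowed values for functions following the cycle. -/
def allowed (x : Fin (q + 1) ↪ Fin i) (y : Fin (q + 1) ↪ Fin j) (v : Fin i ⊕ Fin j) :
    Finset (Fin i ⊕ Fin j) :=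
  {w | w.isLeft = !v.isLeft ∧ (∀ k, v = Sum.inl (x k) → w = Sum.inr (y k)) ∧
    (∀ k, v = Sum.inr (y k) → w = Sum.inl (x (k + 1)))}

open Classical in
lemma card_cy (x : Fin (q + 1) ↪ Fin i) (y : Fin (q + 1) ↪ Fin j) :
    #{h | Swaps h ∧ Cy h x y} = cnt (allowed x y) (cycSet x y) := by
  unfold cnt
  congr 1
  · ext h
    simp only [mem_filter, mem_univ, true_and, Fintype.mem_piFinset, allowed]
    constructor
    · rintro ⟨hs, hf, hr⟩
      refine ⟨fun v => ⟨hs v, ?_, ?_⟩, hr⟩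
      · rintro k rfl; exact hf.1 k
      · rintro k rfl; exact hf.2 k
    · rintro ⟨ha, hr⟩
      exact ⟨fun v => (ha v).1, ⟨fun k => (ha _).2.1 k rfl, fun k => (ha _).2.2 k rfl⟩, hr⟩

lemma cnt_cy (x : Fin (q + 1) ↪ Fin i) (y : Fin (q + 1) ↪ Fin j) :
    i * j * cnt (allowed x y) (cycSet x y) =
      i ^ (j - (q + 1)) * j ^ (i - (q + 1)) *
      ((q + 1) * (j - (q + 1)) + (q + 1) * (i - (q + 1)) + (q + 1) * (q + 1)) := by
  set S : Finset (Fin i ⊕ Fin j) := univ.image (fun k => Sum.inl (x k)) with hS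
  set T : Finset (Fin i ⊕ Fin j) := univ.image (fun k => Sum.inr (y k)) with hT
  have hR : cycSet x y = S ∪ T := rfl
  have cS : #S = q + 1 := by
    rw [hS, card_image_of_injective _ (f := fun k => (Sum.inl (x k) : Fin i ⊕ Fin j)) (fun a b h => x.injective (Sum.inl.inj h))]; simp
  have cT : #T = q + 1 := by
    rw [hT, card_image_of_injective _ (f := fun k => (Sum.inr (y k) : Fin i ⊕ Fin j)) (fun a b h => y.injective (Sum.inr.inj h))]; simp
  have mS : ∀ v, v ∈ S ↔ ∃ k, v = Sum.inl (x k) := by intro v; simp [hS, eq_comm]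
  have mT : ∀ v, v ∈ T ↔ ∃ k, v = Sum.inr (y k) := by intro v; simp [hT, eq_comm]
  have hSl : ∀ v ∈ S, v.isLeft = true := by
    intro v hv; obtain ⟨k, rfl⟩ := (mS v).1 hv; rfl
  have hTl : ∀ v ∈ T, v.isLeft = false := by
    intro v hv; obtain ⟨k, rfl⟩ := (mT v).1 hv; rfl
  set L : Finset (Fin i ⊕ Fin j) := {v | v.isLeft = true} with hL
  set K : Finset (Fin i ⊕ Fin j) := {v | v.isLeft = false} with hK
  have cL : #L = i := by
    have : L = univ.image Sum.inl := by ext v; cases v <;> simp [hL]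
    rw [this, card_image_of_injective _ Sum.inl_injective]; simp
  have cK : #K = j := by
    have : K = univ.image Sum.inr := by ext v; cases v <;> simp [hK]
    rw [this, card_image_of_injective _ Sum.inr_injective]; simp
  have hSL : S ⊆ L := fun v hv => by simpa [hL] using hSl v hv
  have hTK : T ⊆ K := fun v hv => by simpa [hK] using hTl v hv
  have mL : ∀ v, v ∈ L ↔ v.isLeft = true := by intro v; simp [hL]
  have mK : ∀ v, v ∈ K ↔ v.isLeft = false := by intro v; simp [hK]
  have cA : #(L \ S) = i - (q + 1) := by rw [card_sdiff_of_subset hSL, cL, cS]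
  have cB : #(K \ T) = j - (q + 1) := by rw [card_sdiff_of_subset hTK, cK, cT]
  have hLK : Disjoint L K := by
    rw [disjoint_left]; intro v h1 h2
    rw [mL] at h1; rw [mK, h1] at h2; simp at h2
  have hqi : q + 1 ≤ i := by rw [← cL, ← cS]; exact card_le_card hSL
  have hqj : q + 1 ≤ j := by rw [← cK, ← cT]; exact card_le_card hTK
  have := cnt_phi (L \ S) (K \ T) (cycSet x y) S T (allowed x y)
    (disjoint_of_subset_left sdiff_subset (disjoint_of_subset_right sdiff_subset hLK))
    (by
      rw [hR, disjoint_union_right]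
      exact ⟨sdiff_disjoint, disjoint_of_subset_left sdiff_subset
        (disjoint_of_subset_right hTK hLK)⟩)
    (by
      rw [hR, disjoint_union_right]
      exact ⟨disjoint_of_subset_left sdiff_subset
        (disjoint_of_subset_right hSL hLK.symm), sdiff_disjoint⟩)
    (by
      intro v
      rw [hR]
      simp only [Finset.mem_sdiff, mem_union, mL, mK]
      cases v.isLeft <;> simp <;> tauto)
    (by rw [hR]; exact subset_union_left)
    (by rw [hR]; exact subset_union_right)
    (by
      intro v hv
      rw [sdiff_union_of_subset hTK]
      rw [Finset.mem_sdiff, mL, mS] at hv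
      ext w
      rw [mK]
      simp only [allowed, mem_filter, mem_univ, true_and, hv.1]
      constructor
      · rintro ⟨h1, -⟩; simpa using h1
      · intro h1
        refine ⟨by simpa using h1, fun k hk => absurd ⟨k, hk⟩ hv.2, ?_⟩
        rintro k rfl
        simp at hv)
    (by
      intro v hv
      rw [sdiff_union_of_subset hSL]
      rw [Finset.mem_sdiff, mK, mT] at hv
      ext w
      rw [mL]
      simp only [allowed, mem_filter, mem_univ, true_and, hv.1]
      constructor
      · rintro ⟨h1, -⟩; simpa using h1
      · intro h1
        refine ⟨by simpa using h1, ?_, fun k hk => absurd ⟨k, hk⟩ hv.2⟩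
        rintro k rfl
        simp at hv)
    (by
      intro v hv
      rw [card_eq_one]
      rcases mem_cycSet.1 hv with ⟨k, rfl⟩ | ⟨k, rfl⟩
      · refine ⟨Sum.inr (y k), ?_⟩
        ext w
        simp only [allowed, mem_filter, mem_univ, true_and, mem_singleton]
        constructor
        · rintro ⟨-, h1, -⟩; exact h1 k rfl
        · rintro rfl
          refine ⟨rfl, ?_, ?_⟩
          · intro l hl
            rw [x.injective (Sum.inl.inj hl)]
          · intro l hl; simp at hl
      · refine ⟨Sum.inl (x (k + 1)), ?_⟩
        ext w
        simp only [allowed, mem_filter, mem_univ, true_and, mem_singleton]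
        constructor
        · rintro ⟨-, -, h1⟩; exact h1 k rfl
        · rintro rfl
          refine ⟨rfl, ?_, ?_⟩
          · intro l hl; simp at hl
          · intro l hl
            rw [y.injective (Sum.inr.inj hl)])
  rw [cA, cB, cS, cT, Nat.sub_add_cancel hqi, Nat.sub_add_cancel hqj] at this
  exact this

open Classical in
lemma card_Hr (hq : 1 ≤ q) :
    i * j * (#{h ∈ (HSet i j).toFinset | #(per h) = q + 1} * (q + 1)) =
      i.descFactorial (q + 1) * j.descFactorial (q + 1) *
      (i ^ (j - (q + 1)) * j ^ (i - (q + 1)) *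
      ((q + 1) * (j - (q + 1)) + (q + 1) * (i - (q + 1)) + (q + 1) * (q + 1))) := by
  have h1 : #{h ∈ (HSet i j).toFinset | #(per h) = q + 1} * (q + 1) =
      ∑ h ∈ (HSet i j).toFinset with #(per h) = q + 1,
        #{p : (Fin (q + 1) ↪ Fin i) × (Fin (q + 1) ↪ Fin j) | Cy h p.1 p.2} := by
    rw [sum_const_nat]
    intro h hh
    simp only [mem_filter, Set.mem_toFinset] at hh
    exact card_fiber hh.1.1 hh.1.2.1 hh.2
  have h2 := sum_card_bipartiteAbove_eq_sum_card_bipartiteBelow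
    (s := ((HSet i j).toFinset.filter (fun h => #(per h) = q + 1)))
    (t := (univ : Finset ((Fin (q + 1) ↪ Fin i) × (Fin (q + 1) ↪ Fin j))))
    (fun h p => Cy h p.1 p.2)
  unfold bipartiteAbove bipartiteBelow at h2
  rw [h1, h2, mul_sum, sum_const_nat
    (m := (i ^ (j - (q + 1)) * j ^ (i - (q + 1)) *
      ((q + 1) * (j - (q + 1)) + (q + 1) * (i - (q + 1)) + (q + 1) * (q + 1))))]
  · rw [card_univ, Fintype.card_prod, Fintype.card_embedding_eq, Fintype.card_embedding_eq]
    simp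
  · rintro ⟨x, y⟩ -
    rw [← cnt_cy x y, ← card_cy x y]
    congr 2
    ext h
    simp only [mem_filter, Set.mem_toFinset, mem_univ, true_and]
    constructor
    · rintro ⟨⟨hh, -⟩, hc⟩
      exact ⟨hh.1, hc⟩
    · rintro ⟨hs, hc⟩
      exact ⟨⟨⟨hs, hc.conn, hc.no_two hq⟩, hc.card_per⟩, hc⟩

open Classical in
lemma card_HSet (hi : 0 < i) :
    (HSet i j).ncard = ∑ r ∈ Icc 2 (min i j), #{h ∈ (HSet i j).toFinset | #(per h) = r} := by
  rw [Set.ncard_eq_toFinset_card']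
  apply card_eq_sum_card_fiberwise
  intro h hh
  have hh : h ∈ HSet i j := by simpa using hh
  obtain ⟨a, ha⟩ := per_nonempty hi hh.1
  obtain ⟨q, x, y, hc, h0⟩ := exists_cy hh.1 hh.2.1 ha
  have e1 : q + 1 ≤ i := by simpa using Fintype.card_le_of_embedding x
  have e2 : q + 1 ≤ j := by simpa using Fintype.card_le_of_embedding y
  have e3 : q ≠ 0 := by
    rintro rfl
    apply hh.2.2 (Sum.inl (x 0))
    rw [hc.1.1, hc.1.2]
    congr 2
  simp only [coe_Icc, Set.mem_Icc, hc.card_per]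
  exact ⟨by omega, le_min e1 e2⟩

end cyc
end Uni

/-- Theorem (exact count of connected unicyclic bipartite graphs):
`C(i,j,0) = (1/2) i^{j−1} j^{i−1} Σ_{r=2}^{min(i,j)} ((i)_r (j)_r/(i^r j^r)) (i+j−r)`. -/
theorem statement_10 (i j : ℕ) (hi : 0 < i) (hj : 0 < j) :
    (bipGraphCount i j (i + j) : ℝ) =
      1/2 * (i : ℝ) ^ (j - 1) * (j : ℝ) ^ (i - 1) *
        ∑ r ∈ Finset.Icc 2 (min i j),
          ((Nat.descFactorial i r : ℝ) * (Nat.descFactorial j r : ℝ) /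
              ((i : ℝ) ^ r * (j : ℝ) ^ r)) *
            ((i : ℝ) + (j : ℝ) - (r : ℝ)) := by
  classical
  have h1 := Uni.two_mul_count (j := j) hi
  rw [Uni.card_HSet hi] at h1
  have h2 : (2 : ℝ) * (bipGraphCount i j (i + j) : ℝ) = ∑ r ∈ Finset.Icc 2 (min i j),
      (i : ℝ) ^ (j - 1) * (j : ℝ) ^ (i - 1) *
      (((Nat.descFactorial i r : ℝ) * (Nat.descFactorial j r : ℝ) /
              ((i : ℝ) ^ r * (j : ℝ) ^ r)) * ((i : ℝ) + (j : ℝ) - (r : ℝ))) := by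
    have h3 := congrArg (Nat.cast : ℕ → ℝ) h1
    push_cast at h3
    rw [h3]
    apply Finset.sum_congr rfl
    intro r hr
    rw [Finset.mem_Icc, le_min_iff] at hr
    obtain ⟨hr2, hri, hrj⟩ := hr
    obtain ⟨q, rfl⟩ : ∃ q, r = q + 1 := ⟨r - 1, by omega⟩
    have h4 := congrArg (Nat.cast : ℕ → ℝ) (Uni.card_Hr (i := i) (j := j) (q := q) (by omega))
    obtain ⟨c, rfl⟩ : ∃ c, i = c + (q + 1) := ⟨i - (q + 1), by omega⟩
    obtain ⟨d, rfl⟩ : ∃ d, j = d + (q + 1) := ⟨j - (q + 1), by omega⟩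
    simp only [Nat.add_sub_cancel] at h4
    rw [show d + (q + 1) - 1 = d + q by omega, show c + (q + 1) - 1 = c + q by omega]
    set X := Finset.card {h ∈ (Uni.HSet (c + (q + 1)) (d + (q + 1))).toFinset |
      Finset.card (Uni.per h) = q + 1} with hX
    generalize (c + (q + 1)).descFactorial (q + 1) = D at h4 ⊢
    generalize (d + (q + 1)).descFactorial (q + 1) = E at h4 ⊢
    clear_value X
    push_cast at h4 ⊢
    have p1 : (0 : ℝ) < c + (q + 1) := by positivity
    have p2 : (0 : ℝ) < d + (q + 1) := by positivity
    have p3 : (0 : ℝ) < q + 1 := by positivity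
    obtain ⟨I, hI⟩ : ∃ I : ℝ, I = c + (q + 1) := ⟨_, rfl⟩
    obtain ⟨J, hJ⟩ : ∃ J : ℝ, J = d + (q + 1) := ⟨_, rfl⟩
    rw [← hI, ← hJ] at h4 ⊢
    rw [← hI] at p1
    rw [← hJ] at p2
    have hc : (c : ℝ) = I - (q + 1) := by rw [hI]; ring
    have hd : (d : ℝ) = J - (q + 1) := by rw [hJ]; ring
    rw [hc, hd] at h4
    have h5 : I * J * (X : ℝ) = D * E * (I ^ d * J ^ c * (I + J - (q + 1))) := by
      apply mul_right_cancel₀ p3.ne'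
      linear_combination h4
    apply mul_left_cancel₀ (mul_pos p1 p2).ne'
    rw [h5, pow_add I d q, pow_add J c q, pow_succ I q, pow_succ J q]
    field_simp
  rw [← Finset.mul_sum] at h2
  rw [mul_assoc, mul_assoc, ← mul_assoc (_ ^ _), ← h2]
  ring
end

section
/- Let i = i(n) and j = j(n) be positive integers with i, j → ∞ and 1/2 ≤ i/j ≤ 2. Then the number C(i,j,0) of connected unicyclic bipartite graphs with labelled partition classes of sizes i and j satisfies C(i,j,0) = (1+o(1)) · √(π/8) · √(i+j) · i^{j−1/2} · j^{i−1/2}. -/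
open Filter Real

namespace Unic

/-- Orientation of `G` by a function: each vertex `v` owns the edge `{v, h v}`. -/
def Orients {V : Type*} (G : SimpleGraph V) (h : V → V) : Prop :=
  (∀ v, G.Adj v (h v)) ∧ Function.Injective (fun v => s(v, h v))

/-- In a connected graph each non-root vertex has a neighbour closer to the root. -/
lemma exists_parent {V : Type*} (T : SimpleGraph V) (hT : T.Connected) (r : V) :
    ∃ p : V → V, ∀ x, x ≠ r → T.Adj x (p x) ∧ T.dist (p x) r + 1 = T.dist x r := by
  have : ∀ x, ∃ y, x ≠ r → T.Adj x y ∧ T.dist y r + 1 = T.dist x r := by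
    intro x
    by_cases hx : x = r
    · exact ⟨x, fun h => absurd hx h⟩
    obtain ⟨w, hw⟩ := hT.exists_walk_length_eq_dist x r
    cases w with
    | nil => exact absurd rfl hx
    | @cons _ y _ hadj w' =>
      refine ⟨y, fun _ => ⟨hadj, ?_⟩⟩
      have h1 := SimpleGraph.dist_le w'
      have h2 := hT.dist_triangle (u := x) (v := y) (w := r)
      have h3 : T.dist x y = 1 := SimpleGraph.dist_eq_one_iff_adj.2 hadj
      simp at hw
      omega
  choose p hp using this
  exact ⟨p, hp⟩

lemma parent_spec {V : Type*} [Fintype V] (T : SimpleGraph V) (hT : T.Connected)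
    (hc : T.edgeSet.ncard + 1 = Fintype.card V) (r : V) :
    ∃ p : V → V, (∀ x, x ≠ r → T.Adj x (p x)) ∧
      (∀ x y, x ≠ r → y ≠ r → s(x, p x) = s(y, p y) → x = y) ∧
      ∀ h : V → V, (∀ x, x ≠ r → T.Adj x (h x)) →
        (∀ x y, x ≠ r → y ≠ r → s(x, h x) = s(y, h y) → x = y) →
        ∀ x, x ≠ r → h x = p x := by
  classical
  obtain ⟨p, hp⟩ := exists_parent T hT r
  have hinj : ∀ x y, x ≠ r → y ≠ r → s(x, p x) = s(y, p y) → x = y := by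
    intro x y hx hy hxy
    rw [Sym2.eq_iff] at hxy
    rcases hxy with h | h
    · exact h.1
    · have h1 := (hp x hx).2
      have h2 := (hp y hy).2
      rw [h.2] at h1
      rw [← h.1] at h2
      omega
  have hsurj : ∀ e ∈ T.edgeSet, ∃ x, x ≠ r ∧ s(x, p x) = e := by
    have himg : (fun x => s(x, p x)) '' {x | x ≠ r} = T.edgeSet := by
      apply Set.eq_of_subset_of_ncard_le
      · rintro _ ⟨x, hx, rfl⟩
        exact (hp x hx).1
      · have hio : Set.InjOn (fun x => s(x, p x)) {x | x ≠ r} := fun x hx y hy h => hinj x y hx hy h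
        rw [hio.ncard_image]
        have : {x : V | x ≠ r} = ({r} : Set V)ᶜ := by ext; simp
        rw [this, Set.ncard_compl, Set.ncard_singleton, Nat.card_eq_fintype_card]
        omega
      · exact Set.toFinite _
    intro e he
    rw [← himg] at he
    obtain ⟨x, hx, h⟩ := he
    exact ⟨x, hx, h⟩
  refine ⟨p, fun x hx => (hp x hx).1, hinj, ?_⟩
  intro h hadj hin
  by_contra hcon
  push Not at hcon
  obtain ⟨x, ⟨hxr, hx⟩, hmax⟩ := (Set.toFinite {x | x ≠ r ∧ h x ≠ p x}).exists_maximalFor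
    (fun x => T.dist x r) _ hcon
  obtain ⟨y, hyr, hy⟩ := hsurj s(x, h x) (hadj x hxr)
  rw [Sym2.eq_iff] at hy
  rcases hy with hy | hy
  · rw [← hy.1] at hx
    exact hx (by rw [hy.1]; exact (hy.1 ▸ hy.2).symm)
  · have hyp : h y = p y := by
      by_contra hne
      have h1 := hmax ⟨hyr, hne⟩ (by have := (hp y hyr).2; rw [hy.2] at this; show T.dist x r ≤ T.dist y r; omega)
      have := (hp y hyr).2
      rw [hy.2] at this
      simp only at h1
      omega
    have : x = y := hin x y hxr hyr (by rw [hyp, hy.2, hy.1]; exact Sym2.eq_swap)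
    have h2 := hadj x hxr
    rw [← hy.1, ← this] at h2
    exact h2.ne rfl

/-- A connected graph with as many edges as vertices has exactly two such orientations. -/
lemma ncard_orients {V : Type*} [Fintype V] (G : SimpleGraph V) (hG : G.Connected)
    (hc : G.edgeSet.ncard = Fintype.card V) : {h : V → V | Orients G h}.ncard = 2 := by
  classical
  have hnt : ¬ G.IsAcyclic := by
    intro ha
    have := (SimpleGraph.isTree_iff_connected_and_card.1 ⟨hG, ha⟩).2
    rw [Nat.card_coe_set_eq, hc, Nat.card_eq_fintype_card] at this
    omega
  rw [SimpleGraph.isAcyclic_iff_forall_adj_isBridge] at hnt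
  push Not at hnt
  obtain ⟨u, v, huv, hbr⟩ := hnt
  have hT := hG.connected_delete_edge_of_not_isBridge hbr
  set T := G.deleteEdges {s(u, v)} with hTdef
  have hTadj : ∀ x y, T.Adj x y ↔ G.Adj x y ∧ s(x, y) ≠ s(u, v) := by
    intro x y; rw [hTdef, SimpleGraph.deleteEdges_adj]; simp
  have hTc : T.edgeSet.ncard + 1 = Fintype.card V := by
    rw [hTdef, SimpleGraph.edgeSet_deleteEdges, ← hc]
    exact Set.ncard_sdiff_singleton_add_one huv (Set.toFinite _)
  -- every edge is owned
  have hown : ∀ h, Orients G h → ∃ x, s(x, h x) = s(u, v) := by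
    intro h hh
    have himg : Set.range (fun x => s(x, h x)) = G.edgeSet := by
      apply Set.eq_of_subset_of_ncard_le
      · rintro _ ⟨x, rfl⟩
        exact hh.1 x
      · rw [← Set.image_univ, Set.ncard_image_of_injective _ hh.2, Set.ncard_univ, hc,
          Nat.card_eq_fintype_card]
      · exact Set.toFinite _
    have : s(u, v) ∈ G.edgeSet := huv
    rw [← himg] at this
    exact this
  have key : ∀ r t : V, s(r, t) = s(u, v) → ∃ H : V → V, Orients G H ∧ H r = t ∧
      ∀ h, Orients G h → h r = t → h = H := by
    intro r t hrt
    obtain ⟨p, hp1, hp2, hp3⟩ := parent_spec T hT hTc r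
    have hadj : G.Adj r t := by
      have : s(r, t) ∈ G.edgeSet := hrt ▸ huv
      exact this
    refine ⟨Function.update p r t, ⟨?_, ?_⟩, by simp, ?_⟩
    · intro x
      by_cases hx : x = r
      · subst hx; simpa using hadj
      · rw [Function.update_of_ne hx]
        exact ((hTadj _ _).1 (hp1 x hx)).1
    · intro x y hxy
      simp only at hxy
      by_cases hx : x = r
      · by_cases hy : y = r
        · rw [hx, hy]
        · rw [Function.update_of_ne hy, hx, Function.update_self, hrt] at hxy
          exact absurd hxy.symm ((hTadj _ _).1 (hp1 y hy)).2
      · by_cases hy : y = r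
        · rw [Function.update_of_ne hx, hy, Function.update_self, hrt] at hxy
          exact absurd hxy ((hTadj _ _).1 (hp1 x hx)).2
        · rw [Function.update_of_ne hx, Function.update_of_ne hy] at hxy
          exact hp2 x y hx hy hxy
    · intro h hh hr
      funext x
      by_cases hx : x = r
      · subst hx; simpa using hr
      · rw [Function.update_of_ne hx]
        refine hp3 h ?_ ?_ x hx
        · intro y hy
          rw [hTadj]
          refine ⟨hh.1 y, fun he => hy ?_⟩
          apply hh.2
          simp only
          rw [he, hr, hrt]
        · intro y z _ _ he
          exact hh.2 he
  obtain ⟨H1, h1a, h1b, h1c⟩ := key u v rfl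
  obtain ⟨H2, h2a, h2b, h2c⟩ := key v u Sym2.eq_swap
  have hne : H1 ≠ H2 := by
    intro he
    have : u = v := h1a.2 (by simp only; rw [h1b, he, h2b]; exact Sym2.eq_swap)
    exact huv.ne this
  have : {h : V → V | Orients G h} = {H1, H2} := by
    ext h
    simp only [Set.mem_ofPred_eq, Set.mem_insert_iff, Set.mem_singleton_iff]
    constructor
    · intro hh
      obtain ⟨x, hx⟩ := hown h hh
      rw [Sym2.eq_iff] at hx
      rcases hx with ⟨rfl, hx⟩ | ⟨rfl, hx⟩
      · exact Or.inl (h1c h hh hx)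
      · exact Or.inr (h2c h hh hx)
    · rintro (rfl | rfl) <;> assumption
  rw [this, Set.ncard_pair hne]

end Unic

namespace Unic
open Finset Classical

/-- Prescribing the values of a function on `A` when the weight only depends on the values
off `A`. -/
lemma sum_prescribed {N W : Type*} [Fintype N] [Fintype W] (A : Finset N)
    (y : N → W) (c : (N → W) → ℝ) (hc : ∀ f f', (∀ x, x ∉ A → f x = f' x) → c f = c f') :
    (∑ f : N → W, if (∀ a ∈ A, f a = y a) then c f else 0) * (Fintype.card W : ℝ) ^ A.card
      = ∑ f : N → W, c f := by
  have hfib : ∑ f : N → W, c f = ∑ f : N → W, ∑ f' : N → W,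
      if A.piecewise y f' = f then c f' else 0 := by
    rw [Finset.sum_comm]
    simp
  rw [hfib, Finset.sum_mul]
  refine Finset.sum_congr rfl fun f _ => ?_
  split_ifs with h
  · have h1 : ∀ f' : N → W, A.piecewise y f' = f ↔ ∀ x, x ∉ A → f' x = f x := by
      intro f'
      constructor
      · rintro rfl x hx
        simp [hx]
      · intro hx
        funext x
        by_cases hxA : x ∈ A
        · simp [hxA, h x hxA]
        · simp [hxA, hx x hxA]
    have h2 : ∀ f' : N → W, (if A.piecewise y f' = f then c f' else 0)
        = (if f' ∈ Fintype.piFinset (fun x => if x ∈ A then (univ : Finset W) else {f x})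
            then c f else 0) := by
      intro f'
      have : (A.piecewise y f' = f) ↔
        f' ∈ Fintype.piFinset (fun x => if x ∈ A then (univ : Finset W) else {f x}) := by
        rw [h1, Fintype.mem_piFinset]
        refine forall_congr' fun x => ?_
        by_cases hx : x ∈ A <;> simp [hx]
      by_cases h3 : A.piecewise y f' = f
      · rw [if_pos h3, if_pos (this.1 h3)]
        exact hc _ _ ((h1 f').1 h3)
      · rw [if_neg h3, if_neg (fun h4 => h3 (this.2 h4))]
    rw [Finset.sum_congr rfl fun f' _ => h2 f', ← Finset.sum_filter, Finset.sum_const]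
    rw [Finset.filter_mem_eq_inter, Finset.univ_inter, Fintype.card_piFinset]
    have : ∀ x, #(if x ∈ A then (univ : Finset W) else {f x})
        = if x ∈ A then Fintype.card W else 1 := by
      intro x; split_ifs <;> simp
    simp only [this]
    rw [Finset.prod_ite_mem]
    simp [mul_comm]
  · rw [zero_mul, eq_comm]
    refine Finset.sum_eq_zero fun f' _ => ?_
    rw [if_neg]
    rintro rfl
    exact h fun a ha => by simp [ha]

/-- No nonempty subset of `S` is closed under the partial map `x ↦ o (f x)`. -/
def Good {N W : Type*} (S : Finset N) (o : W → Option N) (f : N → W) : Prop :=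
  ∀ T : Finset N, T ⊆ S → (∀ x ∈ T, ∃ x' ∈ T, o (f x) = some x') → T = ∅

/-- Redirecting everything owned by `v` to the owner of `w`. -/
noncomputable def redir {N W : Type*} (o : W → Option N) (v : N) (w : W) : W → Option N :=
  fun w' => if o w' = some v then o w else o w'

lemma good_insert {N W : Type*} (S : Finset N) (v : N) (hv : v ∉ S) (o : W → Option N)
    (f : N → W) (w : W) (hw : f v = w) :
    Good (insert v S) o f ↔ o w ≠ some v ∧ Good S (redir o v w) f := by
  constructor
  · intro h
    constructor
    · intro ho
      have := h {v} (by simp) (by simp [hw, ho])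
      simp at this
    · intro T hT hcl
      by_cases hex : ∃ x ∈ T, o (f x) = some v
      · obtain ⟨x0, hx0, hox⟩ := hex
        have := h (insert v T) (Finset.insert_subset_insert _ hT) ?_
        · simp at this
        · intro x hx
          rw [Finset.mem_insert] at hx
          rcases hx with rfl | hx
          · obtain ⟨x', hx', h'⟩ := hcl x0 hx0
            simp only [redir, hox, if_true] at h'
            exact ⟨x', Finset.mem_insert_of_mem hx', by rw [hw, h']⟩
          · obtain ⟨x', hx', h'⟩ := hcl x hx
            by_cases ho : o (f x) = some v
            · exact ⟨v, Finset.mem_insert_self _ _, ho⟩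
            · simp only [redir, if_neg ho] at h'
              exact ⟨x', Finset.mem_insert_of_mem hx', h'⟩
      · push Not at hex
        refine h T (hT.trans (Finset.subset_insert _ _)) fun x hx => ?_
        obtain ⟨x', hx', h'⟩ := hcl x hx
        simp only [redir, if_neg (hex x hx)] at h'
        exact ⟨x', hx', h'⟩
  · rintro ⟨ho, h⟩ T hT hcl
    have h1 : T.erase v = ∅ := by
      apply h
      · intro x hx
        rw [Finset.mem_erase] at hx
        exact Finset.mem_of_mem_insert_of_ne (hT hx.2) hx.1
      · intro x hx
        rw [Finset.mem_erase] at hx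
        obtain ⟨x', hx', h'⟩ := hcl x hx.2
        by_cases hxv : x' = v
        · subst hxv
          obtain ⟨x'', hx'', h''⟩ := hcl x' hx'
          refine ⟨x'', ?_, ?_⟩
          · rw [Finset.mem_erase]
            refine ⟨?_, hx''⟩
            rintro rfl
            exact ho (hw ▸ h'')
          · simp only [redir, h', if_true]
            rw [← hw, h'']
        · refine ⟨x', Finset.mem_erase.2 ⟨hxv, hx'⟩, ?_⟩
          simp only [redir]
          rw [h', if_neg]
          simpa using hxv
    by_contra hne
    have hTv : T = {v} := by
      rw [Finset.erase_eq_empty_iff] at h1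
      exact h1.resolve_left hne
    obtain ⟨x', hx', h'⟩ := hcl v (by simp [hTv])
    rw [hTv, Finset.mem_singleton] at hx'
    subst hx'
    exact ho (hw ▸ h')

lemma good_congr {N W : Type*} (S : Finset N) (o o' : W → Option N) (f f' : N → W)
    (h : ∀ x ∈ S, o (f x) = o' (f' x)) : Good S o f ↔ Good S o' f' := by
  unfold Good
  refine forall_congr' fun T => ?_
  constructor
  · intro hT hTS hcl
    exact hT hTS fun x hx => by rw [h x (hTS hx)]; exact hcl x hx
  · intro hT hTS hcl
    exact hT hTS fun x hx => by rw [← h x (hTS hx)]; exact hcl x hx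

/-- Indicator of `w` not being owned by `S`. -/
noncomputable def rootI {N W : Type*} (S : Finset N) (o : W → Option N) (w : W) : ℝ :=
  if ∀ x ∈ S, o w ≠ some x then 1 else 0

/-- Number of elements not owned by `S`. -/
noncomputable def rootW {N W : Type*} [Fintype W] (S : Finset N) (o : W → Option N) : ℝ :=
  ∑ w : W, rootI S o w

lemma rootW_redir {N W : Type*} [Fintype W] (S : Finset N) (v : N)
    (o : W → Option N) (w : W) :
    (if o w ≠ some v then rootW S (redir o v w) else 0) =
      rootW (insert v S) o * (if o w ≠ some v then 1 else 0) +
      (∑ w' : W, if o w' = some v then (1:ℝ) else 0) *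
        rootI (insert v S) o w := by
  by_cases ho : o w = some v
  · simp [ho, rootI]
  · rw [if_pos ho, if_pos ho, mul_one, rootW, rootW, Finset.sum_mul, ← Finset.sum_add_distrib]
    refine Finset.sum_congr rfl fun w' _ => ?_
    by_cases hw' : o w' = some v
    · simp [redir, rootI, hw', ho]
    · simp [redir, rootI, hw']

theorem burtin {N W : Type*} [Fintype N] [Fintype W] (S : Finset N) :
    ∀ o : W → Option N,
    (∑ f : N → W, if Good S o f then (1:ℝ) else 0) * Fintype.card W
      = (Fintype.card W : ℝ) ^ Fintype.card N * rootW S o := by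
  rcases isEmpty_or_nonempty W with hW | hW
  · intro o
    simp [rootW]
  have hW0 : (Fintype.card W : ℝ) ≠ 0 := by
    exact_mod_cast Fintype.card_ne_zero
  induction S using Finset.induction_on with
  | empty =>
    intro o
    have : ∀ f : N → W, Good ∅ o f := fun f T hT _ => Finset.subset_empty.1 hT
    simp [this, rootW, rootI]
  | insert v S hv ih =>
    intro o
    have hstep : ∀ w, (∑ f : N → W, if f v = w then (if Good S (redir o v w) f then (1:ℝ) else 0) else 0)
        * Fintype.card W * Fintype.card W =
        (Fintype.card W : ℝ) ^ Fintype.card N * rootW S (redir o v w) := by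
      intro w
      rw [← ih]
      congr 1
      have := sum_prescribed {v} (fun _ => w)
        (fun f : N → W => if Good S (redir o v w) f then (1:ℝ) else 0) (by
          intro f f' hff
          have := good_congr S (redir o v w) (redir o v w) f f' (by
            intro x hx
            rw [hff x]
            rw [Finset.mem_singleton]
            rintro rfl; exact hv hx)
          simp only [this])
      simpa using this
    have hsplit : (∑ f : N → W, if Good (insert v S) o f then (1:ℝ) else 0) =
        ∑ w : W, if o w ≠ some v then
          (∑ f : N → W, if f v = w then (if Good S (redir o v w) f then (1:ℝ) else 0) else 0) else 0 := by
      have : ∀ w : W, (if o w ≠ some v then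
          (∑ f : N → W, if f v = w then (if Good S (redir o v w) f then (1:ℝ) else 0) else 0) else 0)
          = ∑ f : N → W, if f v = w then (if Good (insert v S) o f then (1:ℝ) else 0) else 0 := by
        intro w
        by_cases ho : o w = some v
        · rw [if_neg (by simpa using ho), eq_comm]
          refine Finset.sum_eq_zero fun f _ => ?_
          split_ifs with h1 h2
          · exact absurd ho ((good_insert S v hv o f w h1).1 h2).1
          · rfl
          · rfl
        · rw [if_pos ho]
          refine Finset.sum_congr rfl fun f _ => ?_
          split_ifs with h1 h2 h3 h3
          · rfl
          · exact absurd ((good_insert S v hv o f w h1).2 ⟨ho, h2⟩) h3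
          · exact absurd ((good_insert S v hv o f w h1).1 h3).2 h2
          · rfl
          · rfl
      simp only [this]
      rw [Finset.sum_comm]
      simp
    apply mul_right_cancel₀ hW0
    rw [hsplit, Finset.sum_mul, Finset.sum_mul]
    have : ∀ w : W, (if o w ≠ some v then
          (∑ f : N → W, if f v = w then (if Good S (redir o v w) f then (1:ℝ) else 0) else 0) else 0)
          * (Fintype.card W : ℝ) * Fintype.card W
        = (Fintype.card W : ℝ) ^ Fintype.card N * (if o w ≠ some v then rootW S (redir o v w) else 0) := by
      intro w
      split_ifs
      · exact hstep w
      · simp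
    rw [Finset.sum_congr rfl fun w _ => this w, ← Finset.mul_sum]
    rw [Finset.sum_congr rfl fun w _ => rootW_redir S v o w, Finset.sum_add_distrib,
      ← Finset.mul_sum, ← Finset.mul_sum]
    have e1 : (∑ w : W, rootI (insert v S) o w) = rootW (insert v S) o := rfl
    have e2 : (∑ w : W, if o w ≠ some v then (1:ℝ) else 0) + (∑ w : W, if o w = some v then (1:ℝ) else 0)
        = Fintype.card W := by
      rw [← Finset.sum_add_distrib]
      rw [Finset.sum_congr rfl (g := fun _ => (1:ℝ)) (by intro w _; by_cases h : o w = some v <;> simp [h])]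
      simp
    rw [e1, ← e2]
    ring


/-- Ownership map: elements of `B` are roots, the others are owned by their image. -/
noncomputable def ownr {α β : Type*} (g : β → α) (B : Finset β) : β → Option α :=
  fun y => if y ∈ B then none else some (g y)

lemma rootW_ownr {α β : Type*} [Fintype α] [Fintype β] (A : Finset α) (B : Finset β) (g : β → α) :
    rootW Aᶜ (ownr g B) = ∑ w : β, if w ∈ B ∨ g w ∈ A then (1:ℝ) else 0 := by
  unfold rootW
  refine Finset.sum_congr rfl fun w _ => ?_
  unfold rootI
  congr 1
  rw [eq_iff_iff]
  by_cases hw : w ∈ B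
  · simp [ownr, hw]
  · simp only [ownr, hw, if_false, false_or, Finset.mem_compl]
    constructor
    · intro h
      by_contra h'
      exact h _ h' rfl
    · intro h x hx he
      rw [Option.some.injEq] at he
      exact hx (he ▸ h)

lemma forest_count {α β : Type*} [Fintype α] [Fintype β] (A : Finset α) (B : Finset β) :
    (∑ g : β → α, ∑ f : α → β, if Good Aᶜ (ownr g B) f then (1:ℝ) else 0) *
      (Fintype.card α * Fintype.card β) =
    (Fintype.card β : ℝ) ^ Fintype.card α * (Fintype.card α : ℝ) ^ Fintype.card β *
      (#A * Fintype.card β + #B * Fintype.card α - #A * #B) := by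
  have h1 : ∀ w : β, (∑ g : β → α, if w ∈ B ∨ g w ∈ A then (1:ℝ) else 0) * Fintype.card α =
      (Fintype.card α : ℝ) ^ Fintype.card β * (#A + (if w ∈ B then (Fintype.card α - #A : ℝ) else 0)) := by
    intro w
    by_cases hw : w ∈ B
    · simp [hw]
    · have h2 : ∀ a : α, (∑ g : β → α, if g w = a then (1:ℝ) else 0) * Fintype.card α =
        (Fintype.card α : ℝ) ^ Fintype.card β := by
        intro a
        have := sum_prescribed {w} (fun _ => a) (fun g : β → α => (1:ℝ)) (fun _ _ _ => rfl)
        simpa using this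
      have h3 : ∀ g : β → α, (if g w ∈ A then (1:ℝ) else 0) = ∑ a ∈ A, if g w = a then 1 else 0 := by
        intro g; simp
      simp only [hw, false_or, if_false, add_zero, h3]
      rw [Finset.sum_comm, Finset.sum_mul, Finset.sum_congr rfl fun a _ => h2 a]
      simp [mul_comm]
  calc _ = (∑ g : β → α, (∑ f : α → β, if Good Aᶜ (ownr g B) f then (1:ℝ) else 0) * Fintype.card β) * Fintype.card α := by
        rw [← Finset.sum_mul]; ring
    _ = (∑ g : β → α, (Fintype.card β : ℝ) ^ Fintype.card α * ∑ w : β, if w ∈ B ∨ g w ∈ A then (1:ℝ) else 0) * Fintype.card α := by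
        congr 1
        refine Finset.sum_congr rfl fun g _ => ?_
        rw [burtin, rootW_ownr]
    _ = (Fintype.card β : ℝ) ^ Fintype.card α * ∑ w : β, (∑ g : β → α, if w ∈ B ∨ g w ∈ A then (1:ℝ) else 0) * Fintype.card α := by
        rw [← Finset.mul_sum, Finset.sum_comm, mul_assoc, Finset.sum_mul]
    _ = _ := by
        rw [Finset.sum_congr rfl fun w _ => h1 w, ← Finset.mul_sum, Finset.sum_add_distrib]
        simp
        ring

/-- `(x, y)` runs once around the cycle of `(f, g)`. -/
def IsTup {α β : Type*} [Fintype α] {m : ℕ} (f : α → β) (g : β → α) (x : Fin (m+1) ↪ α)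
    (y : Fin (m+1) ↪ β) : Prop :=
  (∀ t, f (x t) = y t) ∧ (∀ t, g (y t) = x (t+1)) ∧
        Good (univ.map x)ᶜ (ownr g (univ.map y)) f

lemma tuple_count {α β : Type*} [Fintype α] [Fintype β] {m : ℕ} (x : Fin (m+1) ↪ α)
    (y : Fin (m+1) ↪ β) :
    (∑ g : β → α, ∑ f : α → β, if IsTup f g x y then (1:ℝ) else 0) *
      (Fintype.card α * Fintype.card β : ℝ) ^ (m+1) =
    ∑ g : β → α, ∑ f : α → β, if Good (univ.map x)ᶜ (ownr g (univ.map y)) f then (1:ℝ) else 0 := by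
  have hf : ∀ g : β → α, (∑ f : α → β, if (∀ t, f (x t) = y t) then
        (if Good (univ.map x)ᶜ (ownr g (univ.map y)) f then (1:ℝ) else 0) else 0) *
        (Fintype.card β : ℝ) ^ (m+1) =
        ∑ f : α → β, if Good (univ.map x)ᶜ (ownr g (univ.map y)) f then (1:ℝ) else 0 := by
    intro g
    have := sum_prescribed (univ.map x) (fun a => y (Function.invFun x a))
      (fun f : α → β => if Good (univ.map x)ᶜ (ownr g (univ.map y)) f then (1:ℝ) else 0) (by
        intro f f' hff
        have := good_congr (univ.map x)ᶜ (ownr g (univ.map y)) (ownr g (univ.map y)) f f' (by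
          intro a ha
          rw [hff a (Finset.mem_compl.1 ha)])
        simp only [this])
    rw [← this, Finset.card_map, Finset.card_univ, Fintype.card_fin]
    congr 1
    refine Finset.sum_congr rfl fun f _ => ?_
    congr 1
    rw [eq_iff_iff]
    simp [Function.leftInverse_invFun x.injective _]
  have hg := sum_prescribed (univ.map y) (fun b => x (Function.invFun y b + 1))
      (fun g : β → α => (∑ f : α → β, if (∀ t, f (x t) = y t) then
        (if Good (univ.map x)ᶜ (ownr g (univ.map y)) f then (1:ℝ) else 0) else 0)) (by
        intro g g' hgg
        refine Finset.sum_congr rfl fun f _ => ?_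
        have := good_congr (univ.map x)ᶜ (ownr g (univ.map y)) (ownr g' (univ.map y)) f f (by
          intro a ha
          unfold ownr
          split_ifs with h
          · rfl
          · rw [hgg _ h])
        simp only [this])
  simp only [← hf]
  rw [← Finset.sum_mul, ← hg, Finset.card_map, Finset.card_univ, Fintype.card_fin, mul_assoc,
    ← mul_pow]
  congr 1
  refine Finset.sum_congr rfl fun g _ => ?_
  have : (∀ a ∈ univ.map y, g a = x (Function.invFun y a + 1)) ↔ ∀ t, g (y t) = x (t+1) := by
    simp [Function.leftInverse_invFun y.injective _]
  split_ifs with h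
  · rw [this] at h
    refine Finset.sum_congr rfl fun f _ => ?_
    by_cases h1 : ∀ t, f (x t) = y t
    · simp [IsTup, h1, h]
    · simp [IsTup, h1]
  · rw [this] at h
    simp [IsTup, h]

/-- The left vertices lying on the unique cycle (if all orbits end in the same cycle). -/
noncomputable def Cyc {α β : Type*} [Fintype α] (f : α → β) (g : β → α) : Finset α :=
  univ.filter fun a => ∀ a', ∃ n, (g ∘ f)^[n] a' = a

lemma mem_Cyc {α β : Type*} [Fintype α] (f : α → β) (g : β → α) (a : α) :
    a ∈ Cyc f g ↔ ∀ a', ∃ n, (g ∘ f)^[n] a' = a := by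
  simp [Cyc]

lemma good_iff {α β : Type*} [Fintype α] (f : α → β) (g : β → α) (A : Finset α) (B : Finset β)
    (h : ∀ b ∈ B, g b ∈ A) :
    Good Aᶜ (ownr g B) f ↔ ∀ a', ∃ n, (g ∘ f)^[n] a' ∈ A := by
  constructor
  · intro hG
    by_contra hcon
    push Not at hcon
    obtain ⟨a0, h0⟩ := hcon
    have := hG (univ.filter fun a => ∀ n, (g ∘ f)^[n] a ∉ A) ?_ ?_
    · have h2 : a0 ∈ (univ.filter fun a => ∀ n, (g ∘ f)^[n] a ∉ A) := by simpa using h0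
      rw [this] at h2
      simp at h2
    · intro a ha
      rw [Finset.mem_filter] at ha
      simpa using ha.2 0
    · intro a ha
      rw [Finset.mem_filter] at ha
      have h1 : f a ∉ B := fun hb => ha.2 1 (h _ hb)
      refine ⟨g (f a), ?_, by simp [ownr, h1]⟩
      rw [Finset.mem_filter]
      refine ⟨Finset.mem_univ _, fun n => ?_⟩
      exact ha.2 (n+1)
  · intro hr T hT hcl
    by_contra hne
    obtain ⟨a, ha⟩ := Finset.nonempty_iff_ne_empty.2 hne
    have : ∀ n, (g ∘ f)^[n] a ∈ T := by
      intro n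
      induction n with
      | zero => exact ha
      | succ n ih =>
        rw [Function.iterate_succ_apply']
        obtain ⟨x', hx', h'⟩ := hcl _ ih
        unfold ownr at h'
        split_ifs at h'
        rw [Option.some.injEq] at h'
        rw [Function.comp_apply, h']
        exact hx'
    obtain ⟨n, hn⟩ := hr a
    exact (Finset.mem_compl.1 (hT (this n))) hn

open Fin.CommRing in
lemma isTup_iter {α β : Type*} [Fintype α] {m : ℕ} {f : α → β} {g : β → α} {x : Fin (m+1) ↪ α}
    {y : Fin (m+1) ↪ β} (h : IsTup f g x y) (s : Fin (m+1)) (n : ℕ) :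
    (g ∘ f)^[n] (x s) = x (s + (n : Fin (m+1))) := by
  induction n with
  | zero => simp
  | succ n ih =>
    rw [Function.iterate_succ_apply', ih, Function.comp_apply, h.1, h.2.1]
    push_cast
    rw [add_assoc]

open Fin.CommRing in
lemma isTup_cyc {α β : Type*} [Fintype α] {m : ℕ} {f : α → β} {g : β → α} {x : Fin (m+1) ↪ α}
    {y : Fin (m+1) ↪ β} (h : IsTup f g x y) : Cyc f g = univ.map x := by
  have hr := (good_iff f g (univ.map x) (univ.map y) (by
    intro b hb
    obtain ⟨t, _, rfl⟩ := Finset.mem_map.1 hb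
    rw [h.2.1]; simp)).1 h.2.2
  ext a
  rw [mem_Cyc]
  constructor
  · intro ha
    obtain ⟨n, hn⟩ := ha (x 0)
    rw [isTup_iter h] at hn
    rw [← hn]; simp
  · intro ha a'
    obtain ⟨t, _, rfl⟩ := Finset.mem_map.1 ha
    obtain ⟨n, hn⟩ := hr a'
    obtain ⟨s, _, hs⟩ := Finset.mem_map.1 hn
    refine ⟨((t - s : Fin (m+1)) : ℕ) + n, ?_⟩
    rw [Function.iterate_add_apply, ← hs, isTup_iter h]
    simp

lemma isTup_exists {α β : Type*} [Fintype α] {m : ℕ} {f : α → β} {g : β → α} {a : α}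
    (ha : a ∈ Cyc f g) (hm : Function.minimalPeriod (g ∘ f) a = m + 1) :
    ∃ (x : Fin (m+1) ↪ α) (y : Fin (m+1) ↪ β), IsTup f g x y ∧ x 0 = a := by
  have hx : Function.Injective (fun t : Fin (m+1) => (g ∘ f)^[(t:ℕ)] a) := by
    intro s t hst
    have := Function.iterate_injOn_Iio_minimalPeriod (f := g ∘ f) (x := a)
      (by rw [hm]; exact s.2) (by rw [hm]; exact t.2) hst
    exact Fin.ext this
  have hstep : ∀ t : Fin (m+1), g (f ((g ∘ f)^[(t:ℕ)] a)) = (g ∘ f)^[((t+1 : Fin (m+1)):ℕ)] a := by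
    intro t
    have h1 : ((t+1 : Fin (m+1)):ℕ) = ((t:ℕ)+1) % Function.minimalPeriod (g ∘ f) a := by
      rw [hm, Fin.val_add]
      simp
    rw [h1, Function.iterate_mod_minimalPeriod_eq, Function.iterate_succ_apply']
    rfl
  have hy : Function.Injective (fun t : Fin (m+1) => f ((g ∘ f)^[(t:ℕ)] a)) := by
    intro s t hst
    have h1 := congrArg g hst
    simp only at h1
    rw [hstep, hstep] at h1
    exact add_right_cancel (hx h1)
  refine ⟨⟨_, hx⟩, ⟨_, hy⟩, ⟨fun t => rfl, hstep, ?_⟩, rfl⟩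
  rw [good_iff]
  · intro a'
    obtain ⟨n, hn⟩ := (mem_Cyc f g a).1 ha a'
    refine ⟨n, ?_⟩
    rw [hn, Finset.mem_map]
    exact ⟨0, Finset.mem_univ _, rfl⟩
  · intro b hb
    obtain ⟨t, _, rfl⟩ := Finset.mem_map.1 hb
    rw [Finset.mem_map]
    exact ⟨t+1, Finset.mem_univ _, (hstep t).symm⟩

open Fin.CommRing in
lemma tup_sum {α β : Type*} [Fintype α] [Fintype β] (m : ℕ) (f : α → β) (g : β → α) :
    (∑ x : Fin (m+1) ↪ α, ∑ y : Fin (m+1) ↪ β, if IsTup f g x y then (1:ℝ) else 0) =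
      if #(Cyc f g) = m + 1 then (m+1 : ℝ) else 0 := by
  rw [← Fintype.sum_prod_type' (f := fun x y => if IsTup f g x y then (1:ℝ) else 0),
    ← Finset.sum_filter, Finset.sum_const, nsmul_eq_mul, mul_one]
  split_ifs with hc
  · have hc' : (m + 1 : ℝ) = (#(Cyc f g) : ℝ) := by rw [hc]; push_cast; rfl
    rw [hc']
    norm_cast
    refine Finset.card_bij (fun z _ => z.1 0) ?_ ?_ ?_
    · rintro ⟨x, y⟩ hz
      have hz := (Finset.mem_filter.1 hz).2
      rw [isTup_cyc hz]; simp
    · rintro ⟨x, y⟩ hz ⟨x', y'⟩ hz' h0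
      have hz := (Finset.mem_filter.1 hz).2
      have hz' := (Finset.mem_filter.1 hz').2
      simp only at hz hz' h0
      have hxx : x = x' := by
        ext t
        have h1 := isTup_iter hz 0 (t:ℕ)
        have h2 := isTup_iter hz' 0 (t:ℕ)
        rw [h0, h2] at h1
        simpa using h1.symm
      subst hxx
      congr 1
      ext t
      rw [← hz.1, ← hz'.1]
    · intro a ha
      have hper : 0 < Function.minimalPeriod (g ∘ f) a := by
        obtain ⟨n, hn⟩ := (mem_Cyc f g a).1 ha ((g ∘ f) a)
        apply Function.minimalPeriod_pos_of_mem_periodicPts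
        exact ⟨n+1, Nat.succ_pos _, hn⟩
      obtain ⟨d, hd⟩ := Nat.exists_eq_succ_of_ne_zero hper.ne'
      obtain ⟨x, y, hxy, h0⟩ := isTup_exists ha hd
      have := isTup_cyc hxy
      rw [this] at hc
      simp at hc
      subst hc
      exact ⟨(x, y), by simpa using hxy, h0⟩
  · rw [Nat.cast_eq_zero, Finset.card_eq_zero, Finset.filter_eq_empty_iff]
    rintro ⟨x, y⟩ _ h
    rw [isTup_cyc h] at hc
    simp at hc

lemma cyc_count {α β : Type*} [Fintype α] [Fintype β] [Nonempty α] [Nonempty β] (m : ℕ) :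
    (∑ g : β → α, ∑ f : α → β, if #(Cyc f g) = m + 1 then (1 : ℝ) else 0) *
      (Fintype.card α * Fintype.card β : ℝ) ^ (m+1) * (Fintype.card α * Fintype.card β) =
    ((Fintype.card α).descFactorial (m+1)) * ((Fintype.card β).descFactorial (m+1)) *
     ((Fintype.card β : ℝ) ^ Fintype.card α * (Fintype.card α : ℝ) ^ Fintype.card β) *
      (Fintype.card α + Fintype.card β - (m+1)) := by
  have hk : ((m:ℝ)+1) ≠ 0 := by positivity
  apply mul_left_cancel₀ hk
  have h1 : ((m:ℝ)+1) * (∑ g : β → α, ∑ f : α → β, if #(Cyc f g) = m + 1 then (1 : ℝ) else 0) =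
      ∑ x : Fin (m+1) ↪ α, ∑ y : Fin (m+1) ↪ β, ∑ g : β → α, ∑ f : α → β, 
        if IsTup f g x y then (1:ℝ) else 0 := by
    calc _ = ∑ g : β → α, ∑ f : α → β, ∑ x : Fin (m+1) ↪ α, ∑ y : Fin (m+1) ↪ β, if IsTup f g x y then (1:ℝ) else 0 := by
          simp only [tup_sum, Finset.mul_sum]
          simp
      _ = ∑ g : β → α, ∑ x : Fin (m+1) ↪ α, ∑ f : α → β, ∑ y : Fin (m+1) ↪ β, if IsTup f g x y then (1:ℝ) else 0 :=
          Finset.sum_congr rfl fun g _ => Finset.sum_comm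
      _ = ∑ x : Fin (m+1) ↪ α, ∑ g : β → α, ∑ f : α → β, ∑ y : Fin (m+1) ↪ β, if IsTup f g x y then (1:ℝ) else 0 :=
          Finset.sum_comm
      _ = ∑ x : Fin (m+1) ↪ α, ∑ g : β → α, ∑ y : Fin (m+1) ↪ β, ∑ f : α → β, if IsTup f g x y then (1:ℝ) else 0 :=
          Finset.sum_congr rfl fun g _ => Finset.sum_congr rfl fun g _ => Finset.sum_comm
      _ = _ := Finset.sum_congr rfl fun g _ => Finset.sum_comm
  have h2 : ∀ (x : Fin (m+1) ↪ α) (y : Fin (m+1) ↪ β), (∑ g : β → α, ∑ f : α → β, 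
        if IsTup f g x y then (1:ℝ) else 0) * (Fintype.card α * Fintype.card β : ℝ) ^ (m+1) *
        (Fintype.card α * Fintype.card β) = 
     (Fintype.card β : ℝ) ^ Fintype.card α * (Fintype.card α : ℝ) ^ Fintype.card β *
      ((m+1) * Fintype.card β + (m+1) * Fintype.card α - (m+1) * (m+1)) := by
    intro x y
    have := tuple_count x y
    rw [this, forest_count]
    simp
  rw [← mul_assoc, ← mul_assoc (_ + _), h1]
  simp only [Finset.sum_mul]
  simp only [Finset.sum_mul] at h2
  simp only [h2]
  simp only [Finset.sum_const, Finset.card_univ, Fintype.card_embedding_eq, Fintype.card_fin,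
    nsmul_eq_mul]
  ring


/-- The side-swapping self-map given by `f` and `g`. -/
def toH {α β : Type*} (p : (α → β) × (β → α)) : α ⊕ β → α ⊕ β :=
  Sum.elim (fun a => Sum.inr (p.1 a)) (fun b => Sum.inl (p.2 b))

/-- The bipartite graph of the pair `(f, g)`. -/
def Gr {α β : Type*} (p : (α → β) × (β → α)) : SimpleGraph (α ⊕ β) where
  Adj v w := toH p v = w ∨ toH p w = v
  symm := ⟨fun _ _ h => h.symm⟩
  loopless := ⟨by rintro (a | b) h <;> simp [toH] at h⟩

lemma toH_ne {α β : Type*} (p : (α → β) × (β → α)) (v : α ⊕ β) : v ≠ toH p v := by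
  rcases v with a | b <;> simp [toH]

lemma Gr_adj {α β : Type*} (p : (α → β) × (β → α)) (v : α ⊕ β) : (Gr p).Adj v (toH p v) :=
  Or.inl rfl

lemma cyc_step {α β : Type*} [Fintype α] (p : (α → β) × (β → α)) (a : α) (ha : a ∈ Cyc p.1 p.2) :
    p.2 (p.1 a) ∈ Cyc p.1 p.2 := by
  rw [mem_Cyc] at ha ⊢
  intro a'
  obtain ⟨n, hn⟩ := ha a'
  refine ⟨n+1, ?_⟩
  rw [Function.iterate_succ_apply', hn]
  rfl

lemma no_two_cycle {α β : Type*} [Fintype α] (p : (α → β) × (β → α)) (hp : 2 ≤ #(Cyc p.1 p.2))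
    (a : α) : p.2 (p.1 a) ≠ a := by
  intro h
  have hit : ∀ n, (p.2 ∘ p.1)^[n] a = a := fun n => Function.iterate_fixed h n
  have : Cyc p.1 p.2 ⊆ {a} := by
    intro c hc
    obtain ⟨n, hn⟩ := (mem_Cyc _ _ _).1 hc a
    rw [hit] at hn
    simp [hn]
  have := Finset.card_le_card this
  simp at this
  omega

lemma orients_Gr {α β : Type*} [Fintype α] (p : (α → β) × (β → α)) (hp : 2 ≤ #(Cyc p.1 p.2)) :
    Orients (Gr p) (toH p) := by
  refine ⟨Gr_adj p, ?_⟩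
  intro v w h
  simp only [Sym2.eq_iff] at h
  rcases h with h | ⟨h1, h2⟩
  · exact h.1
  · exfalso
    rcases w with a | b
    · rw [h1] at h2
      simp only [toH, Sum.elim_inl, Sum.elim_inr, Sum.inl.injEq] at h2
      exact no_two_cycle p hp a h2
    · rw [h1] at h2
      simp only [toH, Sum.elim_inl, Sum.elim_inr, Sum.inr.injEq] at h2
      exact no_two_cycle p hp (p.2 b) (by rw [h2])

lemma Gr_connected {α β : Type*} [Fintype α] (p : (α → β) × (β → α)) (hp : 2 ≤ #(Cyc p.1 p.2)) :
    (Gr p).Connected := by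
  obtain ⟨a, ha⟩ : (Cyc p.1 p.2).Nonempty := by
    rw [← Finset.card_pos]; omega
  rw [mem_Cyc] at ha
  have h1 : ∀ n a', (Gr p).Reachable (Sum.inl a') (Sum.inl ((p.2 ∘ p.1)^[n] a')) := by
    intro n
    induction n with
    | zero => intro a'; exact SimpleGraph.Reachable.refl _
    | succ n ih =>
      intro a'
      rw [Function.iterate_succ_apply]
      refine SimpleGraph.Reachable.trans ?_ (ih _)
      exact (SimpleGraph.Adj.reachable (Gr_adj p (Sum.inl a'))).trans
        (SimpleGraph.Adj.reachable (Gr_adj p (Sum.inr (p.1 a'))))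
  have h2 : ∀ a', (Gr p).Reachable (Sum.inl a') (Sum.inl a) := by
    intro a'
    obtain ⟨n, hn⟩ := ha a'
    have := h1 n a'
    rwa [hn] at this
  rw [SimpleGraph.connected_iff_exists_forall_reachable]
  refine ⟨Sum.inl a, ?_⟩
  rintro (a' | b)
  · exact (h2 a').symm
  · exact ((SimpleGraph.Adj.reachable (Gr_adj p (Sum.inr b))).trans (h2 (p.2 b))).symm

lemma orients_image {V : Type*} [Fintype V] (G : SimpleGraph V) (h : V → V) (ho : Orients G h)
    (hc : G.edgeSet.ncard = Fintype.card V) : Set.range (fun x => s(x, h x)) = G.edgeSet := by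
  apply Set.eq_of_subset_of_ncard_le
  · rintro _ ⟨x, rfl⟩
    exact ho.1 x
  · rw [← Set.image_univ, Set.ncard_image_of_injective _ ho.2, Set.ncard_univ, hc,
      Nat.card_eq_fintype_card]
  · exact Set.toFinite _

lemma Gr_ncard {α β : Type*} [Fintype α] [Fintype β] (p : (α → β) × (β → α))
    (hp : 2 ≤ #(Cyc p.1 p.2)) : (Gr p).edgeSet.ncard = Fintype.card α + Fintype.card β := by
  have : (Gr p).edgeSet = Set.range (fun x => s(x, toH p x)) := by
    ext e
    induction e using Sym2.ind with
    | _ v w =>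
      rw [SimpleGraph.mem_edgeSet]
      constructor
      · rintro (h | h)
        · exact ⟨v, by simp only [h]⟩
        · exact ⟨w, by simp only [h]; exact Sym2.eq_swap⟩
      · rintro ⟨x, hx⟩
        simp only [Sym2.eq_iff] at hx
        rcases hx with ⟨rfl, rfl⟩ | ⟨rfl, rfl⟩
        · exact Or.inl rfl
        · exact Or.inr rfl
  rw [this, ← Set.image_univ, Set.ncard_image_of_injective _ (orients_Gr p hp).2, Set.ncard_univ,
    Nat.card_eq_fintype_card, Fintype.card_sum]

lemma cyc_of_orients {α β : Type*} [Fintype α] [Fintype β] [Nonempty α]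
    (p : (α → β) × (β → α)) (hc : (Gr p).Connected) (ho : Orients (Gr p) (toH p)) :
    2 ≤ #(Cyc p.1 p.2) := by
  have hno : ∀ a, p.2 (p.1 a) ≠ a := by
    intro a h
    have := ho.2 (a₁ := Sum.inl a) (a₂ := Sum.inr (p.1 a)) (by
      simp only [toH, Sum.elim_inl, Sum.elim_inr, h]; exact Sym2.eq_swap)
    simp at this
  obtain ⟨a0⟩ := ‹Nonempty α›
  -- a periodic point
  obtain ⟨a, ha⟩ : ∃ a, ∃ n, 0 < n ∧ (p.2 ∘ p.1)^[n] a = a := by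
    obtain ⟨s, t, hst, he⟩ := Finite.exists_ne_map_eq_of_infinite (fun n : ℕ => (p.2 ∘ p.1)^[n] a0)
    wlog hlt : s < t generalizing s t
    · exact this t s hst.symm he.symm (by omega)
    refine ⟨(p.2 ∘ p.1)^[s] a0, t - s, by omega, ?_⟩
    rw [← Function.iterate_add_apply, Nat.sub_add_cancel hlt.le]
    exact he.symm
  obtain ⟨n, hn0, hn⟩ := ha
  let P : α → Prop := fun c => ∃ n, (p.2 ∘ p.1)^[n] c = a
  have hP : ∀ c, P c ↔ P (p.2 (p.1 c)) := by
    intro c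
    constructor
    · rintro ⟨k, hk⟩
      cases k with
      | zero =>
        refine ⟨n - 1, ?_⟩
        have hk : c = a := hk
        subst hk
        obtain ⟨n, rfl⟩ := Nat.exists_eq_succ_of_ne_zero hn0.ne'
        exact hn
      | succ k => exact ⟨k, hk⟩
    · rintro ⟨k, hk⟩
      exact ⟨k+1, hk⟩
  let Q : α ⊕ β → Prop := Sum.elim P (fun b => P (p.2 b))
  have hQ : ∀ v, Q v ↔ Q (toH p v) := by
    rintro (c | b)
    · exact hP c
    · exact Iff.rfl
  have hQadj : ∀ v w, (Gr p).Adj v w → (Q v ↔ Q w) := by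
    rintro v w (h | h)
    · rw [← h]; exact hQ v
    · rw [← h]; exact (hQ w).symm
  have hwalk : ∀ v w, (Gr p).Walk v w → (Q v ↔ Q w) := by
    intro v w W
    induction W with
    | nil => exact Iff.rfl
    | cons h _ ih => exact (hQadj _ _ h).trans ih
  have haC : a ∈ Cyc p.1 p.2 := by
    rw [mem_Cyc]
    intro c
    obtain ⟨W⟩ := hc.preconnected (Sum.inl c) (Sum.inl a)
    exact (hwalk _ _ W).2 ⟨0, rfl⟩
  have h2 := cyc_step p a haC
  have : ({a, p.2 (p.1 a)} : Finset α) ⊆ Cyc p.1 p.2 := by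
    intro c hc
    simp only [Finset.mem_insert, Finset.mem_singleton] at hc
    rcases hc with rfl | rfl <;> assumption
  have h3 := Finset.card_le_card this
  rwa [Finset.card_pair (hno a).symm] at h3

lemma two_mul_count (i j : ℕ) (hi : 0 < i) :
    2 * bipGraphCount i j (i + j) =
      #(univ.filter fun p : (Fin i → Fin j) × (Fin j → Fin i) => 2 ≤ #(Cyc p.1 p.2)) := by
  have : Nonempty (Fin i) := ⟨⟨0, hi⟩⟩
  set 𝒢 := {G : SimpleGraph (Fin i ⊕ Fin j) |
    G.Connected ∧
    (∀ a b : Fin i, ¬ G.Adj (Sum.inl a) (Sum.inl b)) ∧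
    (∀ a b : Fin j, ¬ G.Adj (Sum.inr a) (Sum.inr b)) ∧
    G.edgeSet.ncard = i + j} with h𝒢
  have hcount : bipGraphCount i j (i + j) = #(Set.toFinite 𝒢).toFinset := by
    rw [← Set.ncard_eq_toFinset_card]; rfl
  rw [Finset.card_eq_sum_card_fiberwise (f := Gr) (t := (Set.toFinite 𝒢).toFinset)]
  · rw [Finset.sum_congr rfl (g := fun _ => 2), Finset.sum_const, hcount, smul_eq_mul, mul_comm]
    intro G hG
    rw [Set.Finite.mem_toFinset] at hG
    obtain ⟨hconn, hl, hr, hc⟩ := hG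
    have hcV : G.edgeSet.ncard = Fintype.card (Fin i ⊕ Fin j) := by simpa using hc
    refine Eq.trans ?_ (ncard_orients G hconn hcV)
    rw [Set.ncard_eq_toFinset_card _ (Set.toFinite _)]
    refine Finset.card_bij (fun p _ => toH p) ?_ ?_ ?_
    · intro p hp
      simp only [Finset.mem_filter, Finset.mem_univ, true_and] at hp
      rw [Set.Finite.mem_toFinset]
      show Orients G (toH p)
      rw [← hp.2]
      exact orients_Gr p hp.1
    · rintro ⟨f, g⟩ _ ⟨f', g'⟩ _ h
      have h1 : f = f' := by
        funext a
        have := congrFun h (Sum.inl a)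
        simpa [toH] using this
      have h2 : g = g' := by
        funext a
        have := congrFun h (Sum.inr a)
        simpa [toH] using this
      rw [h1, h2]
    · intro h hh
      rw [Set.Finite.mem_toFinset] at hh
      have hh : Orients G h := hh
      have e1 : ∀ a, ∃ b, h (Sum.inl a) = Sum.inr b := by
        intro a
        have := hh.1 (Sum.inl a)
        rcases hv : h (Sum.inl a) with c | c
        · rw [hv] at this; exact absurd this (hl _ _)
        · exact ⟨c, rfl⟩
      have e2 : ∀ a, ∃ b, h (Sum.inr a) = Sum.inl b := by
        intro a
        have := hh.1 (Sum.inr a)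
        rcases hv : h (Sum.inr a) with c | c
        · exact ⟨c, rfl⟩
        · rw [hv] at this; exact absurd this (hr _ _)
      choose f hf using e1
      choose g hg using e2
      have hH : toH (f, g) = h := by
        funext v
        rcases v with a | b
        · simp [toH, hf]
        · simp [toH, hg]
      have hGG : Gr (f, g) = G := by
        ext v w
        have himg := orients_image G h hh hcV
        constructor
        · rintro (h1 | h1)
          · rw [hH] at h1; rw [← h1]; exact hh.1 v
          · rw [hH] at h1; rw [← h1]; exact (hh.1 w).symm
        · intro hvw
          have : s(v, w) ∈ G.edgeSet := hvw
          rw [← himg] at this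
          obtain ⟨x, hx⟩ := this
          simp only [Sym2.eq_iff] at hx
          rcases hx with ⟨rfl, hx⟩ | ⟨rfl, hx⟩
          · exact Or.inl (by rw [hH]; exact hx)
          · exact Or.inr (by rw [hH]; exact hx)
      refine ⟨(f, g), ?_, hH⟩
      simp only [Finset.mem_filter, Finset.mem_univ, true_and]
      exact ⟨cyc_of_orients (f, g) (hGG ▸ hconn) (by rw [hGG, hH]; exact hh), hGG⟩
  · intro p hp
    have hp : 2 ≤ #(Cyc p.1 p.2) := by simpa using hp
    rw [Set.Finite.coe_toFinset]
    refine ⟨Gr_connected p hp, ?_, ?_, ?_⟩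
    · rintro a b (h | h) <;> simp [toH] at h
    · rintro a b (h | h) <;> simp [toH] at h
    · simpa using Gr_ncard p hp

/-- The exact formula. -/
lemma exact_formula (i j : ℕ) (hi : 0 < i) (hj : 0 < j) :
    2 * (bipGraphCount i j (i + j) : ℝ) =
      ∑ m ∈ Finset.Ico 1 i, ((i.descFactorial (m+1)) / (i:ℝ) ^ (m+1)) *
        ((j.descFactorial (m+1)) / (j:ℝ)^(m+1)) * ((i:ℝ) ^ j * (j:ℝ) ^ i / (i * j)) *
        (i + j - (m + 1)) := by
  have : Nonempty (Fin i) := ⟨⟨0, hi⟩⟩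
  have : Nonempty (Fin j) := ⟨⟨0, hj⟩⟩
  have hi' : (i:ℝ) ≠ 0 := by positivity
  have hj' : (j:ℝ) ≠ 0 := by positivity
  have h1 : 2 * (bipGraphCount i j (i + j) : ℝ) = ∑ g : Fin j → Fin i, ∑ f : Fin i → Fin j,
      if 2 ≤ #(Cyc f g) then (1:ℝ) else 0 := by
    have := two_mul_count i j hi
    have h2 : 2 * (bipGraphCount i j (i + j) : ℝ) = ((2 * bipGraphCount i j (i + j) : ℕ) : ℝ) := by
      push_cast; rfl
    rw [h2, this, Finset.sum_comm,
      ← Fintype.sum_prod_type' (f := fun (f : Fin i → Fin j) (g : Fin j → Fin i) => 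
        if 2 ≤ #(Cyc f g) then (1:ℝ) else 0), ← Finset.sum_filter]
    simp
  have h2 : ∀ (f : Fin i → Fin j) (g : Fin j → Fin i), (if 2 ≤ #(Cyc f g) then (1:ℝ) else 0) =
      ∑ m ∈ Finset.Ico 1 i, if #(Cyc f g) = m + 1 then (1:ℝ) else 0 := by
    intro f g
    have hle : #(Cyc f g) ≤ i := by
      simpa using Finset.card_le_univ (Cyc f g)
    split_ifs with h
    · rw [Finset.sum_eq_single (#(Cyc f g) - 1)]
      · rw [if_pos (by omega)]
      · intro b _ hb
        rw [if_neg (by omega)]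
      · intro hb
        simp only [Finset.mem_Ico] at hb
        omega
    · rw [eq_comm]
      refine Finset.sum_eq_zero fun m hm => ?_
      rw [Finset.mem_Ico] at hm
      rw [if_neg (by omega)]
  rw [h1]
  simp only [h2]
  have h3 : (∑ g : Fin j → Fin i, ∑ f : Fin i → Fin j, ∑ m ∈ Finset.Ico 1 i,
      if #(Cyc f g) = m + 1 then (1:ℝ) else 0) = ∑ m ∈ Finset.Ico 1 i, 
      ∑ g : Fin j → Fin i, ∑ f : Fin i → Fin j, if #(Cyc f g) = m + 1 then (1:ℝ) else 0 := by
    rw [Finset.sum_congr rfl fun g _ => Finset.sum_comm, Finset.sum_comm]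
  rw [h3]
  refine Finset.sum_congr rfl fun m _ => ?_
  have := cyc_count (α := Fin i) (β := Fin j) m
  simp only [Fintype.card_fin] at this
  have hne : ((i:ℝ) * j) ^ (m+1) * (i * j) ≠ 0 := by positivity
  apply mul_right_cancel₀ hne
  rw [← mul_assoc]
  refine Eq.trans (Eq.trans ?_ this) ?_
  · congr!
  · rw [mul_pow]
    field_simp

end Unic

namespace Unic

open MeasureTheory

/-- The normalised falling factorial. -/
noncomputable def Dd (i k : ℕ) : ℝ := (i.descFactorial k : ℝ) / (i:ℝ) ^ k

/-- The `k`-th term of the normalised sum. -/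
noncomputable def Qq (i j k : ℕ) : ℝ :=
  if 2 ≤ k then Dd i k * Dd j k * (1 - (k:ℝ) / (i + j)) else 0

lemma Dd_nonneg (i k : ℕ) : 0 ≤ Dd i k := by unfold Dd; positivity

lemma Dd_zero (i : ℕ) : Dd i 0 = 1 := by simp [Dd]

lemma Dd_succ (i k : ℕ) (hi : 0 < i) : Dd i (k+1) = Dd i k * (((i - k : ℕ):ℝ) / i) := by
  unfold Dd
  rw [Nat.descFactorial_succ]
  push_cast
  rw [pow_succ]
  field_simp

lemma Dd_eq_zero (i k : ℕ) (h : i < k) : Dd i k = 0 := by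
  unfold Dd
  rw [Nat.descFactorial_eq_zero_iff_lt.2 h]; simp

lemma Dd_upper (i k : ℕ) (hi : 0 < i) : Dd i k ≤ exp (-((k:ℝ) * (k - 1) / 2 / i)) := by
  induction k with
  | zero => simp [Dd_zero]
  | succ k ih =>
    rcases le_or_gt k i with hk | hk
    · rw [Dd_succ _ _ hi, Nat.cast_sub hk]
      have hi' : (0:ℝ) < i := by exact_mod_cast hi
      have h1 : ((i:ℝ) - k) / i ≤ exp (-((k:ℝ) / i)) := by
        have := Real.add_one_le_exp (-((k:ℝ) / i))
        refine le_trans (le_of_eq ?_) this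
        field_simp
        ring
      have h2 : 0 ≤ ((i:ℝ) - k) / i := by
        have : (k:ℝ) ≤ i := by exact_mod_cast hk
        apply div_nonneg <;> linarith
      refine (mul_le_mul ih h1 h2 (exp_pos _).le).trans (le_of_eq ?_)
      rw [← Real.exp_add]
      congr 1
      push_cast
      field_simp
      ring
    · rw [Dd_eq_zero _ _ (by omega)]; positivity

lemma Dd_lower (i k : ℕ) (hi : 0 < i) (h : 2 * k ≤ i) :
    exp (-((k:ℝ) * (k - 1) / 2 / i) - 2 * (k:ℝ)^3 / (i:ℝ)^2) ≤ Dd i k := by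
  induction k with
  | zero => simp [Dd_zero]
  | succ k ih =>
    have ih := ih (by omega)
    rw [Dd_succ _ _ hi, Nat.cast_sub (by omega)]
    have hi' : (0:ℝ) < i := by exact_mod_cast hi
    have hk2 : 2 * ((k:ℝ) + 1) ≤ i := by exact_mod_cast h
    have hx1 : (k:ℝ) / i ≤ 1/2 := by rw [div_le_iff₀ hi']; linarith
    have hx0 : 0 ≤ (k:ℝ) / i := by positivity
    have h1 : exp (-((k:ℝ) / i) - 2 * ((k:ℝ)/i)^2) ≤ ((i:ℝ) - k) / i := by
      have e : ((i:ℝ) - k) / i = 1 - (k:ℝ)/i := by field_simp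
      rw [e]
      generalize (k:ℝ) / i = x at *
      rw [← Real.le_log_iff_exp_le (by linarith)]
      refine le_trans ?_ (Real.one_sub_inv_le_log_of_pos (by linarith))
      have : (1 - x)⁻¹ ≤ 1 + x + 2 * x^2 := by
        rw [inv_le_iff_one_le_mul₀ (by linarith)]
        nlinarith [mul_nonneg (sq_nonneg x) (by linarith : 0 ≤ 1 - 2 * x)]
      linarith
    refine le_trans ?_ (mul_le_mul ih h1 (exp_pos _).le (Dd_nonneg _ _))
    rw [← Real.exp_add, Real.exp_le_exp]
    push_cast
    have hk : (0:ℝ) ≤ k := by positivity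
    have h3 : 2 * (k:ℝ)^3 / (i:ℝ)^2 + 2 * ((k:ℝ)/i)^2 ≤ 2 * ((k:ℝ)+1)^3 / (i:ℝ)^2 := by
      rw [div_pow, mul_div_assoc, mul_div_assoc, ← mul_add, ← add_div]
      gcongr
      nlinarith [sq_nonneg (k:ℝ)]
    have h4 : ((k:ℝ)+1) * (k + 1 - 1) / 2 / i = (k:ℝ) * (k - 1) / 2 / i + k / i := by
      field_simp
      ring
    rw [h4]
    linarith

lemma Dd_le_one (i k : ℕ) (hi : 0 < i) : Dd i k ≤ 1 := by
  refine (Dd_upper i k hi).trans ?_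
  rw [Real.exp_le_one_iff, neg_nonpos]
  rcases Nat.eq_zero_or_pos k with rfl | hk
  · simp
  · have : (1:ℝ) ≤ k := by exact_mod_cast hk
    have : 0 ≤ (k:ℝ) - 1 := by linarith
    positivity

lemma Qq_eq_zero (i j k : ℕ) (h : i < k) : Qq i j k = 0 := by
  unfold Qq; simp [Dd_eq_zero _ _ h]

lemma Qq_nonneg (i j k : ℕ) (hi : 0 < i) : 0 ≤ Qq i j k := by
  rcases le_or_gt k i with hk | hk
  · unfold Qq
    split_ifs
    · have hi' : (0:ℝ) < i := by exact_mod_cast hi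
      have : (k:ℝ) ≤ i := by exact_mod_cast hk
      have hj : (0:ℝ) ≤ j := by positivity
      have : (k:ℝ) / (i + j) ≤ 1 := by rw [div_le_one (by linarith)]; linarith
      refine mul_nonneg (mul_nonneg (Dd_nonneg _ _) (Dd_nonneg _ _)) (by linarith)
    · exact le_rfl
  · rw [Qq_eq_zero _ _ _ hk]

lemma Qq_le (i j k : ℕ) : Qq i j k ≤ Dd i k * Dd j k := by
  have h0 : 0 ≤ Dd i k * Dd j k := mul_nonneg (Dd_nonneg _ _) (Dd_nonneg _ _)
  unfold Qq
  split_ifs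
  · refine mul_le_of_le_one_right h0 ?_
    have : (0:ℝ) ≤ (k:ℝ) / (i + j) := by positivity
    linarith
  · exact h0

lemma Qq_le_exp (i j k : ℕ) (hi : 0 < i) (hj : 0 < j) (s : ℝ)
    (hs2 : 1 / s^2 = 1 / (i:ℝ) + 1 / j) :
    Qq i j k ≤ exp (-((k:ℝ) * (k - 1) / (2 * s^2))) := by
  refine (Qq_le i j k).trans ?_
  refine (mul_le_mul (Dd_upper i k hi) (Dd_upper j k hj) (Dd_nonneg _ _) (exp_pos _).le).trans ?_
  rw [← Real.exp_add, Real.exp_le_exp]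
  have : (k:ℝ) * (k - 1) / (2 * s^2) = (k:ℝ) * (k-1) / 2 * (1 / s^2) := by
    rw [mul_one_div, div_div]
  rw [this, hs2]
  apply le_of_eq
  ring

lemma Qq_bound (i j : ℕ) (hi : 0 < i) (hj : 0 < j) (s : ℝ) (hs : 1 ≤ s)
    (hs2 : 1 / s^2 = 1 / (i:ℝ) + 1 / j) (v : ℝ) (hv : 0 < v) :
    Qq i j ⌊s * v⌋₊ ≤ exp 3 * exp (-v) := by
  rw [← Real.exp_add]
  rcases le_or_gt v 3 with h | h
  · refine (Qq_le i j _).trans ((mul_le_one₀ (Dd_le_one _ _ hi) (Dd_nonneg _ _)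
      (Dd_le_one _ _ hj)).trans ?_)
    rw [Real.one_le_exp_iff]; linarith
  · refine (Qq_le_exp i j _ hi hj s hs2).trans ?_
    rw [Real.exp_le_exp]
    have hk := Nat.lt_floor_add_one (s * v)
    generalize ((⌊s * v⌋₊ : ℕ) : ℝ) = k at *
    have h1 : s * (v - 1) ≤ k := by nlinarith
    have h2 : s * (v - 2) ≤ k - 1 := by nlinarith
    have h3 : (s * (v-2)) * (s * (v-2)) ≤ k * (k - 1) := by
      apply mul_le_mul (by nlinarith) h2
      · apply mul_nonneg <;> linarith
      · nlinarith
    have h4 : (v-2)^2/2 ≤ k * (k-1) / (2 * s^2) := by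
      rw [le_div_iff₀ (by positivity)]
      nlinarith
    nlinarith [sq_nonneg (v - 3)]

lemma Qq_integral (i j : ℕ) (s : ℝ) (hs : 0 < s) :
    ∫ v in Set.Ioi (0:ℝ), Qq i j ⌊s * v⌋₊ = s⁻¹ * ∑ k ∈ Finset.range (i+1), Qq i j k := by
  have h1 := MeasureTheory.integral_comp_mul_left_Ioi (fun x : ℝ => Qq i j ⌊x⌋₊) 0 hs
  rw [mul_zero] at h1
  rw [h1, smul_eq_mul]
  congr 1
  have h2 : ∫ x in Set.Ioi (0:ℝ), Qq i j ⌊x⌋₊ = ∫ x in Set.Ioc (0:ℝ) ((i+1 : ℕ):ℝ), Qq i j ⌊x⌋₊ := by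
    apply MeasureTheory.setIntegral_eq_of_subset_of_forall_sdiff_eq_zero measurableSet_Ioi
      (fun x hx => hx.1)
    intro x hx
    apply Qq_eq_zero
    have h3 : ((i+1:ℕ):ℝ) < x := by
      by_contra hc
      exact hx.2 ⟨hx.1, not_lt.1 hc⟩
    exact Nat.le_floor h3.le
  rw [h2, ← intervalIntegral.integral_of_le (by positivity)]
  have he : ∀ k : ℕ, Set.EqOn (fun _ : ℝ => Qq i j k) (fun x : ℝ => Qq i j ⌊x⌋₊)
      (Set.uIoo (k:ℝ) ((k+1:ℕ):ℝ)) := by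
    intro k x hx
    rw [Set.uIoo_of_le (by push_cast; linarith)] at hx
    have : ⌊x⌋₊ = k := Nat.floor_eq_on_Ico k x ⟨hx.1.le, by have := hx.2; push_cast at this; exact this⟩
    simp only [this]
  have h5 := intervalIntegral.sum_integral_adjacent_intervals (μ := volume)
    (f := fun x : ℝ => Qq i j ⌊x⌋₊) (a := fun k : ℕ => (k:ℝ)) (n := i+1)
    (fun k _ => IntervalIntegrable.congr_uIoo intervalIntegrable_const (he k))
  simp only [Nat.cast_zero] at h5
  rw [← h5]
  refine Finset.sum_congr rfl fun k _ => ?_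
  rw [← intervalIntegral.integral_congr_uIoo (he k)]
  simp

lemma Qq_lower (i j k : ℕ) (hi : 0 < i) (hj : 0 < j) (s : ℝ) (hs : 0 < s)
    (hs2 : 1 / s^2 = 1 / (i:ℝ) + 1 / j) (hk : 2 ≤ k) (hki : 2 * k ≤ i) (hkj : 2 * k ≤ j) :
    exp (-(((k:ℝ)/s)^2 - (k:ℝ)/s * s⁻¹)/2 - 2 * ((k:ℝ)/s)^3 * s⁻¹) * (1 - (k:ℝ)/s * s⁻¹)
      ≤ Qq i j k := by
  have hi' : (0:ℝ) < i := by exact_mod_cast hi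
  have hj' : (0:ℝ) < j := by exact_mod_cast hj
  have hs2' : s^2 = i * j / (i + j) := by
    have : s^2 = (1 / s^2)⁻¹ := by field_simp
    rw [this, hs2]
    field_simp
    ring
  have hA : exp (-(((k:ℝ)/s)^2 - (k:ℝ)/s * s⁻¹)/2 - 2 * ((k:ℝ)/s)^3 * s⁻¹) ≤ Dd i k * Dd j k := by
    refine le_trans ?_ (mul_le_mul (Dd_lower i k hi hki) (Dd_lower j k hj hkj) (exp_pos _).le
      (Dd_nonneg _ _))
    rw [← Real.exp_add, Real.exp_le_exp]
    have e1 : (((k:ℝ)/s)^2 - (k:ℝ)/s * s⁻¹) = k * (k-1) * (1/s^2) := by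
      field_simp
    have e2 : 2 * ((k:ℝ)/s)^3 * s⁻¹ = 2 * k^3 * (1/s^2)^2 := by
      field_simp
    rw [e1, e2, hs2]
    have e3 : 0 ≤ 2 * (k:ℝ)^3 * (2 * (1 / (i:ℝ)) * (1 / j)) := by positivity
    have e4 : 2 * (k:ℝ)^3 / (i:ℝ)^2 = 2 * k^3 * (1/(i:ℝ))^2 := by field_simp
    have e5 : 2 * (k:ℝ)^3 / (j:ℝ)^2 = 2 * k^3 * (1/(j:ℝ))^2 := by field_simp
    rw [e4, e5]
    ring_nf at e3 ⊢
    linarith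
  have hki' : 2 * (k:ℝ) ≤ i := by exact_mod_cast hki
  have hB : 1 - (k:ℝ)/s * s⁻¹ ≤ 1 - (k:ℝ) / (i + j) := by
    have e : (k:ℝ)/s * s⁻¹ = k / s^2 := by field_simp
    rw [e]
    have : s^2 ≤ i + j := by
      rw [hs2', div_le_iff₀ (by positivity)]
      nlinarith
    gcongr
  have hC : 0 ≤ 1 - (k:ℝ) / (i + j) := by
    have : (k:ℝ) / (i + j) ≤ 1 := by rw [div_le_one (by linarith)]; linarith
    linarith
  unfold Qq
  rw [if_pos hk]
  exact (mul_le_mul_of_nonneg_left hB (exp_pos _).le).trans (mul_le_mul_of_nonneg_right hA hC)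

lemma Qq_tendsto (i j : ℕ → ℕ) (s : ℕ → ℝ) (hi : ∀ n, 0 < i n) (hj : ∀ n, 0 < j n)
    (hs : ∀ n, 0 < s n) (hs2 : ∀ n, 1 / s n ^2 = 1 / (i n:ℝ) + 1 / j n)
    (hsInf : Tendsto s atTop atTop) (v : ℝ) (hv : 0 < v) :
    Tendsto (fun n => Qq (i n) (j n) ⌊s n * v⌋₊) atTop (nhds (exp (-(1/2) * v^2))) := by
  have hr : Tendsto (fun n => ((⌊s n * v⌋₊ : ℕ):ℝ) / s n) atTop (nhds v) := by
    have := (tendsto_nat_floor_mul_div_atTop (R := ℝ) hv.le).comp hsInf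
    refine this.congr fun n => ?_
    simp [mul_comm]
  have hinv : Tendsto (fun n => (s n)⁻¹) atTop (nhds 0) := tendsto_inv_atTop_zero.comp hsInf
  have hsi : ∀ n, s n ^ 2 ≤ i n ∧ s n ^ 2 ≤ j n := by
    intro n
    have hi' : (0:ℝ) < i n := by exact_mod_cast hi n
    have hj' : (0:ℝ) < j n := by exact_mod_cast hj n
    have hsp := hs n
    have h1 : 1 / (i n : ℝ) ≤ 1 / s n ^ 2 := by rw [hs2]; simp
    have h2 : 1 / (j n : ℝ) ≤ 1 / s n ^ 2 := by rw [hs2]; simp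
    exact ⟨(one_div_le_one_div hi' (by positivity)).1 h1,
      (one_div_le_one_div hj' (by positivity)).1 h2⟩
  have hmain : Tendsto (fun n => -((((⌊s n * v⌋₊ : ℕ):ℝ)/s n)^2 - ((⌊s n * v⌋₊ : ℕ):ℝ)/s n * (s n)⁻¹)/2)
      atTop (nhds (-(1/2) * v^2)) := by
    have := (((hr.pow 2).sub (hr.mul hinv)).neg).div_const 2
    convert this using 2
    ring
  refine tendsto_of_tendsto_of_tendsto_of_le_of_le' (g :=
    fun n => exp (-((((⌊s n * v⌋₊ : ℕ):ℝ)/s n)^2 - ((⌊s n * v⌋₊ : ℕ):ℝ)/s n * (s n)⁻¹)/2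
      - 2 * (((⌊s n * v⌋₊ : ℕ):ℝ)/s n)^3 * (s n)⁻¹) * (1 - ((⌊s n * v⌋₊ : ℕ):ℝ)/s n * (s n)⁻¹))
    (h := fun n => exp (-((((⌊s n * v⌋₊ : ℕ):ℝ)/s n)^2 - ((⌊s n * v⌋₊ : ℕ):ℝ)/s n * (s n)⁻¹)/2))
    ?_ ?_ ?_ ?_
  · have h1 := hmain.sub (((hr.pow 3).const_mul 2).mul hinv)
    have h2 := ((Real.continuous_exp.tendsto _).comp h1).mul ((hr.mul hinv).const_sub 1)
    simpa using h2
  · exact (Real.continuous_exp.tendsto _).comp hmain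
  · filter_upwards [hsInf.eventually_ge_atTop (2 * v), hsInf.eventually_ge_atTop (2 / v)] with n h1 h2
    have hsp := hs n
    have hfl : ((⌊s n * v⌋₊ : ℕ):ℝ) ≤ s n * v := Nat.floor_le (by positivity)
    have hb : 2 * ((⌊s n * v⌋₊ : ℕ):ℝ) ≤ s n ^ 2 := by nlinarith
    apply Qq_lower _ _ _ (hi n) (hj n) _ hsp (hs2 n)
    · apply Nat.le_floor
      rw [div_le_iff₀ hv] at h2
      exact_mod_cast h2
    · have := hb.trans (hsi n).1
      exact_mod_cast this
    · have := hb.trans (hsi n).2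
      exact_mod_cast this
  · refine Eventually.of_forall fun n => ?_
    refine (Qq_le_exp _ _ _ (hi n) (hj n) (s n) (hs2 n)).trans (le_of_eq ?_)
    have hsp := hs n
    congr 1
    field_simp

lemma integral_tendsto (i j : ℕ → ℕ) (s : ℕ → ℝ) (hi : ∀ n, 0 < i n) (hj : ∀ n, 0 < j n)
    (hs : ∀ n, 0 < s n) (hs2 : ∀ n, 1 / s n ^2 = 1 / (i n:ℝ) + 1 / j n)
    (hsInf : Tendsto s atTop atTop) :
    Tendsto (fun n => (s n)⁻¹ * ∑ k ∈ Finset.range (i n + 1), Qq (i n) (j n) k) atTop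
      (nhds (√(π / 2))) := by
  have hg : ∫ v in Set.Ioi (0:ℝ), exp (-(1/2) * v^2) = √(π / 2) := by
    rw [integral_gaussian_Ioi]
    have : π / (1/2) = 2^2 * (π / 2) := by ring
    rw [this, Real.sqrt_mul (by positivity), Real.sqrt_sq (by norm_num)]
    ring
  rw [← hg]
  simp only [← Qq_integral _ _ _ (hs _)]
  apply MeasureTheory.tendsto_integral_filter_of_dominated_convergence
    (fun v => exp 3 * exp (-v))
  · refine Eventually.of_forall fun n => Measurable.aestronglyMeasurable ?_
    exact (measurable_from_top (f := Qq (i n) (j n))).comp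
      (Nat.measurable_floor.comp (measurable_const_mul (s n)))
  · filter_upwards [hsInf.eventually_ge_atTop 1] with n h1
    filter_upwards [ae_restrict_mem measurableSet_Ioi] with v hv
    rw [Real.norm_of_nonneg (Qq_nonneg _ _ _ (hi n))]
    exact Qq_bound _ _ (hi n) (hj n) _ h1 (hs2 n) v hv
  · exact (integrableOn_exp_neg_Ioi 0).const_mul _
  · filter_upwards [ae_restrict_mem measurableSet_Ioi] with v hv
    exact Qq_tendsto i j s hi hj hs hs2 hsInf v hv

lemma sum_form (i j : ℕ) (hi : 0 < i) (hj : 0 < j) :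
    2 * (bipGraphCount i j (i + j) : ℝ) = ((i:ℝ) ^ j * (j:ℝ) ^ i / (i * j)) * (i + j) *
      ∑ k ∈ Finset.range (i+1), Qq i j k := by
  have hi' : (0:ℝ) < i := by exact_mod_cast hi
  have hj' : (0:ℝ) < j := by exact_mod_cast hj
  obtain ⟨i, rfl⟩ : ∃ i', i = i' + 1 := ⟨i - 1, by omega⟩
  rw [exact_formula _ j hi hj, Finset.sum_range_succ', Finset.sum_range_succ', 
    Finset.sum_Ico_eq_sum_range]
  have z0 : Qq (i+1) j 0 = 0 := by simp [Qq]
  have z1 : Qq (i+1) j (0+1) = 0 := by simp [Qq]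
  rw [z0, z1, add_zero, add_zero, Finset.mul_sum, Nat.add_sub_cancel]
  refine Finset.sum_congr rfl fun k _ => ?_
  have hk : 1 + k + 1 = k + 1 + 1 := by omega
  unfold Qq
  rw [if_pos (by omega), hk]
  unfold Dd
  have hne : (((i+1:ℕ):ℝ) + j) ≠ 0 := by positivity
  have e : (((i+1:ℕ):ℝ) + j) * (1 - ((k+1+1:ℕ):ℝ) / (((i+1:ℕ):ℝ) + j)) =
      ((i+1:ℕ):ℝ) + j - (((1+k:ℕ):ℝ) + 1) := by
    rw [mul_sub, mul_div_cancel₀ _ hne]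
    push_cast
    ring
  rw [← e]
  ring

end Unic

/-- Theorem (asymptotics of the number of connected unicyclic bipartite graphs):
if `i, j → ∞` and `1/2 ≤ i/j ≤ 2`, then
`C(i,j,0) = (1+o(1)) √(π/8) √(i+j) i^{j−1/2} j^{i−1/2}`. -/
theorem statement_11 (i j : ℕ → ℕ) (hi : ∀ n, 0 < i n) (hj : ∀ n, 0 < j n)
    (hiInf : Tendsto i atTop atTop) (hjInf : Tendsto j atTop atTop)
    (hratio : ∀ n, (1:ℝ)/2 ≤ (i n : ℝ) / (j n : ℝ) ∧ (i n : ℝ) / (j n : ℝ) ≤ 2) :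
    Tendsto (fun n =>
        (bipGraphCount (i n) (j n) (i n + j n) : ℝ) /
          (Real.sqrt (π / 8) * Real.sqrt (i n + j n : ℝ) *
            (i n : ℝ) ^ ((j n : ℝ) - 1/2) * (j n : ℝ) ^ ((i n : ℝ) - 1/2)))
      atTop (nhds 1) := by
  have hi' : ∀ n, (0:ℝ) < i n := fun n => by exact_mod_cast hi n
  have hj' : ∀ n, (0:ℝ) < j n := fun n => by exact_mod_cast hj n
  set s : ℕ → ℝ := fun n => √(i n) * √(j n) / √(i n + j n : ℝ) with hsdef
  have hs : ∀ n, 0 < s n := by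
    intro n
    have := hi' n
    have := hj' n
    simp only [hsdef]
    positivity
  have hsq : ∀ n, s n ^ 2 = i n * j n / (i n + j n) := by
    intro n
    have := hi' n
    have := hj' n
    simp only [hsdef]
    rw [div_pow, mul_pow, Real.sq_sqrt, Real.sq_sqrt, Real.sq_sqrt] <;> positivity
  have hs2 : ∀ n, 1 / s n ^2 = 1 / (i n:ℝ) + 1 / j n := by
    intro n
    have := hi' n
    have := hj' n
    rw [hsq]
    field_simp
    ring
  have hsInf : Tendsto s atTop atTop := by
    have h1 : Tendsto (fun n => √((j n : ℝ) / 3)) atTop atTop := by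
      refine Real.tendsto_sqrt_atTop.comp ?_
      exact (tendsto_natCast_atTop_atTop.comp hjInf).atTop_div_const (by norm_num)
    refine tendsto_atTop_mono (fun n => ?_) h1
    rw [Real.sqrt_le_left (hs n).le, hsq]
    have h2 := (hratio n).1
    have := hi' n
    have := hj' n
    rw [le_div_iff₀ (hj' n)] at h2
    rw [div_le_div_iff₀ (by norm_num) (by positivity)]
    nlinarith
  have hmain := (Unic.integral_tendsto i j s hi hj hs hs2 hsInf).div_const (√(π / 2))
  have hpi : √(π / 2) ≠ 0 := by positivity
  rw [div_self hpi] at hmain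
  refine hmain.congr fun n => ?_
  have h1 := Unic.sum_form (i n) (j n) (hi n) (hj n)
  have hC : (bipGraphCount (i n) (j n) (i n + j n) : ℝ) =
      (((i n:ℝ) ^ j n * (j n:ℝ) ^ i n / (i n * j n)) * (i n + j n) *
      ∑ k ∈ Finset.range (i n+1), Unic.Qq (i n) (j n) k) / 2 := by linarith
  rw [hC]
  have h8 : √(π / 8) = √(π / 2) / 2 := by
    have : π / 8 = (π / 2) / 2^2 := by ring
    rw [this, Real.sqrt_div (by positivity), Real.sqrt_sq (by norm_num)]
  rw [h8, Real.rpow_sub (hi' n), Real.rpow_sub (hj' n), Real.rpow_natCast, Real.rpow_natCast,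
    ← Real.sqrt_eq_rpow, ← Real.sqrt_eq_rpow]
  generalize (∑ k ∈ Finset.range (i n+1), Unic.Qq (i n) (j n) k) = S
  simp only [hsdef]
  have a1 := Real.mul_self_sqrt (hi' n).le
  have a2 := Real.mul_self_sqrt (hj' n).le
  have a3 := Real.mul_self_sqrt (add_pos (hi' n) (hj' n)).le
  have b1 : 0 < √(i n : ℝ) := Real.sqrt_pos.2 (hi' n)
  have b2 : 0 < √(j n : ℝ) := Real.sqrt_pos.2 (hj' n)
  have b3 : 0 < √(i n + j n : ℝ) := Real.sqrt_pos.2 (add_pos (hi' n) (hj' n))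
  have p1 : 0 < (i n : ℝ) ^ j n := pow_pos (hi' n) _
  have p2 : 0 < (j n : ℝ) ^ i n := pow_pos (hj' n) _
  have q1 := hi' n
  have q2 := hj' n
  generalize √(i n + j n : ℝ) = c at *
  generalize (i n : ℝ) ^ j n = P1 at *
  generalize (j n : ℝ) ^ i n = P2 at *
  generalize √(i n : ℝ) = a at *
  generalize √(j n : ℝ) = b at *
  rw [← a3, ← a1, ← a2]
  field_simp
end

section
/- There exists a constant c > 0 such that for all positive integers i, j, ℓ with ℓ ≤ ij − i − j and 1/2 ≤ i/j ≤ 2, the number C(i,j,ℓ) of connected bipartite graphs with labelled partition classes of sizes i and j and i + j + ℓ edges satisfies C(i,j,ℓ) ≤ i^{j} · j^{i} · (i+j)^{(3ℓ−1)/2} · (c/ℓ)^{ℓ/2}. -/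
open Filter Real

/-- rooted tree given by a parent function `F` and depth function `D`. -/
def IsT {V : Type*} (r : V) (F : V → V) (D : V → ℕ) : Prop :=
  F r = r ∧ D r = 0 ∧ ∀ x, x ≠ r → D x = D (F x) + 1

lemma IsT.unique {V : Type*} {r : V} {F : V → V} {D D' : V → ℕ}
    (h : IsT r F D) (h' : IsT r F D') : D = D' := by
  have key : ∀ n x, D x = n → D' x = n := by
    intro n
    induction n with
    | zero =>
      intro x hx
      by_cases hr : x = r
      · rw [hr]; exact h'.2.1
      · have := h.2.2 x hr; omega
    | succ n ih =>
      intro x hx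
      by_cases hr : x = r
      · rw [hr, h.2.1] at hx; omega
      · have h1 := h.2.2 x hr
        have h2 := h'.2.2 x hr
        have := ih (F x) (by omega)
        omega
  funext x
  exact (key _ x rfl).symm

lemma IsT.eq_root {V : Type*} {r : V} {F : V → V} {D : V → ℕ}
    (h : IsT r F D) {x : V} (hx : D x = 0) : x = r := by
  by_contra hr
  have := h.2.2 x hr
  omega

lemma IsT.depth_iter {V : Type*} {r : V} {F : V → V} {D : V → ℕ}
    (h : IsT r F D) (m : ℕ) : ∀ x, m ≤ D x → D (F^[m] x) + m = D x := by
  induction m with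
  | zero => intro x _; simp
  | succ m ih =>
    intro x hx
    rw [Function.iterate_succ_apply]
    have hr : x ≠ r := by rintro rfl; rw [h.2.1] at hx; omega
    have h1 := h.2.2 x hr
    have := ih (F x) (by omega)
    omega

lemma IsT.iter_depth {V : Type*} {r : V} {F : V → V} {D : V → ℕ}
    (h : IsT r F D) (x : V) : F^[D x] x = r := by
  apply h.eq_root
  have := h.depth_iter (D x) x le_rfl
  omega

lemma IsT.iter_root {V : Type*} {r : V} {F : V → V} {D : V → ℕ}
    (h : IsT r F D) (m : ℕ) : F^[m] r = r := Function.iterate_fixed h.1 m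

lemma IsT.iter_large {V : Type*} {r : V} {F : V → V} {D : V → ℕ}
    (h : IsT r F D) (x : V) (m : ℕ) (hm : D x ≤ m) : F^[m] x = r := by
  obtain ⟨k, rfl⟩ := Nat.exists_eq_add_of_le hm
  rw [add_comm, Function.iterate_add_apply, h.iter_depth, h.iter_root]

/-- a proper ancestor is reached in a positive number of steps at most the depth -/
lemma IsT.anc {V : Type*} {r : V} {F : V → V} {D : V → ℕ}
    (h : IsT r F D) {x y : V} (hxy : x ≠ y) (hm : ∃ m, F^[m] x = y) :
    ∃ t, t < D x ∧ F^[t+1] x = y := by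
  obtain ⟨m, hm⟩ := hm
  by_cases hx : D x = 0
  · exfalso
    apply hxy
    rw [← hm, h.eq_root hx, h.iter_root]
  rcases le_or_gt m (D x) with hle | hlt
  · rcases m with _ | m
    · exact absurd hm hxy
    · exact ⟨m, by omega, hm⟩
  · refine ⟨D x - 1, by omega, ?_⟩
    rw [Nat.sub_add_cancel (by omega), h.iter_depth, ← hm, h.iter_large x m hlt.le]

lemma exists_bfs {V : Type*} (G : SimpleGraph V) (hG : G.Connected) (r : V) :
    ∃ F D, IsT r F D ∧ ∀ x, x ≠ r → G.Adj x (F x) := by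
  have key : ∀ x, ∃ y, (x ≠ r → G.Adj x y ∧ G.dist x r = G.dist y r + 1) ∧ (x = r → y = r) := by
    intro x
    by_cases hx : x = r
    · exact ⟨r, fun h => absurd hx h, fun _ => rfl⟩
    · obtain ⟨p, hp⟩ := hG.exists_walk_length_eq_dist x r
      cases p with
      | nil => exact absurd rfl hx
      | @cons _ y _ hadj q =>
        refine ⟨y, fun _ => ⟨hadj, ?_⟩, fun h => absurd h hx⟩
        have h1 := SimpleGraph.dist_le q
        obtain ⟨q', hq'⟩ := hG.exists_walk_length_eq_dist y r
        have h2 := SimpleGraph.dist_le (SimpleGraph.Walk.cons hadj q')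
        simp only [SimpleGraph.Walk.length_cons] at hp h2
        omega
  choose F hF using key
  exact ⟨F, fun x => G.dist x r, ⟨(hF r).2 rfl, by simp, fun x hx => ((hF x).1 hx).2⟩,
    fun x hx => ((hF x).1 hx).1⟩

lemma exists_dfs {V : Type*} [Fintype V] (G : SimpleGraph V) (hG : G.Connected) (r : V) :
    ∃ F D, IsT r F D ∧ (∀ x, x ≠ r → G.Adj x (F x)) ∧
      ∀ x y, G.Adj x y → (∃ m, F^[m] x = y) ∨ (∃ m, F^[m] y = x) := by
  classical
  let T := {F : V → V // (∃ D, IsT r F D) ∧ ∀ x, x ≠ r → G.Adj x (F x)}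
  let dp : T → V → ℕ := fun F => F.2.1.choose
  have hdp : ∀ F : T, IsT r F.1 (dp F) := fun F => F.2.1.choose_spec
  have : Nonempty T := by
    obtain ⟨F, D, h1, h2⟩ := exists_bfs G hG r
    exact ⟨⟨F, ⟨D, h1⟩, h2⟩⟩
  obtain ⟨F, hmax⟩ := Finite.exists_max (fun F : T => ∑ x, dp F x)
  have hT := hdp F
  have wlog : ∀ x y, G.Adj x y → dp F y ≤ dp F x →
      (∃ m, F.1^[m] x = y) ∨ (∃ m, F.1^[m] y = x) := by
    intro x y hxy hle
    by_contra hcon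
    push Not at hcon
    obtain ⟨c1, c2⟩ := hcon
    have hyr : y ≠ r := fun h => c1 (dp F x) (by rw [hT.iter_depth, h])
    let F' := Function.update F.1 y x
    let D' : V → ℕ := fun z => if ∃ m, F.1^[m] z = y then dp F z + (dp F x + 1 - dp F y) else dp F z
    have hT' : IsT r F' D' := by
      refine ⟨?_, ?_, ?_⟩
      · simp only [F']
        rw [Function.update_of_ne hyr.symm]; exact hT.1
      · have : ¬ ∃ m, F.1^[m] r = y := by
          rintro ⟨m, hm⟩
          rw [hT.iter_root] at hm
          exact hyr hm.symm
        simp only [D', this, if_false]; exact hT.2.1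
      · intro z hz
        by_cases hzy : z = y
        · subst hzy
          have h1 : ∃ m, F.1^[m] z = z := ⟨0, rfl⟩
          have h2 : ¬ ∃ m, F.1^[m] x = z := by push Not; exact c1
          simp only [F', Function.update_self, D', h1, h2, if_true, if_false]
          omega
        · have e : F' z = F.1 z := Function.update_of_ne hzy _ _
          have h1 : (∃ m, F.1^[m] z = y) ↔ ∃ m, F.1^[m] (F.1 z) = y := by
            constructor
            · rintro ⟨m, hm⟩
              rcases m with _ | m
              · exact absurd hm hzy
              · exact ⟨m, hm⟩
            · rintro ⟨m, hm⟩
              exact ⟨m + 1, hm⟩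
          have := hT.2.2 z hz
          rw [e]
          simp only [D']
          by_cases h2 : ∃ m, F.1^[m] z = y
          · rw [if_pos h2, if_pos (h1.1 h2)]; omega
          · rw [if_neg h2, if_neg (fun h => h2 (h1.2 h))]; omega
    let F'' : T := ⟨F', ⟨D', hT'⟩, by
      intro z hz
      by_cases hzy : z = y
      · subst hzy; simp only [F', Function.update_self]; exact hxy.symm
      · simp only [F']
        rw [Function.update_of_ne hzy]; exact F.2.2 z hz⟩
    have e : dp F'' = D' := (hdp F'').unique hT'
    have := hmax F''
    simp only [e] at this
    have hlt : ∑ x, dp F x < ∑ x, D' x := by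
      apply Finset.sum_lt_sum
      · intro z _
        simp only [D']; split_ifs <;> omega
      · refine ⟨y, Finset.mem_univ _, ?_⟩
        have h1 : ∃ m, F.1^[m] y = y := ⟨0, rfl⟩
        simp only [D', h1, if_true]; omega
    omega
  refine ⟨F.1, dp F, hT, F.2.2, ?_⟩
  intro x y hxy
  rcases le_total (dp F y) (dp F x) with h | h
  · exact wlog x y hxy h
  · exact (wlog y x hxy.symm h).symm

set_option maxHeartbeats 1000000 in
/-- the forest lemma for a weighted one-type model -/
lemma class_count {L : Type} [Fintype L] (Y : Type) [Finite Y] :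
    ∀ _ : Finite Y, ∀ c : L → Option Y,
    Nat.card {g : Y → L // ∃ ρ : Y → ℕ, ∀ y y', c (g y) = some y' → ρ y' < ρ y} * Nat.card L ≤
      Nat.card {l : L // c l = none} * Nat.card L ^ Nat.card Y := by
  classical
  induction Y using Finite.induction_empty_option with
  | @of_equiv α β e ih =>
    intro hβ c
    have hα : Finite α := Finite.of_equiv β e.symm
    have := ih hα (fun l => (c l).map e.symm)
    have h1 : Nat.card {g : β → L // ∃ ρ : β → ℕ, ∀ y y', c (g y) = some y' → ρ y' < ρ y} ≤
      Nat.card {g : α → L // ∃ ρ : α → ℕ, ∀ y y', (c (g y)).map e.symm = some y' → ρ y' < ρ y} := by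
      apply Nat.card_le_card_of_injective (fun g => ⟨g.1 ∘ e, by
        obtain ⟨ρ, hρ⟩ := g.2
        refine ⟨ρ ∘ e, ?_⟩
        intro y y' h
        apply hρ
        simp only [Function.comp] at h
        rw [Option.map_eq_some_iff] at h
        obtain ⟨z, hz, rfl⟩ := h
        simpa using hz⟩)
      intro g g' h
      apply Subtype.ext
      have := congrArg Subtype.val h
      simp only at this
      funext b
      have := congrFun this (e.symm b)
      simpa using this
    have h2 : Nat.card {l : L // (c l).map e.symm = none} = Nat.card {l : L // c l = none} := by
      simp
    rw [h2, Nat.card_congr e] at this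
    exact le_trans (Nat.mul_le_mul_right _ h1) this
  | h_empty =>
    intro _ c
    have : ∀ l, c l = none := by
      intro l
      rcases h : c l with _ | x
      · rfl
      · exact x.elim
    simp [this]
  | @h_option Y _ ih =>
    intro _ c
    let c' : L → L → Option Y := fun l0 l =>
      if c l = some none then (c l0).join else (c l).join
    -- inject
    let A : L → Type := fun l0 => {g : Y → L // ∃ ρ : Y → ℕ, ∀ y y', c' l0 (g y) = some y' → ρ y' < ρ y}
    let ι : {g : Option Y → L // ∃ ρ : Option Y → ℕ, ∀ y y', c (g y) = some y' → ρ y' < ρ y} →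
        Σ l0 : {l0 : L // c l0 ≠ some none}, A l0.1 := fun g =>
      ⟨⟨g.1 none, by
        obtain ⟨ρ, hρ⟩ := g.2
        intro h
        exact lt_irrefl _ (hρ none none h)⟩, ⟨fun y => g.1 (some y), by
        obtain ⟨ρ, hρ⟩ := g.2
        refine ⟨fun y => ρ (some y), ?_⟩
        intro y y' h
        simp only [c'] at h
        split_ifs at h with h0
        · have a1 := hρ (some y) none h0
          have a2 := hρ none (some y') (by
            rcases hc : c (g.1 none) with _ | _ | z <;> simp_all)
          exact a2.trans a1
        · apply hρ
          rcases hc : c (g.1 (some y)) with _ | _ | z <;> simp_all⟩⟩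
    have hι : Function.Injective ι := by
      intro g g' h
      apply Subtype.ext
      simp only [ι, Sigma.mk.injEq, Subtype.mk.injEq] at h
      obtain ⟨h1, h2⟩ := h
      have h3 : (fun y => g.1 (some y)) = fun y => g'.1 (some y) := by
        have : ∀ (l l' : L) (hl : l = l') (u : A l) (v : A l'), HEq u v → u.1 = v.1 := by
          rintro l _ rfl u v huv
          rw [eq_of_heq huv]
        exact this _ _ h1 _ _ h2
      funext y
      cases y with
      | none => exact h1
      | some y => exact congrFun h3 y
    have h1 := Nat.card_le_card_of_injective ι hι
    rw [Nat.card_sigma] at h1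
    set n0 := Nat.card {l : L // c l = none} with hn0
    set w := Nat.card {l : L // c l = some none} with hw
    have hA : ∀ l0 : {l0 : L // c l0 ≠ some none}, Nat.card (A l0.1) * Nat.card L ≤
        (if c l0.1 = none then n0 + w else n0) * Nat.card L ^ Nat.card Y := by
      intro l0
      refine (ih inferInstance (c' l0.1)).trans (Nat.mul_le_mul_right _ ?_)
      split_ifs with h0
      · rw [hn0, hw, Nat.card_eq_fintype_card, Nat.card_eq_fintype_card, Nat.card_eq_fintype_card,
          Fintype.card_subtype, Fintype.card_subtype, Fintype.card_subtype]
        refine le_trans (Finset.card_le_card ?_) (Finset.card_union_le _ _)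
        intro l
        simp only [c', Finset.mem_filter, Finset.mem_univ, true_and, Finset.mem_union]
        intro h
        rcases hc : c l with _ | _ | z <;> simp_all
      · rw [hn0, Nat.card_eq_fintype_card, Nat.card_eq_fintype_card, 
          Fintype.card_subtype, Fintype.card_subtype]
        refine Finset.card_le_card ?_
        intro l
        simp only [c', Finset.mem_filter, Finset.mem_univ, true_and]
        intro h
        have := l0.2
        rcases hc : c l with _ | _ | z <;> rcases hc0 : c l0.1 with _ | _ | z0 <;> simp_all
    have hsum : ∑ l0 : {l0 : L // c l0 ≠ some none}, (if c l0.1 = none then n0 + w else n0)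
        = n0 * Nat.card L := by
      rw [← Finset.sum_subtype (Finset.univ.filter (fun l0 => c l0 ≠ some none)) (p := fun l0 => c l0 ≠ some none)
        (fun x => by rw [Finset.mem_filter]; exact ⟨fun h => h.2, fun h => ⟨Finset.mem_univ _, h⟩⟩)
        (fun l0 => (if c l0 = none then n0 + w else n0))]
      rw [Finset.sum_filter]
      have e2 : ∀ l, (if c l ≠ some none then (if c l = none then n0 + w else n0) else 0)
        + (if c l = some none then n0 else 0) = n0 + if c l = none then w else 0 := by
        intro l
        rcases hc : c l with _ | _ | z <;> simp
      have e3 := Finset.sum_congr rfl (fun l (_ : l ∈ (Finset.univ : Finset L)) => e2 l)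
      rw [Finset.sum_add_distrib, Finset.sum_add_distrib] at e3
      rw [← Finset.sum_filter (fun l => c l = some none), ← Finset.sum_filter (fun l => c l = none)] at e3
      simp only [Finset.sum_const, smul_eq_mul] at e3
      rw [← Fintype.card_subtype, ← Fintype.card_subtype, ← Nat.card_eq_fintype_card,
        ← Nat.card_eq_fintype_card, ← hn0, ← hw, Finset.card_univ, ← Nat.card_eq_fintype_card] at e3
      nlinarith [e3]
    calc _ ≤ (∑ l0 : {l0 : L // c l0 ≠ some none}, Nat.card (A l0.1)) * Nat.card L :=
          Nat.mul_le_mul_right _ h1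
      _ = ∑ l0 : {l0 : L // c l0 ≠ some none}, Nat.card (A l0.1) * Nat.card L := Finset.sum_mul ..
      _ ≤ ∑ l0 : {l0 : L // c l0 ≠ some none}, (if c l0.1 = none then n0 + w else n0) * Nat.card L ^ Nat.card Y :=
          Finset.sum_le_sum (fun l0 _ => hA l0)
      _ = n0 * Nat.card L * Nat.card L ^ Nat.card Y := by rw [← Finset.sum_mul, hsum]
      _ = _ := by
        rw [Finite.card_option]; ring

lemma card_fun_mem {X R : Type} [Fintype X] [DecidableEq X] [Fintype R] [DecidableEq R] (SR : Finset R) (x : X) :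
    (Finset.univ.filter (fun f : X → R => f x ∈ SR)).card * Fintype.card R
      = SR.card * Fintype.card R ^ Fintype.card X := by
  have h1 : Finset.univ.filter (fun f : X → R => f x ∈ SR) =
      Fintype.piFinset (fun x' => if x' = x then SR else Finset.univ) := by
    ext f
    simp only [Finset.mem_filter, Finset.mem_univ, true_and, Fintype.mem_piFinset]
    constructor
    · intro h x'
      split_ifs with h'
      · rw [h']; exact h
      · exact Finset.mem_univ _
    · intro h
      simpa using h x
  rw [h1, Fintype.card_piFinset, ← Finset.mul_prod_erase Finset.univ _ (Finset.mem_univ x), if_pos rfl]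
  have h2 : ∏ x' ∈ Finset.univ.erase x, (if x' = x then SR else Finset.univ).card
      = Fintype.card R ^ (Fintype.card X - 1) := by
    rw [Finset.prod_congr rfl (g := fun _ => Fintype.card R)]
    · rw [Finset.prod_const, Finset.card_erase_of_mem (Finset.mem_univ _), Finset.card_univ]
    · intro x' hx'
      rw [if_neg (Finset.ne_of_mem_erase hx'), Finset.card_univ]
  rw [h2, mul_assoc, pow_sub_one_mul]
  exact (Fintype.card_pos_iff.2 ⟨x⟩).ne'

/-- acyclicity of a partial pair of maps -/
def GoodP {L R : Type} (SL : Finset L) (SR : Finset R)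
    (fg : ({x // x ∉ SL} → R) × ({y // y ∉ SR} → L)) : Prop :=
  ∃ ρ : L ⊕ R → ℕ, (∀ x : {x // x ∉ SL}, ρ (Sum.inr (fg.1 x)) < ρ (Sum.inl x.1)) ∧
    ∀ y : {y // y ∉ SR}, ρ (Sum.inl (fg.2 y)) < ρ (Sum.inr y.1)

lemma good_count {L R : Type} [Fintype L] [Fintype R] [DecidableEq L] [DecidableEq R]
    (SL : Finset L) (SR : Finset R) :
    Nat.card {fg // GoodP SL SR fg} * (Fintype.card L * Fintype.card R) ≤
      Fintype.card L ^ (Fintype.card R - SR.card) * Fintype.card R ^ (Fintype.card L - SL.card) *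
        (Fintype.card L * SR.card + Fintype.card R * SL.card) := by
  classical
  let X := {x // x ∉ SL}
  let Y := {y // y ∉ SR}
  have cX : Fintype.card X = Fintype.card L - SL.card := by
    simp only [X]; rw [Fintype.card_subtype_compl]; simp
  have cY : Fintype.card Y = Fintype.card R - SR.card := by
    simp only [Y]; rw [Fintype.card_subtype_compl]; simp
  let c : (X → R) → L → Option Y := fun f l =>
    if h : l ∈ SL then none else if h' : f ⟨l, h⟩ ∈ SR then none else some ⟨f ⟨l, h⟩, h'⟩
  let B : (X → R) → Type := fun f =>
    {g : Y → L // ∃ ρ : Y → ℕ, ∀ y y', c f (g y) = some y' → ρ y' < ρ y}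
  let ι : {fg // GoodP SL SR fg} → Σ f, B f := fun fg => ⟨fg.1.1, fg.1.2, by
    obtain ⟨ρ, h1, h2⟩ := fg.2
    refine ⟨fun y => ρ (Sum.inr y.1), ?_⟩
    intro y y' h
    simp only [c] at h
    split_ifs at h with ha hb
    have h3 := h1 ⟨_, ha⟩
    have h4 := h2 y
    have h5 : fg.1.1 ⟨_, ha⟩ = y'.1 := congrArg Subtype.val (Option.some.inj h)
    rw [h5] at h3
    exact h3.trans h4⟩
  have hι : Function.Injective ι := by
    rintro ⟨⟨f, g⟩, h⟩ ⟨⟨f', g'⟩, h'⟩ e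
    simp only [ι, Sigma.mk.injEq] at e
    obtain ⟨rfl, e⟩ := e
    have := congrArg Subtype.val (eq_of_heq e)
    simp only at this
    subst this
    rfl
  have h1 := Nat.card_le_card_of_injective ι hι
  rw [Nat.card_sigma] at h1
  have hB : ∀ f : X → R, Nat.card (B f) * Fintype.card L ≤
      (SL.card + (Finset.univ.filter (fun x : X => f x ∈ SR)).card) *
        Fintype.card L ^ Fintype.card Y := by
    intro f
    have := class_count (L := L) Y inferInstance (c f)
    rw [Nat.card_eq_fintype_card (α := L), Nat.card_eq_fintype_card (α := Y)] at this
    refine this.trans (Nat.mul_le_mul_right _ ?_)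
    rw [Nat.card_eq_fintype_card, Fintype.card_subtype]
    have : (Finset.univ.filter (fun l => c f l = none)) ⊆
        SL ∪ (Finset.univ.filter (fun x : X => f x ∈ SR)).image Subtype.val := by
      intro l
      simp only [Finset.mem_filter, Finset.mem_univ, true_and, Finset.mem_union, Finset.mem_image, c]
      intro h
      split_ifs at h with ha hb
      · exact Or.inl ha
      · exact Or.inr ⟨⟨l, ha⟩, hb, rfl⟩
    exact (Finset.card_le_card this).trans ((Finset.card_union_le _ _).trans
      (Nat.add_le_add_left Finset.card_image_le _))
  have hs : (∑ f : X → R, (Finset.univ.filter (fun x : X => f x ∈ SR)).card) * Fintype.card R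
      = Fintype.card X * (SR.card * Fintype.card R ^ Fintype.card X) := by
    have : ∑ f : X → R, (Finset.univ.filter (fun x : X => f x ∈ SR)).card =
        ∑ x : X, (Finset.univ.filter (fun f : X → R => f x ∈ SR)).card := by
      simp only [Finset.card_filter]
      exact Finset.sum_comm
    rw [this, Finset.sum_mul, Finset.sum_congr rfl (fun x _ => card_fun_mem SR x)]
    simp
  calc _ ≤ (∑ f, Nat.card (B f)) * (Fintype.card L * Fintype.card R) := Nat.mul_le_mul_right _ h1
    _ = (∑ f, Nat.card (B f) * Fintype.card L) * Fintype.card R := by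
      rw [← Finset.sum_mul]; ring
    _ ≤ (∑ f : X → R, (SL.card + (Finset.univ.filter (fun x : X => f x ∈ SR)).card) *
        Fintype.card L ^ Fintype.card Y) * Fintype.card R :=
      Nat.mul_le_mul_right _ (Finset.sum_le_sum fun f _ => hB f)
    _ = Fintype.card L ^ Fintype.card Y * (Fintype.card R ^ Fintype.card X * SL.card * Fintype.card R +
        (∑ f : X → R, (Finset.univ.filter (fun x : X => f x ∈ SR)).card) * Fintype.card R) := by
      rw [← Finset.sum_mul, Finset.sum_add_distrib]
      simp only [Finset.sum_const, Finset.card_univ, Fintype.card_fun, smul_eq_mul]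
      ring
    _ = Fintype.card L ^ Fintype.card Y * Fintype.card R ^ Fintype.card X * 
        (Fintype.card X * SR.card + Fintype.card R * SL.card) := by
      rw [hs]; ring
    _ ≤ _ := by
      rw [cX, cY]
      gcongr
      exact Nat.sub_le _ _

/-- parent functions that alternate sides -/
def BipF {L R : Type} (r0 : L) (F : L ⊕ R → L ⊕ R) : Prop :=
  (∀ x, x ≠ r0 → ∃ y, F (Sum.inl x) = Sum.inr y) ∧ ∀ y, ∃ x, F (Sum.inr y) = Sum.inl x

open Classical in
/-- the depth function of a parent function -/
noncomputable def dep {V : Type} (r : V) (F : V → V) : V → ℕ :=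
  if h : ∃ D, IsT r F D then h.choose else fun _ => 0

lemma dep_spec {V : Type} {r : V} {F : V → V} (h : ∃ D, IsT r F D) : IsT r F (dep r F) := by
  unfold dep
  rw [dif_pos h]
  exact h.choose_spec

lemma path_struct {L R : Type} {r0 : L} {F : L ⊕ R → L ⊕ R} (hB : BipF r0 F) {D : L ⊕ R → ℕ}
    (hT : IsT (Sum.inl r0) F D) (v : L ⊕ R) (d : ℕ) (hd : D v = d) :
    ∀ t, (2 * t ≤ d → ∃ x, F^[d - 2 * t] v = Sum.inl x) ∧
      (2 * t + 1 ≤ d → ∃ y, F^[d - (2 * t + 1)] v = Sum.inr y) := by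
  have hs : ∀ s, s + 1 ≤ d → F (F^[d - (s + 1)] v) = F^[d - s] v := by
    intro s hs
    rw [← Function.iterate_succ_apply' F]
    congr 1; omega
  have hdd : ∀ s, s ≤ d → D (F^[d - s] v) = s := by
    intro s hs
    have := hT.depth_iter (d - s) v (by omega)
    omega
  have step1 : ∀ s, s + 1 ≤ d → (∃ x, F^[d - s] v = Sum.inl x) → ∃ y, F^[d - (s + 1)] v = Sum.inr y := by
    rintro s h ⟨x, hx⟩
    rcases hc : F^[d - (s + 1)] v with x' | y
    · exfalso
      have h1 := hs s h
      have h2 := hdd (s + 1) h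
      rw [hc] at h1 h2
      have hne : x' ≠ r0 := by
        rintro rfl
        rw [hT.2.1] at h2; omega
      obtain ⟨y, hy⟩ := hB.1 x' hne
      rw [hy, hx] at h1
      cases h1
    · exact ⟨y, rfl⟩
  have step2 : ∀ s, s + 1 ≤ d → (∃ y, F^[d - s] v = Sum.inr y) → ∃ x, F^[d - (s + 1)] v = Sum.inl x := by
    rintro s h ⟨y, hy⟩
    rcases hc : F^[d - (s + 1)] v with x' | y'
    · exact ⟨x', rfl⟩
    · exfalso
      have h1 := hs s h
      rw [hc] at h1
      obtain ⟨x, hx⟩ := hB.2 y'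
      rw [hx, hy] at h1
      cases h1
  intro t
  induction t with
  | zero =>
    have h0 : ∃ x, F^[d - 2 * 0] v = Sum.inl x := ⟨r0, by
      rw [Nat.mul_zero, Nat.sub_zero, ← hd]; exact hT.iter_depth v⟩
    exact ⟨fun _ => h0, fun h => step1 _ h h0⟩
  | succ t ih =>
    have h0 : 2 * (t + 1) ≤ d → ∃ x, F^[d - 2 * (t + 1)] v = Sum.inl x := fun h =>
      step2 (2 * t + 1) h (ih.2 (by omega))
    exact ⟨h0, fun h => step1 _ h (h0 (by omega))⟩

lemma path_emb {L R : Type} {r0 : L} {F : L ⊕ R → L ⊕ R} (hB : BipF r0 F) {D : L ⊕ R → ℕ}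
    (hT : IsT (Sum.inl r0) F D) (v : L ⊕ R) (a b : ℕ) (hab : b = a ∨ b = a + 1) (hd : D v = a + b) :
    ∃ e : (Fin a ↪ {x : L // x ≠ r0}) × (Fin b ↪ R),
      (∀ t, F^[a + b - (2 * t.1 + 2)] v = Sum.inl (e.1 t).1) ∧
      (∀ t, F^[a + b - (2 * t.1 + 1)] v = Sum.inr (e.2 t)) := by
  have hp := path_struct hB hT v (a + b) hd
  have hdd : ∀ s, s ≤ a + b → D (F^[a + b - s] v) = s := by
    intro s hs
    have := hT.depth_iter (a + b - s) v (by omega)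
    omega
  have h1 : ∀ t : Fin a, ∃ x, F^[a + b - (2 * t.1 + 2)] v = Sum.inl x := fun t =>
    (hp (t.1 + 1)).1 (by have := t.2; omega)
  have h2 : ∀ t : Fin b, ∃ x, F^[a + b - (2 * t.1 + 1)] v = Sum.inr x := fun t =>
    (hp t.1).2 (by have := t.2; omega)
  choose e1 he1 using h1
  choose e2 he2 using h2
  refine ⟨⟨⟨fun t => ⟨e1 t, ?_⟩, ?_⟩, ⟨e2, ?_⟩⟩, he1, he2⟩
  · intro h
    have h3 := hdd (2 * t.1 + 2) (by have := t.2; omega)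
    rw [he1, h, hT.2.1] at h3
    omega
  · intro t t' h
    have h' : e1 t = e1 t' := congrArg Subtype.val h
    have h3 := hdd (2 * t.1 + 2) (by have := t.2; omega)
    have h4 := hdd (2 * t'.1 + 2) (by have := t'.2; omega)
    rw [he1] at h3 h4
    rw [h'] at h3
    apply Fin.ext; omega
  · intro t t' h
    have h3 := hdd (2 * t.1 + 1) (by have := t.2; omega)
    have h4 := hdd (2 * t'.1 + 1) (by have := t'.2; omega)
    rw [he2] at h3 h4
    rw [h] at h3
    apply Fin.ext; omega

/-- pairs of a bipartite tree and a vertex of given depth -/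
def PD {L R : Type} (r0 : L) (d : ℕ) (p : (L ⊕ R → L ⊕ R) × (L ⊕ R)) : Prop :=
  BipF r0 p.1 ∧ (∃ D, IsT (Sum.inl r0) p.1 D) ∧ dep (Sum.inl r0) p.1 p.2 = d

lemma count_depth {L R : Type} [Fintype L] [Fintype R] [DecidableEq L] [DecidableEq R]
    (r0 : L) (a b : ℕ) (hab : b = a ∨ b = a + 1) :
    Nat.card {p : (L ⊕ R → L ⊕ R) × (L ⊕ R) // PD r0 (a + b) p} *
      (Fintype.card L * Fintype.card R) ≤
    (Fintype.card L - 1).descFactorial a * (Fintype.card R).descFactorial b *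
      (Fintype.card L ^ (Fintype.card R - b) * Fintype.card R ^ (Fintype.card L - (a + 1)) *
        (Fintype.card L * b + Fintype.card R * (a + 1))) := by
  classical
  let E := (Fin a ↪ {x : L // x ≠ r0}) × (Fin b ↪ R)
  let SL : E → Finset L := fun e => insert r0 (Finset.univ.image (fun t => (e.1 t).1))
  let SR : E → Finset R := fun e => Finset.univ.image e.2
  have cSL : ∀ e, (SL e).card = a + 1 := by
    intro e
    simp only [SL]
    rw [Finset.card_insert_of_notMem, Finset.card_image_of_injective, Finset.card_univ, Fintype.card_fin]
    · intro t t' h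
      exact e.1.injective (Subtype.ext h)
    · simp only [Finset.mem_image, Finset.mem_univ, true_and, not_exists]
      intro t
      exact (e.1 t).2
  have cSR : ∀ e, (SR e).card = b := by
    intro e
    simp only [SR]
    rw [Finset.card_image_of_injective _ e.2.injective, Finset.card_univ, Fintype.card_fin]
  have hex : ∀ p : {p : (L ⊕ R → L ⊕ R) × (L ⊕ R) // PD r0 (a + b) p}, ∃ e : E,
      (∀ t, p.1.1^[a + b - (2 * t.1 + 2)] p.1.2 = Sum.inl (e.1 t).1) ∧
      (∀ t, p.1.1^[a + b - (2 * t.1 + 1)] p.1.2 = Sum.inr (e.2 t)) := fun p =>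
    path_emb p.2.1 (dep_spec p.2.2.1) p.1.2 a b hab p.2.2.2
  choose e he1 he2 using hex
  have hfg : ∀ p : {p : (L ⊕ R → L ⊕ R) × (L ⊕ R) // PD r0 (a + b) p},
      ∃ fg : {fg // GoodP (SL (e p)) (SR (e p)) fg},
        (∀ x (hx : x ∉ SL (e p)), p.1.1 (Sum.inl x) = Sum.inr (fg.1.1 ⟨x, hx⟩)) ∧
        (∀ y (hy : y ∉ SR (e p)), p.1.1 (Sum.inr y) = Sum.inl (fg.1.2 ⟨y, hy⟩)) := by
    intro p
    have hT := dep_spec p.2.2.1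
    have hne : ∀ x : {x // x ∉ SL (e p)}, x.1 ≠ r0 := by
      intro x h
      apply x.2
      rw [h]
      exact Finset.mem_insert_self _ _
    have h1 : ∀ x : {x // x ∉ SL (e p)}, ∃ y, p.1.1 (Sum.inl x.1) = Sum.inr y := fun x =>
      p.2.1.1 x.1 (hne x)
    have h2 : ∀ y : {y // y ∉ SR (e p)}, ∃ x, p.1.1 (Sum.inr y.1) = Sum.inl x := fun y =>
      p.2.1.2 y.1
    choose f hf using h1
    choose g hg using h2
    refine ⟨⟨(f, g), dep (Sum.inl r0) p.1.1, ?_, ?_⟩, fun x hx => hf ⟨x, hx⟩, fun y hy => hg ⟨y, hy⟩⟩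
    · intro x
      have := hT.2.2 (Sum.inl x.1) (by intro h; exact hne x (Sum.inl.inj h))
      rw [hf] at this
      simp only
      omega
    · intro y
      have := hT.2.2 (Sum.inr y.1) (by simp)
      rw [hg] at this
      simp only
      omega
  choose fg hf hg using hfg
  let ι : {p : (L ⊕ R → L ⊕ R) × (L ⊕ R) // PD r0 (a + b) p} →
      Σ e : E, {fg // GoodP (SL e) (SR e) fg} := fun p => ⟨e p, fg p⟩
  have hι : Function.Injective ι := by
    intro p q hpq
    simp only [ι, Sigma.mk.injEq] at hpq
    obtain ⟨h1, h2⟩ := hpq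
    have aux : ∀ (e e' : E) (_ : e = e') (u : {fg // GoodP (SL e) (SR e) fg})
        (v : {fg // GoodP (SL e') (SR e') fg}), HEq u v →
        (∀ x hx hx', u.1.1 ⟨x, hx⟩ = v.1.1 ⟨x, hx'⟩) ∧
        (∀ x hx hx', u.1.2 ⟨x, hx⟩ = v.1.2 ⟨x, hx'⟩) := by
      rintro e _ rfl u v huv
      rw [eq_of_heq huv]
      exact ⟨fun _ _ _ => rfl, fun _ _ _ => rfl⟩
    obtain ⟨h3, h4⟩ := aux _ _ h1 _ _ h2
    have hTp := dep_spec p.2.2.1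
    have hTq := dep_spec q.2.2.1
    -- paths agree
    have hpath : ∀ s, s ≤ a + b → p.1.1^[a + b - s] p.1.2 = q.1.1^[a + b - s] q.1.2 := by
      intro s hs
      rcases Nat.even_or_odd' s with ⟨t, rfl | rfl⟩
      · rcases t with _ | t
        · rw [hTp.iter_large _ _ (by rw [p.2.2.2]; omega), hTq.iter_large _ _ (by rw [q.2.2.2]; omega)]
        · have := he1 p ⟨t, by omega⟩
          have h' := he1 q ⟨t, by omega⟩
          rw [← h1] at h'
          simp only at this h'
          rw [show 2 * (t + 1) = 2 * t + 2 by ring, this, h']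
      · have := he2 p ⟨t, by omega⟩
        have h' := he2 q ⟨t, by omega⟩
        rw [← h1] at h'
        simp only at this h'
        rw [this, h']
    have hv : p.1.2 = q.1.2 := by simpa using hpath (a + b) le_rfl
    have hon : ∀ s, s + 1 ≤ a + b → p.1.1 (p.1.1^[a + b - (s + 1)] p.1.2) =
        q.1.1 (p.1.1^[a + b - (s + 1)] p.1.2) := by
      intro s hs
      rw [hpath (s+1) hs, ← Function.iterate_succ_apply' q.1.1, ← hpath (s+1) hs,
        ← Function.iterate_succ_apply' p.1.1]
      rw [show Nat.succ (a + b - (s+1)) = a + b - s by omega]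
      exact hpath s (by omega)
    apply Subtype.ext
    refine Prod.ext ?_ hv
    funext z
    rcases z with x | y
    · by_cases hx : x ∈ SL (e p)
      · simp only [SL, Finset.mem_insert, Finset.mem_image, Finset.mem_univ, true_and] at hx
        rcases hx with rfl | ⟨t, rfl⟩
        · rw [hTp.1, hTq.1]
        · rw [← he1 p t]
          exact hon (2 * t.1 + 1) (by have := t.2; omega)
      · have hx' : x ∉ SL (e q) := by rw [← h1]; exact hx
        rw [hf p x hx, hf q x hx', h3 x hx hx']
    · by_cases hy : y ∈ SR (e p)
      · simp only [SR, Finset.mem_image, Finset.mem_univ, true_and] at hy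
        obtain ⟨t, rfl⟩ := hy
        rw [← he2 p t]
        exact hon (2 * t.1) (by have := t.2; omega)
      · have hy' : y ∉ SR (e q) := by rw [← h1]; exact hy
        rw [hg p y hy, hg q y hy', h4 y hy hy']
  have h1 := Nat.card_le_card_of_injective ι hι
  rw [Nat.card_sigma] at h1
  calc _ ≤ (∑ e : E, Nat.card {fg // GoodP (SL e) (SR e) fg}) * (Fintype.card L * Fintype.card R) :=
        Nat.mul_le_mul_right _ h1
    _ = ∑ e : E, Nat.card {fg // GoodP (SL e) (SR e) fg} * (Fintype.card L * Fintype.card R) :=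
        Finset.sum_mul ..
    _ ≤ ∑ e : E, (Fintype.card L ^ (Fintype.card R - b) * Fintype.card R ^ (Fintype.card L - (a + 1)) *
        (Fintype.card L * b + Fintype.card R * (a + 1))) := by
        apply Finset.sum_le_sum
        intro e _
        have := good_count (SL e) (SR e)
        rwa [cSL, cSR] at this
    _ = _ := by
        rw [Finset.sum_const, Finset.card_univ, smul_eq_mul]
        congr 1
        simp only [E]
        rw [Fintype.card_prod, Fintype.card_embedding_eq, Fintype.card_embedding_eq]
        simp

open Classical in
/-- (vertex, proper ancestor) pairs -/
noncomputable def Anc {V : Type} [Fintype V] (F : V → V) (D : V → ℕ) : Finset (V × V) :=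
  ((Finset.univ : Finset V).sigma (fun x => Finset.range (D x))).image
    (fun q => (q.1, F^[q.2 + 1] q.1))

open Classical in
/-- the non-tree edges -/
noncomputable def extraE {V : Type} [Fintype V] (G : SimpleGraph V) (F : V → V) (D : V → ℕ) :
    Finset (V × V) :=
  (Anc F D).filter (fun p => G.Adj p.1 p.2 ∧ p.2 ≠ F p.1)

lemma extraE_subset {V : Type} [Fintype V] (G : SimpleGraph V) (F : V → V) (D : V → ℕ) :
    extraE G F D ⊆ Anc F D := by
  classical
  exact Finset.filter_subset _ _

lemma mem_Anc {V : Type} [Fintype V] (F : V → V) (D : V → ℕ) (x y : V) :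
    (x, y) ∈ Anc F D ↔ ∃ t, t < D x ∧ F^[t + 1] x = y := by
  classical
  unfold Anc
  simp only [Finset.mem_image, Finset.mem_sigma, Finset.mem_univ, true_and, Finset.mem_range,
    Prod.mk.injEq, Sigma.exists]
  constructor
  · rintro ⟨a, t, h1, rfl, h3⟩
    exact ⟨t, h1, h3⟩
  · rintro ⟨t, h1, h2⟩
    exact ⟨x, t, h1, rfl, h2⟩

lemma card_Anc {V : Type} [Fintype V] (F : V → V) (D : V → ℕ) :
    (Anc F D).card ≤ ∑ x, D x := by
  classical
  unfold Anc
  refine Finset.card_image_le.trans ?_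
  rw [Finset.card_sigma]
  simp

lemma Anc_lt {V : Type} [Fintype V] {r : V} {F : V → V} {D : V → ℕ} (hT : IsT r F D) {x y : V}
    (h : (x, y) ∈ Anc F D) : D y < D x := by
  rw [mem_Anc] at h
  obtain ⟨t, h1, rfl⟩ := h
  have := hT.depth_iter (t + 1) x h1
  omega

lemma adj_iff {V : Type} [Fintype V] {r : V} {F : V → V} {D : V → ℕ} (hT : IsT r F D)
    {G : SimpleGraph V} (hadj : ∀ x, x ≠ r → G.Adj x (F x))
    (hc : ∀ x y, G.Adj x y → (∃ m, F^[m] x = y) ∨ (∃ m, F^[m] y = x)) (x y : V) :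
    G.Adj x y ↔ (x ≠ r ∧ F x = y) ∨ (y ≠ r ∧ F y = x) ∨ (x, y) ∈ extraE G F D ∨
      (y, x) ∈ extraE G F D := by
  classical
  have key : ∀ x y, G.Adj x y → (∃ m, F^[m] x = y) → (x ≠ r ∧ F x = y) ∨ (x, y) ∈ extraE G F D := by
    intro x y h hm
    have h1 := hT.anc h.ne hm
    by_cases hF : F x = y
    · left
      refine ⟨?_, hF⟩
      rintro rfl
      rw [hT.1] at hF
      exact h.ne hF
    · right
      unfold extraE
      rw [Finset.mem_filter, mem_Anc]
      exact ⟨h1, h, fun h => hF h.symm⟩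
  constructor
  · intro h
    rcases hc x y h with h1 | h1
    · have := key x y h h1
      tauto
    · have := key y x h.symm h1
      tauto
  · rintro (⟨h, rfl⟩ | ⟨h, rfl⟩ | h | h)
    · exact hadj _ h
    · exact (hadj _ h).symm
    · exact (Finset.mem_filter.1 h).2.1
    · exact (Finset.mem_filter.1 h).2.1.symm

lemma card_extraE {V : Type} [Fintype V] {r : V} {F : V → V} {D : V → ℕ} (hT : IsT r F D)
    {G : SimpleGraph V} (hadj : ∀ x, x ≠ r → G.Adj x (F x))
    (hc : ∀ x y, G.Adj x y → (∃ m, F^[m] x = y) ∨ (∃ m, F^[m] y = x)) :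
    (extraE G F D).card + Fintype.card V = G.edgeSet.ncard + 1 := by
  classical
  let A := (Anc F D).filter (fun p => G.Adj p.1 p.2)
  have h1 : A.card = G.edgeSet.ncard := by
    rw [← SimpleGraph.coe_edgeFinset, Set.ncard_coe_finset]
    apply Finset.card_bij (fun p _ => s(p.1, p.2))
    · intro p hp
      rw [SimpleGraph.mem_edgeFinset, SimpleGraph.mem_edgeSet]
      exact (Finset.mem_filter.1 hp).2
    · rintro ⟨x, y⟩ hp ⟨x', y'⟩ hp' h
      have l1 := Anc_lt hT (Finset.mem_filter.1 hp).1
      have l2 := Anc_lt hT (Finset.mem_filter.1 hp').1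
      simp only [Sym2.eq_iff] at h
      rcases h with ⟨rfl, rfl⟩ | ⟨rfl, rfl⟩
      · rfl
      · omega
    · intro e
      induction e using Sym2.ind with
      | _ x y =>
        intro he
        rw [SimpleGraph.mem_edgeFinset, SimpleGraph.mem_edgeSet] at he
        rcases hc x y he with h | h
        · exact ⟨(x, y), Finset.mem_filter.2 ⟨(mem_Anc _ _ _ _).2 (hT.anc he.ne h), he⟩, rfl⟩
        · exact ⟨(y, x), Finset.mem_filter.2 ⟨(mem_Anc _ _ _ _).2 (hT.anc he.ne' h), he.symm⟩,
            Sym2.eq_swap⟩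
  have h2 : (A.filter (fun p => p.2 = F p.1)).card + 1 = Fintype.card V := by
    have : A.filter (fun p => p.2 = F p.1) = (Finset.univ.erase r).image (fun x => (x, F x)) := by
      ext ⟨x, y⟩
      simp only [A, Finset.mem_filter, Finset.mem_image, Finset.mem_erase, Finset.mem_univ, and_true,
        Prod.mk.injEq]
      constructor
      · rintro ⟨⟨ha, hb⟩, rfl⟩
        refine ⟨x, ?_, rfl, rfl⟩
        rintro rfl
        rw [hT.1] at hb
        exact hb.ne rfl
      · rintro ⟨x', hx', rfl, rfl⟩
        refine ⟨⟨(mem_Anc _ _ _ _).2 ⟨0, ?_, rfl⟩, hadj _ hx'⟩, rfl⟩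
        have := hT.2.2 _ hx'
        omega
    rw [this, Finset.card_image_of_injective, Finset.card_erase_of_mem (Finset.mem_univ _),
      Finset.card_univ]
    · have : 0 < Fintype.card V := Fintype.card_pos_iff.2 ⟨r⟩
      omega
    · intro x x' h
      exact congrArg Prod.fst h
  have h3 : extraE G F D = A.filter (fun p => ¬ p.2 = F p.1) := by
    unfold extraE
    simp only [A, Finset.filter_filter, ne_eq]
  have h4 := Finset.card_filter_add_card_filter_not (s := A) (fun p => p.2 = F p.1)
  rw [h3]
  omega

open Classical in
/-- all bipartite rooted trees -/
noncomputable def Tr {L R : Type} [Fintype L] [Fintype R] (r0 : L) : Finset (L ⊕ R → L ⊕ R) :=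
  Finset.univ.filter (fun F => BipF r0 F ∧ ∃ D, IsT (Sum.inl r0) F D)

lemma mem_Tr {L R : Type} [Fintype L] [Fintype R] (r0 : L) (F : L ⊕ R → L ⊕ R) :
    F ∈ Tr r0 ↔ BipF r0 F ∧ ∃ D, IsT (Sum.inl r0) F D := by
  unfold Tr
  simp

lemma encode (i j l : ℕ) (r0 : Fin i) :
    bipGraphCount i j (i + j + l) ≤
      ∑ F ∈ Tr (R := Fin j) r0, (∑ x, dep (Sum.inl r0) F x).choose (l + 1) := by
  classical
  set S := {G : SimpleGraph (Fin i ⊕ Fin j) |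
    G.Connected ∧
    (∀ a b : Fin i, ¬ G.Adj (Sum.inl a) (Sum.inl b)) ∧
    (∀ a b : Fin j, ¬ G.Adj (Sum.inr a) (Sum.inr b)) ∧
    G.edgeSet.ncard = i + j + l} with hS
  change S.ncard ≤ _
  have hex : ∀ G : SimpleGraph (Fin i ⊕ Fin j), ∃ F D, G ∈ S → IsT (Sum.inl r0) F D ∧
      (∀ x, x ≠ Sum.inl r0 → G.Adj x (F x)) ∧
      ∀ x y, G.Adj x y → (∃ m, F^[m] x = y) ∨ (∃ m, F^[m] y = x) := by
    intro G
    by_cases h : G ∈ S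
    · obtain ⟨F, D, h'⟩ := exists_dfs G h.1 (Sum.inl r0)
      exact ⟨F, D, fun _ => h'⟩
    · exact ⟨id, fun _ => 0, fun h' => absurd h' h⟩
  choose F D hFD using hex
  have hbip : ∀ G ∈ S, F G ∈ Tr (R := Fin j) r0 := by
    intro G hG
    obtain ⟨hT, hadj, hc⟩ := hFD G hG
    rw [mem_Tr]
    refine ⟨⟨?_, ?_⟩, D G, hT⟩
    · intro x hx
      have h1 := hadj (Sum.inl x) (fun h => hx (Sum.inl.inj h))
      rcases h : F G (Sum.inl x) with x' | y
      · rw [h] at h1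
        exact absurd h1 (hG.2.1 _ _)
      · exact ⟨y, rfl⟩
    · intro y
      have h1 := hadj (Sum.inr y) (by simp)
      rcases h : F G (Sum.inr y) with x' | y'
      · exact ⟨x', rfl⟩
      · rw [h] at h1
        exact absurd h1 (hG.2.2.1 _ _)
  let T : Finset (Σ _ : Fin i ⊕ Fin j → Fin i ⊕ Fin j, Finset ((Fin i ⊕ Fin j) × (Fin i ⊕ Fin j))) :=
    (Tr (R := Fin j) r0).sigma (fun F => (Anc F (dep (Sum.inl r0) F)).powersetCard (l + 1))
  have hle : S.ncard ≤ (T : Set (Σ _ : Fin i ⊕ Fin j → Fin i ⊕ Fin j, Finset ((Fin i ⊕ Fin j) × (Fin i ⊕ Fin j)))).ncard := by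
    apply Set.ncard_le_ncard_of_injOn (fun G => ⟨F G, extraE G (F G) (D G)⟩)
    · intro G hG
      obtain ⟨hT, hadj, hc⟩ := hFD G hG
      have e : D G = dep (Sum.inl r0) (F G) := hT.unique (dep_spec ⟨_, hT⟩)
      simp only [T, Finset.coe_sigma, Set.mem_sigma_iff, Finset.mem_coe]
      refine ⟨hbip G hG, ?_⟩
      rw [Finset.mem_powersetCard, ← e]
      refine ⟨extraE_subset _ _ _, ?_⟩
      have := card_extraE hT hadj hc
      rw [hG.2.2.2] at this
      simp only [Fintype.card_sum, Fintype.card_fin] at this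
      omega
    · intro G hG G' hG' h
      simp only [Sigma.mk.injEq, heq_eq_eq] at h
      obtain ⟨h1, h2⟩ := h
      obtain ⟨hT, hadj, hc⟩ := hFD G hG
      obtain ⟨hT', hadj', hc'⟩ := hFD G' hG'
      ext x y
      rw [adj_iff hT hadj hc, adj_iff hT' hadj' hc', h2, h1]
  refine hle.trans ?_
  rw [Set.ncard_coe_finset]
  simp only [T]
  rw [Finset.card_sigma]
  apply Finset.sum_le_sum
  intro F' _
  rw [Finset.card_powersetCard]
  exact Nat.choose_le_choose _ (card_Anc _ _)

lemma desc_bound (i a : ℕ) (hi : 0 < i) :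
    ((i - 1).descFactorial a : ℝ) ≤ (i : ℝ) ^ a * Real.exp (-((a : ℝ) * (a + 1)) / (2 * i)) := by
  have hi' : (0 : ℝ) < i := by exact_mod_cast hi
  induction a with
  | zero => simp
  | succ a ih =>
    rw [Nat.descFactorial_succ]
    push_cast
    have h1 : ((i - 1 - a : ℕ) : ℝ) ≤ i * Real.exp (-((a : ℝ) + 1) / i) := by
      rcases le_or_gt (a + 1) i with h | h
      · rw [Nat.sub_sub, Nat.cast_sub (by omega)]
        push_cast
        have := Real.add_one_le_exp (-((a : ℝ) + 1) / i)
        have h2 := mul_le_mul_of_nonneg_left this hi'.le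
        have h3 : (i : ℝ) * (-((a : ℝ) + 1) / i + 1) = i - (1 + a) := by
          field_simp; ring
        linarith
      · have : i - 1 - a = 0 := by omega
        rw [this, Nat.cast_zero]
        positivity
    calc ((i - 1 - a : ℕ) : ℝ) * ((i - 1).descFactorial a : ℝ) 
        ≤ (i * Real.exp (-((a : ℝ) + 1) / i)) *
          ((i : ℝ) ^ a * Real.exp (-((a : ℝ) * (a + 1)) / (2 * i))) := by gcongr
      _ = (i : ℝ) ^ (a + 1) * (Real.exp (-((a : ℝ) + 1) / i) *
            Real.exp (-((a : ℝ) * (a + 1)) / (2 * i))) := by ring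
      _ = _ := by
        rw [← Real.exp_add]
        congr 2
        field_simp; ring

lemma prod_bound (i j a b : ℕ) (hi : 0 < i) (hj : 0 < j) (hab : b = a ∨ b = a + 1)
    (h1 : (i : ℝ) + j ≤ 3 * i) (h2 : (i : ℝ) + j ≤ 3 * j) :
    ((i - 1).descFactorial a : ℝ) * (j.descFactorial b : ℝ) *
      ((i : ℝ) ^ (j - b) * (j : ℝ) ^ (i - (a + 1))) * ((i : ℝ) + j) ≤
      3 * ((i : ℝ) ^ j * (j : ℝ) ^ i) * Real.exp (-((a : ℝ) * (a + 1)) / (2 * i)) := by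
  have hi' : (0 : ℝ) < i := by exact_mod_cast hi
  have hj' : (0 : ℝ) < j := by exact_mod_cast hj
  rcases lt_or_ge j b with hb | hb
  · rw [Nat.descFactorial_of_lt hb]; simp; positivity
  rcases lt_or_ge (i - 1) a with ha | ha
  · rw [Nat.descFactorial_of_lt ha]; simp; positivity
  have e1 := desc_bound i a hi
  have e2 : (j.descFactorial b : ℝ) ≤ (j : ℝ) ^ b := by exact_mod_cast Nat.descFactorial_le_pow j b
  set ε := Real.exp (-((a : ℝ) * (a + 1)) / (2 * i)) with hε
  have e3 : (i : ℝ) ^ a * (j : ℝ) ^ b *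
      ((i : ℝ) ^ (j - b) * (j : ℝ) ^ (i - (a + 1))) * ((i : ℝ) + j) ≤ 3 * ((i : ℝ) ^ j * (j : ℝ) ^ i) := by
    rcases hab with rfl | rfl
    · have q1 : (i : ℝ) ^ b * (i : ℝ) ^ (j - b) = (i : ℝ) ^ j := by rw [← pow_add]; congr 1; omega
      have q2 : (j : ℝ) ^ b * (j : ℝ) ^ (i - (b + 1)) * j = (j : ℝ) ^ i := by
        rw [← pow_add, ← pow_succ]; congr 1; omega
      rw [← q1, ← q2]
      calc _ ≤ (i : ℝ) ^ b * (j : ℝ) ^ b * ((i : ℝ) ^ (j - b) * (j : ℝ) ^ (i - (b + 1))) * (3 * j) := by gcongr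
        _ = _ := by ring
    · have q1 : (i : ℝ) ^ a * (i : ℝ) ^ (j - (a + 1)) * i = (i : ℝ) ^ j := by
        rw [← pow_add, ← pow_succ]; congr 1; omega
      have q2 : (j : ℝ) ^ (a + 1) * (j : ℝ) ^ (i - (a + 1)) = (j : ℝ) ^ i := by
        rw [← pow_add]; congr 1; omega
      rw [← q1, ← q2]
      calc _ ≤ (i : ℝ) ^ a * (j : ℝ) ^ (a + 1) * ((i : ℝ) ^ (j - (a + 1)) * (j : ℝ) ^ (i - (a + 1))) * (3 * i) := by gcongr
        _ = _ := by ring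
  calc _ ≤ ((i : ℝ) ^ a * ε) * (j : ℝ) ^ b *
      ((i : ℝ) ^ (j - b) * (j : ℝ) ^ (i - (a + 1))) * ((i : ℝ) + j) := by gcongr
    _ = ((i : ℝ) ^ a * (j : ℝ) ^ b *
      ((i : ℝ) ^ (j - b) * (j : ℝ) ^ (i - (a + 1))) * ((i : ℝ) + j)) * ε := by ring
    _ ≤ _ := by gcongr

lemma W_bound (i j d : ℕ) (r0 : Fin i) (hj : 0 < j) (hd : 0 < d)
    (h1 : (i : ℝ) + j ≤ 3 * i) (h2 : (i : ℝ) + j ≤ 3 * j) :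
    (Nat.card {p : (Fin i ⊕ Fin j → Fin i ⊕ Fin j) × (Fin i ⊕ Fin j) // PD r0 d p} : ℝ) ≤
      36 * ((i : ℝ) ^ j * (j : ℝ) ^ i) * d / ((i : ℝ) + j) ^ 2 *
        Real.exp (-(d : ℝ) ^ 2 / (8 * ((i : ℝ) + j))) := by
  have hi : 0 < i := by have := r0.2; omega
  have hi' : (1 : ℝ) ≤ i := by exact_mod_cast hi
  have hj' : (1 : ℝ) ≤ j := by exact_mod_cast hj
  obtain ⟨a, b, hab, rfl⟩ : ∃ a b, (b = a ∨ b = a + 1) ∧ d = a + b := by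
    rcases Nat.even_or_odd' d with ⟨t, rfl | rfl⟩
    · exact ⟨t, t, Or.inl rfl, by ring⟩
    · exact ⟨t, t + 1, Or.inr rfl, by ring⟩
  have hc := count_depth (L := Fin i) (R := Fin j) r0 a b hab
  simp only [Fintype.card_fin] at hc
  set W := Nat.card {p : (Fin i ⊕ Fin j → Fin i ⊕ Fin j) × (Fin i ⊕ Fin j) // PD r0 (a + b) p}
  have hc' : (W : ℝ) * (i * j) ≤ ((i - 1).descFactorial a : ℝ) * (j.descFactorial b : ℝ) *
      ((i : ℝ) ^ (j - b) * (j : ℝ) ^ (i - (a + 1)) * (i * b + j * (a + 1))) := by exact_mod_cast hc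
  have hp := prod_bound i j a b hi hj hab h1 h2
  set ε := Real.exp (-((a : ℝ) * (a + 1)) / (2 * i)) with hε
  set n : ℝ := (i : ℝ) + j with hn
  have hn0 : 0 < n := by positivity
  set Q := (i : ℝ) ^ j * (j : ℝ) ^ i with hQ
  have hQ0 : 0 < Q := by positivity
  have hε' : ε ≤ 2 * Real.exp (-((a + b : ℕ) : ℝ) ^ 2 / (8 * n)) := by
    have h3 : ε ≤ Real.exp (1/8) * Real.exp (-((a + b : ℕ) : ℝ) ^ 2 / (8 * n)) := by
      rw [← Real.exp_add, hε]
      apply Real.exp_le_exp.2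
      have h4 : -((a : ℝ) * (a + 1)) / (2 * i) ≤ -((a : ℝ) * (a + 1)) / (2 * n) := by
        rw [neg_div, neg_div, neg_le_neg_iff]
        gcongr
        linarith
      refine h4.trans ?_
      have h5 : ((a + b : ℕ) : ℝ) ^ 2 ≤ 4 * (a * (a + 1)) + 1 := by
        rcases hab with rfl | rfl <;> push_cast <;> nlinarith
      rw [div_add_div _ _ (by norm_num) (by positivity), div_le_div_iff₀ (by positivity) (by positivity)]
      have hn1 : 1 ≤ n := by linarith
      have : 0 ≤ n * (8 * n - 8 + 8 * (4 * (a * (a + 1)) + 1 - ((a + b : ℕ) : ℝ) ^ 2)) := by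
        apply mul_nonneg hn0.le; linarith
      nlinarith
    have h6 : Real.exp (1/8) ≤ 2 := by
      have := Real.exp_one_lt_d9
      have h7 : Real.exp (1/8) ^ 8 = Real.exp 1 := by rw [← Real.exp_nat_mul]; norm_num
      by_contra hcon
      push Not at hcon
      have : (2:ℝ) ^ 8 < Real.exp (1/8) ^ 8 := by gcongr
      rw [h7] at this
      norm_num at this
      linarith
    exact h3.trans (by gcongr)
  have h8 : ((i : ℝ) * b + j * (a + 1)) * n ≤ (i * j) * (6 * ((a + b : ℕ) : ℝ)) := by
    have hd' : (1 : ℝ) ≤ ((a + b : ℕ) : ℝ) := by exact_mod_cast hd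
    push_cast at hd' ⊢
    have t1 : ((i : ℝ) * b) * n ≤ (i * b) * (3 * j) := by gcongr
    have t2 : ((j : ℝ) * (a + 1)) * n ≤ (j * (a + 1)) * (3 * i) := by gcongr
    have t3 : (i : ℝ) * j * 1 ≤ i * j * (a + b) := by gcongr
    nlinarith
  have h9 : (W : ℝ) * (i * j) * n ^ 2 ≤ (18 * Q * ((a + b : ℕ) : ℝ) * ε) * (i * j) := by
    calc (W : ℝ) * (i * j) * n ^ 2 ≤ (((i - 1).descFactorial a : ℝ) * (j.descFactorial b : ℝ) *
      ((i : ℝ) ^ (j - b) * (j : ℝ) ^ (i - (a + 1)) * (i * b + j * (a + 1)))) * n ^ 2 := by gcongr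
      _ = (((i - 1).descFactorial a : ℝ) * (j.descFactorial b : ℝ) *
      ((i : ℝ) ^ (j - b) * (j : ℝ) ^ (i - (a + 1))) * n) * ((i * b + j * (a + 1)) * n) := by ring
      _ ≤ (3 * Q * ε) * ((i * j) * (6 * ((a + b : ℕ) : ℝ))) := by gcongr
      _ = _ := by ring
  have h10 : (W : ℝ) * n ^ 2 ≤ 18 * Q * ((a + b : ℕ) : ℝ) * ε := by
    have : (0 : ℝ) < i * j := by positivity
    nlinarith
  rw [div_mul_eq_mul_div, le_div_iff₀ (by positivity)]
  refine h10.trans ?_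
  calc _ ≤ 18 * Q * ((a + b : ℕ) : ℝ) * (2 * Real.exp (-((a + b : ℕ) : ℝ) ^ 2 / (8 * n))) := by gcongr
    _ = _ := by ring

lemma pow_exp_bound (n : ℝ) (hn : 0 < n) (k : ℕ) (hk : 0 < k) (x : ℝ) (hx : 0 ≤ x) :
    x ^ k * Real.exp (-x ^ 2 / (8 * n)) ≤ Real.sqrt (8 * n * k) ^ k * Real.exp (-x ^ 2 / (16 * n)) := by
  have hk' : (0 : ℝ) < k := by exact_mod_cast hk
  have h1 : x ≤ Real.sqrt (8 * n * k) * Real.exp (x ^ 2 / (16 * n * k)) := by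
    apply (pow_le_pow_iff_left₀ hx (by positivity) two_ne_zero).1
    rw [mul_pow, Real.sq_sqrt (by positivity), ← Real.exp_nat_mul]
    have := Real.add_one_le_exp (x ^ 2 / (8 * n * k))
    have h2 : ((2 : ℕ) : ℝ) * (x ^ 2 / (16 * n * k)) = x ^ 2 / (8 * n * k) := by
      push_cast; field_simp; ring
    rw [h2]
    have h3 : x ^ 2 = 8 * n * k * (x ^ 2 / (8 * n * k)) := by field_simp
    calc x ^ 2 = 8 * n * k * (x ^ 2 / (8 * n * k)) := h3
      _ ≤ _ := by gcongr; linarith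
  calc x ^ k * Real.exp (-x ^ 2 / (8 * n)) ≤
      (Real.sqrt (8 * n * k) * Real.exp (x ^ 2 / (16 * n * k))) ^ k * Real.exp (-x ^ 2 / (8 * n)) := by
        gcongr
    _ = Real.sqrt (8 * n * k) ^ k * (Real.exp (k * (x ^ 2 / (16 * n * k))) * Real.exp (-x ^ 2 / (8 * n))) := by
        rw [mul_pow, ← Real.exp_nat_mul]; ring
    _ = _ := by
        rw [← Real.exp_add]
        congr 2
        field_simp; ring

lemma exp_tail (n : ℝ) (hn : 0 < n) (d : ℕ) :
    (d : ℝ) * Real.exp (-(d : ℝ) ^ 2 / (16 * n)) ≤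
      2048 * n * (n / (n + d * (d - 1)) - n / (n + (d + 1 : ℕ) * ((d + 1 : ℕ) - 1))) := by
  rcases Nat.eq_zero_or_pos d with rfl | hd
  · simp
  have hd' : (1 : ℝ) ≤ d := by exact_mod_cast hd
  push_cast
  have e1 : Real.exp (-(d : ℝ) ^ 2 / (16 * n)) ≤ 4096 * n ^ 2 / (n + d ^ 2 + d) ^ 2 := by
    have h1 : 1 + (d : ℝ) ^ 2 / (32 * n) ≤ Real.exp ((d : ℝ) ^ 2 / (32 * n)) := by
      have := Real.add_one_le_exp ((d : ℝ) ^ 2 / (32 * n)); linarith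
    have h2 : (n + d ^ 2 + d) / (64 * n) ≤ 1 + (d : ℝ) ^ 2 / (32 * n) := by
      rw [div_le_iff₀ (by positivity)]
      have : (1 + (d : ℝ) ^ 2 / (32 * n)) * (64 * n) = 64 * n + 2 * d ^ 2 := by field_simp; ring
      rw [this]; nlinarith
    have h3 : ((n + d ^ 2 + d) / (64 * n)) ^ 2 ≤ Real.exp ((d : ℝ) ^ 2 / (16 * n)) := by
      calc _ ≤ Real.exp ((d : ℝ) ^ 2 / (32 * n)) ^ 2 := by gcongr; exact h2.trans h1
        _ = _ := by rw [← Real.exp_nat_mul]; congr 1; push_cast; field_simp; ring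
    rw [neg_div, Real.exp_neg, inv_le_comm₀ (by positivity) (by positivity)]
    refine le_trans (le_of_eq ?_) h3
    field_simp; ring
  have p1 : 0 < n + d * ((d : ℝ) - 1) := by nlinarith
  have p2 : 0 < n + ((d : ℝ) + 1) * (d + 1 - 1) := by nlinarith
  have e2 : n / (n + d * ((d : ℝ) - 1)) - n / (n + ((d : ℝ) + 1) * (d + 1 - 1)) =
      n * (2 * d) / ((n + d * ((d : ℝ) - 1)) * (n + ((d : ℝ) + 1) * (d + 1 - 1))) := by
    rw [div_sub_div _ _ p1.ne' p2.ne']; congr 1; ring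
  rw [e2]
  calc (d : ℝ) * Real.exp (-(d : ℝ) ^ 2 / (16 * n)) ≤ d * (4096 * n ^ 2 / (n + d ^ 2 + d) ^ 2) := by gcongr
    _ = 2048 * n * (n * (2 * d) / (n + d ^ 2 + d) ^ 2) := by ring
    _ ≤ _ := by
      gcongr
      nlinarith

lemma sum_bound (n : ℝ) (hn : 0 < n) (M : ℕ) :
    ∑ d ∈ Finset.range M, (d : ℝ) * Real.exp (-(d : ℝ) ^ 2 / (16 * n)) ≤ 2048 * n := by
  calc _ ≤ ∑ d ∈ Finset.range M, 2048 * n * (n / (n + d * (d - 1)) - n / (n + (d + 1 : ℕ) * ((d + 1 : ℕ) - 1))) :=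
        Finset.sum_le_sum fun d _ => exp_tail n hn d
    _ = 2048 * n * (1 - n / (n + M * (M - 1))) := by
        rw [← Finset.mul_sum, Finset.sum_range_sub' (fun d : ℕ => n / (n + d * ((d : ℝ) - 1)))]
        simp [hn.ne']
    _ ≤ _ := by
        have : 0 ≤ n / (n + M * ((M : ℝ) - 1)) := by
          apply div_nonneg hn.le
          rcases Nat.eq_zero_or_pos M with rfl | hM
          · simp [hn.le]
          · have : (1 : ℝ) ≤ M := by exact_mod_cast hM
            nlinarith
        nlinarith

lemma moment_bound (i j k : ℕ) (r0 : Fin i) (hj : 0 < j) (hk : 0 < k)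
    (h1 : (i : ℝ) + j ≤ 3 * i) (h2 : (i : ℝ) + j ≤ 3 * j) :
    ∑ F ∈ Tr (R := Fin j) r0, ∑ v, (dep (Sum.inl r0) F v : ℝ) ^ k ≤
      73728 * ((i : ℝ) ^ j * (j : ℝ) ^ i) / ((i : ℝ) + j) * Real.sqrt (8 * ((i : ℝ) + j) * k) ^ k := by
  classical
  have hi : 0 < i := by have := r0.2; omega
  have hi' : (1 : ℝ) ≤ i := by exact_mod_cast hi
  have hj' : (1 : ℝ) ≤ j := by exact_mod_cast hj
  set n : ℝ := (i : ℝ) + j with hn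
  have hn0 : 0 < n := by positivity
  set Q := (i : ℝ) ^ j * (j : ℝ) ^ i with hQ
  have hQ0 : 0 < Q := by positivity
  let P := Tr (R := Fin j) r0 ×ˢ (Finset.univ : Finset (Fin i ⊕ Fin j))
  let g : (Fin i ⊕ Fin j → Fin i ⊕ Fin j) × (Fin i ⊕ Fin j) → ℕ := fun p => dep (Sum.inl r0) p.1 p.2
  rw [← Finset.sum_product' (Tr (R := Fin j) r0) Finset.univ
    (fun F v => (dep (Sum.inl r0) F v : ℝ) ^ k)]
  change ∑ p ∈ P, (g p : ℝ) ^ k ≤ _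
  let M := P.sup g + 1
  have hM : ∀ p ∈ P, g p ∈ Finset.range M := fun p hp =>
    Finset.mem_range.2 (Nat.lt_succ_of_le (Finset.le_sup hp))
  rw [← Finset.sum_fiberwise_of_maps_to hM]
  have hterm : ∀ d ∈ Finset.range M, ∑ p ∈ P with g p = d, (g p : ℝ) ^ k ≤
      36 * Q / n ^ 2 * Real.sqrt (8 * n * k) ^ k * (d * Real.exp (-(d : ℝ) ^ 2 / (16 * n))) := by
    intro d _
    have e1 : ∑ p ∈ P with g p = d, (g p : ℝ) ^ k = (P.filter (fun p => g p = d)).card * (d : ℝ) ^ k := by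
      rw [Finset.sum_congr rfl (g := fun _ => (d : ℝ) ^ k)]
      · rw [Finset.sum_const, nsmul_eq_mul]
      · intro p hp
        rw [(Finset.mem_filter.1 hp).2]
    rw [e1]
    rcases Nat.eq_zero_or_pos d with rfl | hd
    · simp [hk.ne']
    have e2 : (P.filter (fun p => g p = d)).card =
        Nat.card {p : (Fin i ⊕ Fin j → Fin i ⊕ Fin j) × (Fin i ⊕ Fin j) // PD r0 d p} := by
      rw [Nat.card_eq_fintype_card, Fintype.card_subtype]
      congr 1
      ext p
      refine Iff.trans ?_ (Finset.mem_filter_univ _).symm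
      simp only [P, g, Finset.mem_filter, Finset.mem_product, Finset.mem_univ, and_true, true_and,
        mem_Tr, PD, and_assoc]
    rw [e2]
    have e3 := W_bound i j d r0 hj hd h1 h2
    have e4 := pow_exp_bound n hn0 k hk d (Nat.cast_nonneg d)
    calc _ ≤ (36 * Q * d / n ^ 2 * Real.exp (-(d : ℝ) ^ 2 / (8 * n))) * (d : ℝ) ^ k := by gcongr
      _ = 36 * Q * d / n ^ 2 * ((d : ℝ) ^ k * Real.exp (-(d : ℝ) ^ 2 / (8 * n))) := by ring
      _ ≤ 36 * Q * d / n ^ 2 * (Real.sqrt (8 * n * k) ^ k * Real.exp (-(d : ℝ) ^ 2 / (16 * n))) := by gcongr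
      _ = _ := by ring
  calc _ ≤ ∑ d ∈ Finset.range M,
      36 * Q / n ^ 2 * Real.sqrt (8 * n * k) ^ k * (d * Real.exp (-(d : ℝ) ^ 2 / (16 * n))) :=
        Finset.sum_le_sum hterm
    _ = 36 * Q / n ^ 2 * Real.sqrt (8 * n * k) ^ k *
        ∑ d ∈ Finset.range M, (d : ℝ) * Real.exp (-(d : ℝ) ^ 2 / (16 * n)) := by rw [Finset.mul_sum]
    _ ≤ 36 * Q / n ^ 2 * Real.sqrt (8 * n * k) ^ k * (2048 * n) := by
        gcongr
        exact sum_bound n hn0 M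
    _ = _ := by field_simp; ring

lemma count_bound (i j l : ℕ) (r0 : Fin i) (hj : 0 < j)
    (h1 : (i : ℝ) + j ≤ 3 * i) (h2 : (i : ℝ) + j ≤ 3 * j) :
    (bipGraphCount i j (i + j + l) : ℝ) ≤
      ((i : ℝ) + j) ^ l / ((l + 1).factorial : ℝ) * (73728 * ((i : ℝ) ^ j * (j : ℝ) ^ i) / ((i : ℝ) + j) *
        Real.sqrt (8 * ((i : ℝ) + j) * (l + 1 : ℕ)) ^ (l + 1)) := by
  have hi : 0 < i := by have := r0.2; omega
  have hi' : (1 : ℝ) ≤ i := by exact_mod_cast hi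
  have hj' : (1 : ℝ) ≤ j := by exact_mod_cast hj
  have he : (bipGraphCount i j (i + j + l) : ℝ) ≤
      ∑ F ∈ Tr (R := Fin j) r0, ((∑ x, dep (Sum.inl r0) F x).choose (l + 1) : ℝ) := by
    exact_mod_cast encode i j l r0
  refine he.trans ?_
  refine le_trans ?_ (mul_le_mul_of_nonneg_left
    (moment_bound i j (l + 1) r0 hj (Nat.succ_pos l) h1 h2) (by positivity))
  rw [Finset.mul_sum]
  apply Finset.sum_le_sum
  intro F _
  refine (Nat.choose_le_pow_div (l + 1) _).trans ?_
  have := pow_sum_div_card_le_sum_pow (s := (Finset.univ : Finset (Fin i ⊕ Fin j)))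
    (f := fun v => (dep (Sum.inl r0) F v : ℝ)) (fun v _ => Nat.cast_nonneg _) l
  rw [div_le_iff₀ (by simp only [Finset.card_univ, Fintype.card_sum, Fintype.card_fin]; positivity)] at this
  simp only [Finset.card_univ, Fintype.card_sum, Fintype.card_fin, Nat.cast_add] at this
  push_cast
  rw [div_mul_eq_mul_div]
  gcongr
  linarith

lemma final_arith (n Q : ℝ) (l : ℕ) (hn : 1 ≤ n) (hQ : 0 < Q) (hl : 0 < l) :
    n ^ l / ((l + 1).factorial : ℝ) * (73728 * Q / n * Real.sqrt (8 * n * (l + 1 : ℕ)) ^ (l + 1)) ≤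
      Q * n ^ ((3 * (l : ℝ) - 1) / 2) * ((81 * 73728) ^ 2 / (l : ℝ)) ^ ((l : ℝ) / 2) := by
  have hn0 : 0 < n := by linarith
  have hl' : (1 : ℝ) ≤ l := by exact_mod_cast hl
  set s := Real.sqrt n with hs
  have hs0 : 0 < s := Real.sqrt_pos.2 hn0
  have hns : n = s ^ 2 := (Real.sq_sqrt hn0.le).symm
  have e1 : n ^ ((3 * (l : ℝ) - 1) / 2) = s ^ (3 * l - 1) := by
    rw [Real.rpow_div_two_eq_sqrt _ hn0.le, ← Real.rpow_natCast, Nat.cast_sub (by omega)]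
    push_cast
    rfl
  have e2 : ((81 * 73728) ^ 2 / (l : ℝ)) ^ ((l : ℝ) / 2) = (81 * 73728) ^ l / Real.sqrt l ^ l := by
    rw [Real.rpow_div_two_eq_sqrt _ (by positivity), Real.rpow_natCast,
      Real.sqrt_div (by positivity), Real.sqrt_sq (by norm_num), div_pow]
  rw [e1, e2]
  set t := Real.sqrt ((l + 1 : ℕ) : ℝ) with ht
  have ht2 : t ^ 2 = ((l + 1 : ℕ) : ℝ) := Real.sq_sqrt (Nat.cast_nonneg _)
  have ht1 : 1 ≤ t := by
    rw [ht]; apply Real.one_le_sqrt.2; push_cast; linarith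
  have htl : Real.sqrt l ≤ t := Real.sqrt_le_sqrt (by push_cast; linarith)
  have hsl : 0 < Real.sqrt l := Real.sqrt_pos.2 (by linarith)
  have e3 : Real.sqrt (8 * n * (l + 1 : ℕ)) ≤ 3 * s * t := by
    rw [Real.sqrt_mul (by positivity), Real.sqrt_mul (by positivity)]
    gcongr
    rw [Real.sqrt_le_left (by norm_num)]; norm_num
  have e4 : 1 / ((l + 1).factorial : ℝ) ≤ 3 ^ (l + 1) / (t ^ 2) ^ (l + 1) := by
    have h := Real.pow_div_factorial_le_exp ((l + 1 : ℕ) : ℝ) (Nat.cast_nonneg _) (l + 1)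
    have h' : Real.exp ((l + 1 : ℕ) : ℝ) ≤ 3 ^ (l + 1) := by
      rw [← Real.exp_one_pow]
      gcongr
      exact (Real.exp_one_lt_d9.trans (by norm_num)).le
    rw [ht2]
    rw [le_div_iff₀ (by positivity)]
    calc _ = ((l + 1 : ℕ) : ℝ) ^ (l + 1) / ((l + 1).factorial : ℝ) := by ring
      _ ≤ _ := h.trans h'
  have e5 : Real.sqrt l ^ l ≤ t ^ (l + 1) := by
    calc Real.sqrt l ^ l ≤ t ^ l := by gcongr
      _ ≤ t ^ (l + 1) := pow_le_pow_right₀ ht1 (by omega)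
  have e6 : s ^ (2 * l) * s ^ (l + 1) = s ^ (3 * l - 1) * s ^ 2 := by
    rw [← pow_add, ← pow_add]; congr 1; omega
  calc n ^ l / ((l + 1).factorial : ℝ) * (73728 * Q / n * Real.sqrt (8 * n * (l + 1 : ℕ)) ^ (l + 1))
      = n ^ l * (1 / ((l + 1).factorial : ℝ)) * (73728 * Q / n * Real.sqrt (8 * n * (l + 1 : ℕ)) ^ (l + 1)) := by ring
    _ ≤ n ^ l * (3 ^ (l + 1) / (t ^ 2) ^ (l + 1)) * (73728 * Q / n * (3 * s * t) ^ (l + 1)) := by gcongr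
    _ = Q * (73728 * 9 ^ (l + 1)) * (s ^ (2 * l) * s ^ (l + 1)) / s ^ 2 / t ^ (l + 1) := by
        rw [hns]
        have : t ≠ 0 := by positivity
        rw [show (9 : ℝ) = 3 * 3 by norm_num]
        simp only [mul_pow]
        field_simp
        ring
    _ = Q * s ^ (3 * l - 1) * ((73728 * 9 ^ (l + 1)) / t ^ (l + 1)) := by
        rw [e6]; field_simp
    _ ≤ Q * s ^ (3 * l - 1) * ((81 * 73728) ^ l / Real.sqrt l ^ l) := by
        gcongr
        rw [mul_pow]
        have a1 : (9 : ℝ) ^ (l + 1) ≤ 81 ^ l := by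
          rw [show (81 : ℝ) = 9 ^ 2 by norm_num, ← pow_mul]
          exact pow_le_pow_right₀ (by norm_num) (by omega)
        have a2 : (73728 : ℝ) ≤ 73728 ^ l := le_self_pow₀ (by norm_num) hl.ne'
        nlinarith [mul_le_mul a1 a2 (by norm_num) (by positivity)]

/-- Theorem: there is a constant `c > 0` such that for all positive integers `i, j, ℓ` with
`ℓ ≤ ij − i − j` and `1/2 ≤ i/j ≤ 2`,
`C(i,j,ℓ) ≤ i^j j^i (i+j)^{(3ℓ−1)/2} (c/ℓ)^{ℓ/2}`. -/
theorem statement_12 :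
    ∃ c : ℝ, 0 < c ∧
      ∀ i j ℓ : ℕ, 0 < i → 0 < j → 0 < ℓ →
        (ℓ : ℤ) ≤ (i : ℤ) * (j : ℤ) - (i : ℤ) - (j : ℤ) →
        (1:ℝ)/2 ≤ (i : ℝ) / (j : ℝ) → (i : ℝ) / (j : ℝ) ≤ 2 →
        (bipGraphCount i j (i + j + ℓ) : ℝ) ≤
          (i : ℝ) ^ j * (j : ℝ) ^ i * ((i : ℝ) + (j : ℝ)) ^ ((3 * (ℓ : ℝ) - 1) / 2) *
            (c / (ℓ : ℝ)) ^ ((ℓ : ℝ) / 2) := by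
  refine ⟨(81 * 73728) ^ 2, by norm_num, ?_⟩
  intro i j l hi hj hl _ h1 h2
  have hi' : (1 : ℝ) ≤ i := by exact_mod_cast hi
  have hj' : (1 : ℝ) ≤ j := by exact_mod_cast hj
  rw [le_div_iff₀ (by linarith)] at h1
  rw [div_le_iff₀ (by linarith)] at h2
  exact (count_bound i j l ⟨0, hi⟩ hj (by linarith) (by linarith)).trans
    (final_arith ((i : ℝ) + j) ((i : ℝ) ^ j * (j : ℝ) ^ i) l (by linarith) (by positivity) hl)
end
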